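/- arXiv:2409.14948 — 4 statements merged into one kernel-verified Lean document; each statement's English description precedes it below -/
import Mathlib

section
/- Let c : ℤ^d → ℤ be a configuration and let f_1, …, f_k be periodizers of c with 0 ∈ supp(f_i) for each i, where 1 ≤ k ≤ d. If f_1, …, f_k are independent, i.e., for every choice of nonzero vectors v_i ∈ supp(f_i) (i = 1,…,k) the vectors v_1, …, v_k are linearly independent over ℚ, then c = c_1 + … + c_m for finitely many k-periodic functions c_1, …, c_m : ℤ^d → ℤ. -/
namespace PaperFormal

/-- View an integer vector inside `ℝ^d`. -/
def intVecR {d : ℕ} (u : Fin d → ℤ) : Fin d → ℝ := fun i => (u i : ℝ)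

/-- View an integer vector inside `ℚ^d`. -/
def intVecQ {d : ℕ} (u : Fin d → ℤ) : Fin d → ℚ := fun i => (u i : ℚ)

/-- A (Laurent) polynomial: a finitely supported integer-valued function on `ℤ^d`. -/
def IsPoly {d : ℕ} (f : (Fin d → ℤ) → ℤ) : Prop := (Function.support f).Finite

/-- The product `(fc)(u) = ∑_v f(v) · c(u − v)` of a polynomial `f` with `c : ℤ^d → ℤ`. -/
noncomputable def polyApply {d : ℕ} (f : (Fin d → ℤ) → ℤ) (c : (Fin d → ℤ) → ℤ) :
    (Fin d → ℤ) → ℤ := fun u => ∑ᶠ v, f v * c (u - v)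

/-- The product `(fc)(u) = ∑_v f(v) · c(u − v)` of a polynomial `f` with `c : ℤ^d → ℂ`. -/
noncomputable def polyApplyC {d : ℕ} (f : (Fin d → ℤ) → ℤ) (c : (Fin d → ℤ) → ℂ) :
    (Fin d → ℤ) → ℂ := fun u => ∑ᶠ v, (f v : ℂ) * c (u - v)

/-- `c` is `v`-periodic: `c(u + v) = c(u)` for all `u`. -/
def Periodic {d : ℕ} (c : (Fin d → ℤ) → ℤ) (v : Fin d → ℤ) : Prop := ∀ u, c (u + v) = c u

/-- `c : ℤ^d → ℂ` is `v`-periodic. -/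
def PeriodicC {d : ℕ} (c : (Fin d → ℤ) → ℂ) (v : Fin d → ℤ) : Prop := ∀ u, c (u + v) = c u

/-- `c` is `k`-periodic: it has `k` periods that are linearly independent over `ℚ`. -/
def KPeriodic {d : ℕ} (k : ℕ) (c : (Fin d → ℤ) → ℤ) : Prop :=
  ∃ v : Fin k → (Fin d → ℤ),
    (LinearIndependent ℚ fun i => intVecQ (v i)) ∧ ∀ i, Periodic c (v i)

/-- `c` is strongly periodic: it is `d`-periodic. -/
def StronglyPeriodic {d : ℕ} (c : (Fin d → ℤ) → ℤ) : Prop := KPeriodic d c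

/-- `c : ℤ^d → ℂ` is strongly periodic. -/
def StronglyPeriodicC {d : ℕ} (c : (Fin d → ℤ) → ℂ) : Prop :=
  ∃ v : Fin d → (Fin d → ℤ),
    (LinearIndependent ℚ fun i => intVecQ (v i)) ∧ ∀ i, PeriodicC c (v i)

/-- Two nonzero integer vectors are non-parallel if they are linearly independent over `ℚ`. -/
def NonParallel {d : ℕ} (v w : Fin d → ℤ) : Prop :=
  LinearIndependent ℚ ![intVecQ v, intVecQ w]

/-- A line polynomial in direction `v`: a polynomial whose support contains at least two points
and is contained in `u + ℚv` for some `u ∈ ℤ^d`. -/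
def IsLinePoly {d : ℕ} (f : (Fin d → ℤ) → ℤ) (v : Fin d → ℤ) : Prop :=
  IsPoly f ∧ v ≠ 0 ∧ 2 ≤ (Function.support f).ncard ∧
    ∃ u : Fin d → ℤ, ∀ w ∈ Function.support f, ∃ q : ℚ, intVecQ w = intVecQ u + q • intVecQ v

/-- The difference polynomial `X^v − 1`: value `1` at `v`, value `−1` at `0`, and `0` elsewhere. -/
def diffPoly {d : ℕ} (v : Fin d → ℤ) : (Fin d → ℤ) → ℤ :=
  fun u => if u = v then 1 else if u = 0 then -1 else 0

/-- `c : ℤ^d → ℂ` is periodic in direction `v`: it is `kv`-periodic for some nonzero integer `k`. -/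
def PeriodicInDirC {d : ℕ} (c : (Fin d → ℤ) → ℂ) (v : Fin d → ℤ) : Prop :=
  ∃ k : ℤ, k ≠ 0 ∧ PeriodicC c (k • v)

/-- `c : ℤ^d → ℂ` is `V`-periodic for a linear subspace `V ⊆ ℝ^d`: it is periodic in
direction `v` for every nonzero integer vector `v` lying in `V`. -/
def VPeriodicC {d : ℕ} (V : Submodule ℝ (Fin d → ℝ)) (c : (Fin d → ℤ) → ℂ) : Prop :=
  ∀ v : Fin d → ℤ, v ≠ 0 → intVecR v ∈ V → PeriodicInDirC c v

/-- The discrete cube `C_m + t`. -/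
def cube {d : ℕ} (m : ℕ) (t : Fin d → ℤ) : Set (Fin d → ℤ) :=
  {u | ∀ i, |u i - t i| ≤ (m : ℤ)}

/-- `c : ℤ^d → ℤ` is sparse: for some positive integer `a`,
`|supp(c) ∩ (C_m + t)| ≤ a·m` for all positive `m` and all `t`. -/
def Sparse {d : ℕ} (c : (Fin d → ℤ) → ℤ) : Prop :=
  ∃ a : ℕ, 0 < a ∧ ∀ m : ℕ, 0 < m → ∀ t : Fin d → ℤ,
    (Function.support c ∩ cube m t).ncard ≤ a * m

/-- A `v`-fiber: a function whose support is contained in `w + ℚv` for some `w ∈ ℤ^d`. -/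
def IsFiber {d : ℕ} (e : (Fin d → ℤ) → ℤ) (v : Fin d → ℤ) : Prop :=
  ∃ w : Fin d → ℤ, ∀ x ∈ Function.support e, ∃ q : ℚ, intVecQ x = intVecQ w + q • intVecQ v

/-- `c` is a sum of finitely many periodic `v`-fibers. -/
def FinSumPeriodicFibers {d : ℕ} (v : Fin d → ℤ) (c : (Fin d → ℤ) → ℤ) : Prop :=
  ∃ (r : ℕ) (e : Fin r → ((Fin d → ℤ) → ℤ)), c = ∑ j, e j ∧
    ∀ j, IsFiber (e j) v ∧ ∃ w : Fin d → ℤ, w ≠ 0 ∧ Periodic (e j) w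

end PaperFormal

namespace PaperFormal
open AddMonoidAlgebra

section Basics
variable {d : ℕ} {A B : Type*} [AddCommGroup A] [AddCommGroup B]

/-- Translation action of `ℤ^d` on functions. -/
def trHom (d : ℕ) (A : Type*) [AddCommGroup A] :
    Multiplicative (Fin d → ℤ) →* Module.End ℤ ((Fin d → ℤ) → A) where
  toFun v :=
    { toFun := fun θ u => θ (u - v.toAdd)
      map_add' := fun _ _ => rfl
      map_smul' := fun _ _ => rfl }
  map_one' := by ext θ u; simp
  map_mul' v w := by
    ext θ u
    simp only [toAdd_mul, LinearMap.coe_mk, AddHom.coe_mk, Module.End.mul_apply]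
    congr 1; abel

/-- Action of the group ring on functions. -/
noncomputable def act (d : ℕ) (A : Type*) [AddCommGroup A] :
    AddMonoidAlgebra ℤ (Fin d → ℤ) →ₐ[ℤ] Module.End ℤ ((Fin d → ℤ) → A) :=
  AddMonoidAlgebra.lift ℤ _ _ (trHom d A)

/-- The monomial `X^v`. -/
noncomputable def xi (v : Fin d → ℤ) : AddMonoidAlgebra ℤ (Fin d → ℤ) := single v 1

/-- `X^v - 1`. -/
noncomputable def dl (v : Fin d → ℤ) : AddMonoidAlgebra ℤ (Fin d → ℤ) := xi v - 1

lemma act_single (v : Fin d → ℤ) (a : ℤ) (θ : (Fin d → ℤ) → A) (u : Fin d → ℤ) :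
    act d A (single v a) θ u = a • θ (u - v) := by
  simp [act, AddMonoidAlgebra.lift_single, trHom]

lemma act_xi (v : Fin d → ℤ) (θ : (Fin d → ℤ) → A) (u : Fin d → ℤ) :
    act d A (xi v) θ u = θ (u - v) := by
  simp [xi, act_single]

lemma act_dl (v : Fin d → ℤ) (θ : (Fin d → ℤ) → A) (u : Fin d → ℤ) :
    act d A (dl v) θ u = θ (u - v) - θ u := by
  simp [dl, act_xi]

lemma xi_zero : xi (0 : Fin d → ℤ) = 1 := rfl

lemma xi_add (v w : Fin d → ℤ) : xi (v + w) = xi v * xi w := by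
  simp [xi, AddMonoidAlgebra.single_mul_single]

lemma act_mul (p q : AddMonoidAlgebra ℤ (Fin d → ℤ)) (θ : (Fin d → ℤ) → A) :
    act d A (p * q) θ = act d A p (act d A q θ) := by
  rw [map_mul]; rfl

lemma act_add' (p q : AddMonoidAlgebra ℤ (Fin d → ℤ)) (θ : (Fin d → ℤ) → A) :
    act d A (p + q) θ = act d A p θ + act d A q θ := by
  rw [map_add]; rfl

lemma act_sub' (p q : AddMonoidAlgebra ℤ (Fin d → ℤ)) (θ : (Fin d → ℤ) → A) :
    act d A (p - q) θ = act d A p θ - act d A q θ := by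
  rw [map_sub]; rfl

lemma act_one' (θ : (Fin d → ℤ) → A) : act d A 1 θ = θ := by
  rw [map_one]; rfl

/-- The annihilator ideal. -/
noncomputable def annI (θ : (Fin d → ℤ) → A) : Ideal (AddMonoidAlgebra ℤ (Fin d → ℤ)) where
  carrier := {p | act d A p θ = 0}
  zero_mem' := by simp
  add_mem' := by
    intro a b ha hb
    simp only [Set.mem_ofPred_eq] at *
    rw [act_add', ha, hb, add_zero]
  smul_mem' := by
    intro a b hb
    simp only [Set.mem_ofPred_eq] at *
    rw [smul_eq_mul, act_mul, hb, map_zero]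

lemma mem_annI {θ : (Fin d → ℤ) → A} {p} : p ∈ annI θ ↔ act d A p θ = 0 := Iff.rfl

/-- The period group. -/
noncomputable def PG (θ : (Fin d → ℤ) → A) : AddSubgroup (Fin d → ℤ) where
  carrier := {v | dl v ∈ annI θ}
  zero_mem' := by simp [dl, xi_zero]
  add_mem' := by
    intro a b ha hb
    simp only [Set.mem_ofPred_eq] at *
    have : dl (a + b) = xi a * dl b + dl a := by rw [dl, xi_add, dl, dl]; ring
    rw [this]
    exact add_mem (Ideal.mul_mem_left _ _ hb) ha
  neg_mem' := by
    intro a ha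
    simp only [Set.mem_ofPred_eq] at *
    have : dl (-a) = (- xi (-a)) * dl a := by
      have h : xi (-a) * xi a = 1 := by rw [← xi_add, neg_add_cancel, xi_zero]
      rw [dl, dl]; linear_combination h
    rw [this]
    exact Ideal.mul_mem_left _ _ ha

/-- The group of unipotent periods. -/
noncomputable def UG (θ : (Fin d → ℤ) → A) : AddSubgroup (Fin d → ℤ) where
  carrier := {v | dl v ∈ (annI θ).radical}
  zero_mem' := by simp [dl, xi_zero]
  add_mem' := by
    intro a b ha hb
    simp only [Set.mem_ofPred_eq] at *
    have : dl (a + b) = xi a * dl b + dl a := by rw [dl, xi_add, dl, dl]; ring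
    rw [this]
    exact add_mem (Ideal.mul_mem_left _ _ hb) ha
  neg_mem' := by
    intro a ha
    simp only [Set.mem_ofPred_eq] at *
    have : dl (-a) = (- xi (-a)) * dl a := by
      have h : xi (-a) * xi a = 1 := by rw [← xi_add, neg_add_cancel, xi_zero]
      rw [dl, dl]; linear_combination h
    rw [this]
    exact Ideal.mul_mem_left _ _ ha

lemma mem_PG {θ : (Fin d → ℤ) → A} {v} : v ∈ PG θ ↔ act d A (dl v) θ = 0 := Iff.rfl

lemma mem_PG' {θ : (Fin d → ℤ) → A} {v} : v ∈ PG θ ↔ ∀ u, θ (u - v) = θ u := by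
  rw [mem_PG, funext_iff]
  simp only [act_dl, Pi.zero_apply, sub_eq_zero]

lemma mem_UG {θ : (Fin d → ℤ) → A} {v} : v ∈ UG θ ↔ ∃ n, act d A (dl v ^ n) θ = 0 := Iff.rfl

lemma PG_le_UG (θ : (Fin d → ℤ) → A) : PG θ ≤ UG θ := fun _ h => Ideal.le_radical h

lemma annI_inf_le (θ η : (Fin d → ℤ) → A) : annI θ ⊓ annI η ≤ annI (θ + η) := by
  rintro p ⟨h1, h2⟩
  rw [mem_annI] at *
  rw [map_add, mem_annI.1 h1, mem_annI.1 h2, add_zero]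

lemma annI_neg (θ : (Fin d → ℤ) → A) : annI (-θ) = annI θ := by
  ext p; rw [mem_annI, mem_annI, map_neg, neg_eq_zero]

lemma PG_inf_le (θ η : (Fin d → ℤ) → A) : PG θ ⊓ PG η ≤ PG (θ + η) := by
  rintro v ⟨h1, h2⟩
  exact annI_inf_le _ _ ⟨h1, h2⟩

lemma UG_inf_le (θ η : (Fin d → ℤ) → A) : UG θ ⊓ UG η ≤ UG (θ + η) := by
  rintro v ⟨h1, h2⟩
  refine Ideal.radical_mono (annI_inf_le θ η) ?_
  rw [Ideal.radical_inf]
  exact ⟨h1, h2⟩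

/-- Rational embedding. -/
def qv (d : ℕ) : (Fin d → ℤ) →+ (Fin d → ℚ) where
  toFun := intVecQ
  map_zero' := by ext i; simp [intVecQ]
  map_add' u v := by ext i; simp [intVecQ]

lemma qv_apply (v : Fin d → ℤ) : qv d v = intVecQ v := rfl

lemma qv_inj : Function.Injective (qv d) := by
  intro u v h
  ext i
  have := congrFun h i
  simpa [qv, intVecQ] using this

lemma exists_int (x : Fin d → ℚ) : ∃ n : ℕ, 0 < n ∧ ∃ v, qv d v = (n : ℚ) • x := by
  refine ⟨∏ i, (x i).den, Finset.prod_pos fun i _ => (x i).den_pos, ?_⟩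
  have : ∀ i, ∃ z : ℤ, (z : ℚ) = ((∏ i, (x i).den : ℕ) : ℚ) * x i := by
    intro i
    obtain ⟨c, hc⟩ := Finset.dvd_prod_of_mem (fun i => (x i).den) (Finset.mem_univ i)
    refine ⟨c * (x i).num, ?_⟩
    rw [hc]
    push_cast
    have := Rat.mul_den_eq_num (x i)
    rw [← this]; ring
  choose v hv using this
  exact ⟨v, by ext i; simp only [qv_apply, intVecQ, Pi.smul_apply, smul_eq_mul]; exact hv i⟩

/-- `H` contains a multiple of every integer vector in `V`. -/
def Full (H : AddSubgroup (Fin d → ℤ)) (V : Submodule ℚ (Fin d → ℚ)) : Prop :=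
  ∀ v, qv d v ∈ V → ∃ n : ℕ, 0 < n ∧ n • v ∈ H

lemma Full.mono {H K : AddSubgroup (Fin d → ℤ)} {V W : Submodule ℚ (Fin d → ℚ)}
    (h : Full H V) (hHK : H ≤ K) (hWV : W ≤ V) : Full K W := fun v hv => by
  obtain ⟨n, hn, h⟩ := h v (hWV hv)
  exact ⟨n, hn, hHK h⟩

lemma Full.inf {H K : AddSubgroup (Fin d → ℤ)} {V : Submodule ℚ (Fin d → ℚ)}
    (h : Full H V) (h' : Full K V) : Full (H ⊓ K) V := fun v hv => by
  obtain ⟨n, hn, h⟩ := h v hv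
  obtain ⟨m, hm, h'⟩ := h' v hv
  refine ⟨n * m, Nat.mul_pos hn hm, ?_, ?_⟩
  · rw [mul_comm, mul_smul]; exact AddSubgroup.nsmul_mem _ h _
  · rw [mul_smul]; exact AddSubgroup.nsmul_mem _ h' _

lemma Full.sup {H : AddSubgroup (Fin d → ℤ)} {V W : Submodule ℚ (Fin d → ℚ)}
    (h : Full H V) (h' : Full H W) : Full H (V ⊔ W) := fun v hv => by
  obtain ⟨x, hx, y, hy, hxy⟩ := Submodule.mem_sup.1 hv
  obtain ⟨n, hn, a, ha⟩ := exists_int x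
  obtain ⟨m, hm, b, hb⟩ := exists_int y
  obtain ⟨n', hn', h⟩ := h a (by rw [ha]; exact V.smul_mem _ hx)
  obtain ⟨m', hm', h'⟩ := h' b (by rw [hb]; exact W.smul_mem _ hy)
  refine ⟨n * n' * (m * m'), by positivity, ?_⟩
  have : (n * n' * (m * m')) • v = (m * m') • n' • a + (n * n') • m' • b := by
    apply qv_inj
    rw [map_nsmul, map_add, map_nsmul, map_nsmul, map_nsmul, map_nsmul, ha, hb, ← hxy]
    simp only [← Nat.cast_smul_eq_nsmul ℚ, smul_add, smul_smul]
    congr 2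
    · push_cast; ring
    · push_cast; ring
  rw [this]
  exact add_mem (AddSubgroup.nsmul_mem _ h _) (AddSubgroup.nsmul_mem _ h' _)

lemma full_bot (H : AddSubgroup (Fin d → ℤ)) : Full H ⊥ := fun v hv => by
  have : v = 0 := qv_inj (by rw [map_zero]; simpa using hv)
  exact ⟨1, one_pos, by rw [this]; simp⟩

lemma full_span {H : AddSubgroup (Fin d → ℤ)} {u : Fin d → ℤ} (hu : ∃ n : ℕ, 0 < n ∧ n • u ∈ H) :
    Full H (Submodule.span ℚ {qv d u}) := fun v hv => by
  obtain ⟨t, ht⟩ := Submodule.mem_span_singleton.1 hv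
  obtain ⟨n, hn, h⟩ := hu
  refine ⟨n * t.den, Nat.mul_pos hn t.den_pos, ?_⟩
  have : (n * t.den) • v = t.num • n • u := by
    apply qv_inj
    rw [map_nsmul, map_zsmul, map_nsmul, ← ht]
    simp only [← Nat.cast_smul_eq_nsmul ℚ, ← Int.cast_smul_eq_zsmul ℚ, smul_smul]
    congr 1
    rw [← Rat.mul_den_eq_num t]; push_cast; ring
  rw [this]
  exact AddSubgroup.zsmul_mem _ h _

/-- Functions periodic along `X` and unipotent along `W`. -/
noncomputable def Cl (A : Type*) [AddCommGroup A] (X W : Submodule ℚ (Fin d → ℚ)) :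
    AddSubgroup ((Fin d → ℤ) → A) where
  carrier := {θ | Full (PG θ) X ∧ Full (UG θ) W}
  zero_mem' := by
    have : annI (0 : (Fin d → ℤ) → A) = ⊤ := by
      ext p; simp [mem_annI]
    refine ⟨fun v _ => ⟨1, one_pos, ?_⟩, fun v _ => ⟨1, one_pos, ?_⟩⟩
    · rw [mem_PG]; simp
    · rw [mem_UG]; exact ⟨0, by simp⟩
  add_mem' := by
    rintro a b ⟨ha, ha'⟩ ⟨hb, hb'⟩
    exact ⟨(ha.inf hb).mono (PG_inf_le _ _) le_rfl, (ha'.inf hb').mono (UG_inf_le _ _) le_rfl⟩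
  neg_mem' := by
    rintro a ⟨ha, ha'⟩
    have h1 : PG (-a) = PG a := by ext v; exact iff_of_eq (congrArg (dl v ∈ ·) (annI_neg a))
    have h2 : UG (-a) = UG a := by
      ext v; exact iff_of_eq (congrArg (dl v ∈ Ideal.radical ·) (annI_neg a))
    exact ⟨h1 ▸ ha, h2 ▸ ha'⟩

lemma mem_Cl {X W : Submodule ℚ (Fin d → ℚ)} {θ : (Fin d → ℤ) → A} :
    θ ∈ Cl A X W ↔ Full (PG θ) X ∧ Full (UG θ) W := Iff.rfl

lemma Cl_mono {X W X' W' : Submodule ℚ (Fin d → ℚ)} (hX : X' ≤ X) (hW : W' ≤ W) :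
    Cl A X W ≤ Cl A X' W' := fun _ h => ⟨h.1.mono le_rfl hX, h.2.mono le_rfl hW⟩

/-- If `J` commutes with some translation it preserves the corresponding (unipotent) period. -/
lemma comm_act (J : ((Fin d → ℤ) → A) →+ ((Fin d → ℤ) → B)) (v : Fin d → ℤ)
    (hJ : ∀ θ, J (act d A (dl v) θ) = act d B (dl v) (J θ)) (n : ℕ) (θ : (Fin d → ℤ) → A) :
    J (act d A (dl v ^ n) θ) = act d B (dl v ^ n) (J θ) := by
  induction n generalizing θ with
  | zero => simp [act_one']
  | succ n ih => rw [pow_succ, act_mul, act_mul, ih, hJ]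

lemma comm_PG (J : ((Fin d → ℤ) → A) →+ ((Fin d → ℤ) → B)) (v : Fin d → ℤ)
    (hJ : ∀ θ, J (act d A (dl v) θ) = act d B (dl v) (J θ)) (θ : (Fin d → ℤ) → A)
    (h : v ∈ PG θ) : v ∈ PG (J θ) := by
  rw [mem_PG] at *
  rw [← hJ, h, map_zero]

lemma comm_UG (J : ((Fin d → ℤ) → A) →+ ((Fin d → ℤ) → B)) (v : Fin d → ℤ)
    (hJ : ∀ θ, J (act d A (dl v) θ) = act d B (dl v) (J θ)) (θ : (Fin d → ℤ) → A)
    (h : v ∈ UG θ) : v ∈ UG (J θ) := by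
  rw [mem_UG] at *
  obtain ⟨n, h⟩ := h
  exact ⟨n, by rw [← comm_act J v hJ, h, map_zero]⟩

lemma comm_Full_PG {V : Submodule ℚ (Fin d → ℚ)} (J : ((Fin d → ℤ) → A) →+ ((Fin d → ℤ) → B))
    (hJ : ∀ v, qv d v ∈ V → ∀ θ, J (act d A (dl v) θ) = act d B (dl v) (J θ))
    (θ : (Fin d → ℤ) → A) (h : Full (PG θ) V) : Full (PG (J θ)) V := fun v hv => by
  obtain ⟨n, hn, h⟩ := h v hv
  refine ⟨n, hn, comm_PG J _ (hJ _ ?_) θ h⟩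
  rw [map_nsmul]; exact V.smul_of_tower_mem n hv

lemma comm_Full_UG {V : Submodule ℚ (Fin d → ℚ)} (J : ((Fin d → ℤ) → A) →+ ((Fin d → ℤ) → B))
    (hJ : ∀ v, qv d v ∈ V → ∀ θ, J (act d A (dl v) θ) = act d B (dl v) (J θ))
    (θ : (Fin d → ℤ) → A) (h : Full (UG θ) V) : Full (UG (J θ)) V := fun v hv => by
  obtain ⟨n, hn, h⟩ := h v hv
  refine ⟨n, hn, comm_UG J _ (hJ _ ?_) θ h⟩
  rw [map_nsmul]; exact V.smul_of_tower_mem n hv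

lemma comm_Cl {X W : Submodule ℚ (Fin d → ℚ)} (J : ((Fin d → ℤ) → A) →+ ((Fin d → ℤ) → B))
    (hJ : ∀ v θ, J (act d A (dl v) θ) = act d B (dl v) (J θ))
    (θ : (Fin d → ℤ) → A) (h : θ ∈ Cl A X W) : J θ ∈ Cl B X W :=
  ⟨comm_Full_PG J (fun v _ => hJ v) θ h.1, comm_Full_UG J (fun v _ => hJ v) θ h.2⟩

lemma act_Cl {X W : Submodule ℚ (Fin d → ℚ)} (p : AddMonoidAlgebra ℤ (Fin d → ℤ))
    (θ : (Fin d → ℤ) → A) (h : θ ∈ Cl A X W) : act d A p θ ∈ Cl A X W := by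
  refine comm_Cl (act d A p).toAddMonoidHom (fun v θ => ?_) θ h
  simp only [LinearMap.toAddMonoidHom_coe]
  rw [← act_mul, ← act_mul, mul_comm]

/-- Composition with an additive map of coefficients. -/
def coefMap (d : ℕ) (φ : A →+ B) : ((Fin d → ℤ) → A) →+ ((Fin d → ℤ) → B) where
  toFun θ := fun u => φ (θ u)
  map_zero' := by ext; simp
  map_add' _ _ := by ext; simp

lemma coefMap_act (φ : A →+ B) (p : AddMonoidAlgebra ℤ (Fin d → ℤ)) (θ : (Fin d → ℤ) → A) :
    coefMap d φ (act d A p θ) = act d B p (coefMap d φ θ) := by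
  induction p using AddMonoidAlgebra.induction_linear with
  | zero => simp
  | add p q hp hq => rw [act_add', act_add', map_add, hp, hq]
  | single v a =>
    ext u
    rw [act_single]
    show φ (act d A (single v a) θ u) = _
    rw [act_single, map_zsmul]; rfl

lemma coefMap_Cl {X W : Submodule ℚ (Fin d → ℚ)} (φ : A →+ B)
    (θ : (Fin d → ℤ) → A) (h : θ ∈ Cl A X W) : coefMap d φ θ ∈ Cl B X W :=
  comm_Cl _ (fun _ _ => coefMap_act _ _ _) θ h

lemma coefMap_annI_inj {φ : A →+ B} (hφ : Function.Injective φ) (θ : (Fin d → ℤ) → A) :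
    annI (coefMap d φ θ) = annI θ := by
  ext p
  rw [mem_annI, mem_annI, ← coefMap_act]
  constructor
  · intro h; ext u
    exact hφ (by rw [Pi.zero_apply, map_zero]; exact congrFun h u)
  · intro h; rw [h, map_zero]

lemma coefMap_Cl_inj {X W : Submodule ℚ (Fin d → ℚ)} {φ : A →+ B} (hφ : Function.Injective φ)
    (θ : (Fin d → ℤ) → A) (h : coefMap d φ θ ∈ Cl B X W) : θ ∈ Cl A X W := by
  have h1 : PG (coefMap d φ θ) = PG θ := by
    ext v; exact iff_of_eq (congrArg (dl v ∈ ·) (coefMap_annI_inj hφ θ))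
  have h2 : UG (coefMap d φ θ) = UG θ := by
    ext v; exact iff_of_eq (congrArg (dl v ∈ Ideal.radical ·) (coefMap_annI_inj hφ θ))
  exact ⟨h1 ▸ h.1, h2 ▸ h.2⟩

/-- One-dimensional discrete integration. -/
noncomputable def sumZ (a : ℤ → A) (j : ℤ) : A := ∑ i ∈ Finset.Ioc 0 j, a i - ∑ i ∈ Finset.Ioc j 0, a i

lemma sumZ_step (a : ℤ → A) (j : ℤ) : sumZ a j - sumZ a (j - 1) = a j := by
  unfold sumZ
  rcases le_or_gt 1 j with h | h
  · have h1 : Finset.Ioc 0 j = insert j (Finset.Ioc 0 (j - 1)) := by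
      ext x; simp only [Finset.mem_Ioc, Finset.mem_insert]; omega
    have h2 : Finset.Ioc j 0 = ∅ := Finset.Ioc_eq_empty (by omega)
    have h3 : Finset.Ioc (j - 1) 0 = ∅ := Finset.Ioc_eq_empty (by omega)
    rw [h1, h2, h3, Finset.sum_insert (by simp)]
    simp
  · have h1 : Finset.Ioc (j - 1) 0 = insert j (Finset.Ioc j 0) := by
      ext x; simp only [Finset.mem_Ioc, Finset.mem_insert]; omega
    have h2 : Finset.Ioc 0 j = ∅ := Finset.Ioc_eq_empty (by omega)
    have h3 : Finset.Ioc 0 (j - 1) = ∅ := Finset.Ioc_eq_empty (by omega)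
    rw [h1, h2, h3, Finset.sum_insert (by simp)]
    simp

/-- Integration operator in direction `u` along a functional `l` with `l u = 1`. -/
noncomputable def Jop (u : Fin d → ℤ) (l : (Fin d → ℚ) →ₗ[ℚ] ℚ) : ((Fin d → ℤ) → A) →+ ((Fin d → ℤ) → A) where
  toFun θ := fun g => - sumZ (fun i => θ (g + (i - ⌊l (qv d g)⌋) • u)) ⌊l (qv d g)⌋
  map_zero' := by ext g; simp [sumZ]
  map_add' θ η := by
    ext g; simp only [sumZ, Pi.add_apply, Finset.sum_add_distrib]; abel

lemma Jop_apply (u : Fin d → ℤ) (l : (Fin d → ℚ) →ₗ[ℚ] ℚ) (θ : (Fin d → ℤ) → A) (g) :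
    Jop u l θ g = - sumZ (fun i => θ (g + (i - ⌊l (qv d g)⌋) • u)) ⌊l (qv d g)⌋ := rfl

lemma Jop_dl (u : Fin d → ℤ) (l : (Fin d → ℚ) →ₗ[ℚ] ℚ) (hl : l (qv d u) = 1)
    (θ : (Fin d → ℤ) → A) : act d A (dl u) (Jop u l θ) = θ := by
  ext g
  rw [act_dl, Jop_apply, Jop_apply, map_sub, map_sub, hl, Int.floor_sub_one]
  have : (fun i : ℤ => θ (g - u + (i - (⌊l (qv d g)⌋ - 1)) • u)) =
      fun i : ℤ => θ (g + (i - ⌊l (qv d g)⌋) • u) := by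
    funext i; congr 1
    simp only [sub_smul, one_smul]; abel
  rw [this]
  have h := sumZ_step (fun i : ℤ => θ (g + (i - ⌊l (qv d g)⌋) • u)) ⌊l (qv d g)⌋
  simp only [sub_self, zero_smul, add_zero] at h
  rw [← h]; abel

lemma Jop_comm (u : Fin d → ℤ) (l : (Fin d → ℚ) →ₗ[ℚ] ℚ) (v : Fin d → ℤ) (hv : l (qv d v) = 0)
    (θ : (Fin d → ℤ) → A) : Jop u l (act d A (dl v) θ) = act d A (dl v) (Jop u l θ) := by
  have key : Jop u l (act d A (xi v) θ) = act d A (xi v) (Jop u l θ) := by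
    ext g
    rw [act_xi, Jop_apply, Jop_apply, map_sub, map_sub, hv, sub_zero]
    congr 2; funext i
    rw [act_xi]; congr 1; abel
  rw [dl, act_sub', act_sub', map_sub, key, act_one', act_one']

lemma act_dl_nsmul_dvd (u : Fin d → ℤ) (n : ℕ) : dl u ∣ dl (n • u) := by
  have h : xi (n • u) = xi u ^ n := by
    induction n with
    | zero => simp [xi_zero]
    | succ n ih => rw [succ_nsmul, xi_add, ih, pow_succ]
  rw [dl, dl, h]
  simpa using sub_dvd_pow_sub_pow (xi u) 1 n

/-- Integration inside the class `Cl X W`. -/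
lemma exists_integral {X W : Submodule ℚ (Fin d → ℚ)} (hXW : X ≤ W) (u : Fin d → ℤ)
    (hu : qv d u ∉ X) (g : (Fin d → ℤ) → A) (hg : g ∈ Cl A X W) :
    ∃ h ∈ Cl A X W, act d A (dl u) h = g := by
  have key : ∀ Y : Submodule ℚ (Fin d → ℚ), qv d u ∉ Y →
      ∃ l : (Fin d → ℚ) →ₗ[ℚ] ℚ, l (qv d u) = 1 ∧ Y ≤ LinearMap.ker l := by
    intro Y hY
    obtain ⟨f, hf, hfY⟩ := Submodule.exists_le_ker_of_notMem hY
    refine ⟨(f (qv d u))⁻¹ • f, by simp [hf], fun y hy => ?_⟩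
    have := LinearMap.mem_ker.1 (hfY hy)
    simp [this]
  by_cases huW : qv d u ∈ W
  · obtain ⟨l, hl, hY⟩ := key X hu
    refine ⟨Jop u l g, ⟨?_, ?_⟩, Jop_dl u l hl g⟩
    · exact comm_Full_PG _ (fun v hv θ => Jop_comm u l v (hY hv) θ) g hg.1
    · have h1 : Full (UG (Jop u l g)) (W ⊓ LinearMap.ker l) :=
        comm_Full_UG (V := W ⊓ LinearMap.ker l) _ (fun v hv θ => Jop_comm u l v hv.2 θ) g (hg.2.mono le_rfl inf_le_left)
      have h2 : Full (UG (Jop u l g)) (Submodule.span ℚ {qv d u}) := by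
        apply full_span
        obtain ⟨n, hn, h⟩ := hg.2 u huW
        refine ⟨n, hn, ?_⟩
        rw [mem_UG] at *
        obtain ⟨N, hN⟩ := h
        refine ⟨N + 1, ?_⟩
        obtain ⟨p, hp⟩ := act_dl_nsmul_dvd u n
        rw [pow_succ]
        nth_rewrite 2 [hp]
        rw [mul_comm (dl u), act_mul, act_mul, Jop_dl u l hl, ← act_mul, mul_comm, act_mul, hN,
          map_zero]
      refine (h1.sup h2).mono le_rfl fun x hx => ?_
      refine Submodule.mem_sup.2 ⟨x - l x • qv d u, ⟨?_, ?_⟩, l x • qv d u, ?_, by abel⟩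
      · exact W.sub_mem hx (W.smul_mem _ huW)
      · simp [hl]
      · exact Submodule.smul_mem _ _ (Submodule.mem_span_singleton_self _)
  · obtain ⟨l, hl, hY⟩ := key W huW
    refine ⟨Jop u l g, ⟨?_, ?_⟩, Jop_dl u l hl g⟩
    · exact comm_Full_PG _ (fun v hv θ => Jop_comm u l v (hY (hXW hv)) θ) g hg.1
    · exact comm_Full_UG _ (fun v hv θ => Jop_comm u l v (hY hv) θ) g hg.2

end Basics
end PaperFormal

namespace PaperFormal
open AddMonoidAlgebra

section Decomp
variable {d : ℕ} {A B : Type*} [AddCommGroup A] [AddCommGroup B]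

lemma exists_mem_of_full {H : AddSubgroup (Fin d → ℤ)} {V Y : Submodule ℚ (Fin d → ℚ)}
    (h : Full H V) (hV : ¬ V ≤ Y) : ∃ u ∈ H, qv d u ∈ V ∧ qv d u ∉ Y := by
  obtain ⟨x, hx, hxY⟩ := SetLike.not_le_iff_exists.1 hV
  obtain ⟨n, hn, v, hv⟩ := exists_int x
  have hvV : qv d v ∈ V := by rw [hv]; exact V.smul_mem _ hx
  obtain ⟨m, hm, hmv⟩ := h v hvV
  refine ⟨m • v, hmv, ?_, ?_⟩
  · rw [map_nsmul]; exact V.smul_of_tower_mem m hvV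
  · rw [map_nsmul, hv, ← Nat.cast_smul_eq_nsmul ℚ, smul_smul]
    intro hh
    exact hxY ((Submodule.smul_mem_iff _ (by positivity)).1 hh)

/-- Finite sums of members of the classes selected by `P`. -/
noncomputable def CS (A : Type*) [AddCommGroup A]
    (P : Submodule ℚ (Fin d → ℚ) → Submodule ℚ (Fin d → ℚ) → Prop) :
    AddSubgroup ((Fin d → ℤ) → A) :=
  AddSubgroup.closure {θ | ∃ X W, P X W ∧ θ ∈ Cl A X W}

variable {P Q : Submodule ℚ (Fin d → ℚ) → Submodule ℚ (Fin d → ℚ) → Prop}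

lemma Cl_le_CS {X W : Submodule ℚ (Fin d → ℚ)} (h : P X W) : Cl A X W ≤ CS A P :=
  fun _ hθ => AddSubgroup.subset_closure ⟨X, W, h, hθ⟩

lemma CS_le {K : AddSubgroup ((Fin d → ℤ) → A)} (h : ∀ X W, P X W → Cl A X W ≤ K) :
    CS A P ≤ K := by
  rw [CS, AddSubgroup.closure_le]
  rintro θ ⟨X, W, hP, hθ⟩
  exact h X W hP hθ

lemma CS_exists (F : ((Fin d → ℤ) → B) →+ ((Fin d → ℤ) → A))
    (h : ∀ X W, P X W → ∀ θ ∈ Cl A X W, ∃ η ∈ CS B Q, F η = θ) {θ : (Fin d → ℤ) → A}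
    (hθ : θ ∈ CS A P) : ∃ η ∈ CS B Q, F η = θ := by
  have : CS A P ≤ (CS B Q).map F := CS_le h
  exact this hθ

lemma CS_integral (u : Fin d → ℤ) (h : ∀ X W, P X W → X ≤ W ∧ qv d u ∉ X)
    {g : (Fin d → ℤ) → A} (hg : g ∈ CS A P) : ∃ h ∈ CS A P, act d A (dl u) h = g := by
  refine CS_exists (act d A (dl u)).toAddMonoidHom (fun X W hP θ hθ => ?_) hg
  obtain ⟨η, hη, h⟩ := exists_integral (h X W hP).1 u (h X W hP).2 θ hθ
  exact ⟨η, Cl_le_CS hP hη, h⟩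

lemma Cl_sup_left {X W : Submodule ℚ (Fin d → ℚ)} {u : Fin d → ℤ} {θ : (Fin d → ℤ) → A}
    (h : θ ∈ Cl A X W) (hu : act d A (dl u) θ = 0) :
    θ ∈ Cl A (X ⊔ Submodule.span ℚ {qv d u}) W :=
  ⟨h.1.sup (full_span ⟨1, one_pos, by rw [one_smul]; exact hu⟩), h.2⟩

lemma Cl_sup_right {X W : Submodule ℚ (Fin d → ℚ)} {u : Fin d → ℤ} {θ : (Fin d → ℤ) → A}
    (h : θ ∈ Cl A X W) (hu : act d A (dl u) θ = 0) :
    θ ∈ Cl A X (W ⊔ Submodule.span ℚ {qv d u}) :=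
  ⟨h.1, h.2.sup (full_span ⟨1, one_pos, by rw [one_smul]; exact PG_le_UG _ hu⟩)⟩

lemma dec_right {X V : Submodule ℚ (Fin d → ℚ)} (hXV : X ≤ V) (l : List (Fin d → ℤ))
    (hl : ∀ u ∈ l, qv d u ∉ V) (φ : (Fin d → ℤ) → A) (hφ : φ ∈ Cl A X V)
    (h0 : act d A (l.map dl).prod φ = 0) :
    φ ∈ CS A (fun X' W => X' = X ∧ V ≤ W ∧ Module.finrank ℚ W = Module.finrank ℚ V + 1) := by
  induction l generalizing φ with
  | nil =>
    simp only [List.map_nil, List.prod_nil, act_one'] at h0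
    rw [h0]; exact zero_mem _
  | cons u l ih =>
    have h1 := ih (fun w hw => hl w (List.mem_cons_of_mem _ hw)) (act d A (dl u) φ)
      (act_Cl _ _ hφ) (by
        rw [← act_mul, mul_comm]; simpa using h0)
    have huV := hl u List.mem_cons_self
    obtain ⟨h, hh, hu⟩ := CS_integral u (by
      rintro X' W ⟨rfl, hVW, -⟩
      exact ⟨hXV.trans hVW, fun h => huV (hXV h)⟩) h1
    have h2 : h ∈ Cl A X V := by
      refine CS_le ?_ hh
      rintro X' W ⟨rfl, hVW, -⟩
      exact Cl_mono le_rfl hVW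
    have h3 := Cl_sup_right (u := u) (sub_mem hφ h2) (by rw [map_sub, hu, sub_self])
    have h4 := Cl_le_CS (P := fun X' W => X' = X ∧ V ≤ W ∧
      Module.finrank ℚ W = Module.finrank ℚ V + 1)
      ⟨rfl, le_sup_left, Submodule.finrank_sup_span_singleton huV⟩ h3
    simpa using add_mem h4 hh

lemma dec_left {X W : Submodule ℚ (Fin d → ℚ)} (hXW : X ≤ W) (l : List (Fin d → ℤ))
    (hl : ∀ u ∈ l, qv d u ∈ W ∧ qv d u ∉ X)
    (hl' : l.Pairwise fun a b => qv d a ∉ X ⊔ Submodule.span ℚ {qv d b})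
    (φ : (Fin d → ℤ) → A) (hφ : φ ∈ Cl A X W)
    (h0 : act d A (l.map dl).prod φ = 0) :
    φ ∈ CS A (fun X' W' => W' = W ∧ ∃ u ∈ l, X' = X ⊔ Submodule.span ℚ {qv d u}) := by
  induction l generalizing φ with
  | nil =>
    simp only [List.map_nil, List.prod_nil, act_one'] at h0
    rw [h0]; exact zero_mem _
  | cons u l ih =>
    rw [List.pairwise_cons] at hl'
    have h1 := ih (fun w hw => hl w (List.mem_cons_of_mem _ hw)) hl'.2 (act d A (dl u) φ)
      (act_Cl _ _ hφ) (by
        rw [← act_mul, mul_comm]; simpa using h0)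
    obtain ⟨h, hh, hu⟩ := CS_integral u (by
      rintro X' W ⟨rfl, w, hw, rfl⟩
      refine ⟨sup_le hXW ?_, hl'.1 w hw⟩
      rw [Submodule.span_singleton_le_iff_mem]
      exact (hl w (List.mem_cons_of_mem _ hw)).1) h1
    have h2 : h ∈ Cl A X W := by
      refine CS_le ?_ hh
      rintro X' W ⟨rfl, w, hw, rfl⟩
      exact Cl_mono le_sup_left le_rfl
    have h3 := Cl_sup_left (u := u) (sub_mem hφ h2) (by rw [map_sub, hu, sub_self])
    have h4 : φ - h ∈ CS A (fun X' W' => W' = W ∧ ∃ w ∈ u :: l,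
        X' = X ⊔ Submodule.span ℚ {qv d w}) :=
      Cl_le_CS (P := fun X' W' => W' = W ∧ ∃ w ∈ u :: l,
        X' = X ⊔ Submodule.span ℚ {qv d w}) ⟨rfl, u, List.mem_cons_self, rfl⟩ h3
    have h5 : h ∈ CS A (fun X' W' => W' = W ∧ ∃ w ∈ u :: l,
        X' = X ⊔ Submodule.span ℚ {qv d w}) := by
      refine CS_le ?_ hh
      rintro X' W ⟨rfl, w, hw, rfl⟩
      exact Cl_le_CS (P := fun X' W' => W' = _ ∧ ∃ w ∈ u :: l,
        X' = X ⊔ Submodule.span ℚ {qv d w}) ⟨rfl, w, List.mem_cons_of_mem _ hw, rfl⟩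
    simpa using add_mem h4 h5

lemma list_prod_mem_pow {R : Type*} [CommRing R] (I : Ideal R) (l : List R)
    (h : ∀ x ∈ l, x ∈ I) : l.prod ∈ I ^ l.length := by
  induction l with
  | nil => simp
  | cons a l ih =>
    rw [List.prod_cons, List.length_cons, pow_succ']
    exact Ideal.mul_mem_mul (h a List.mem_cons_self) (ih fun x hx => h x (List.mem_cons_of_mem _ hx))

lemma ridge_step {X W : Submodule ℚ (Fin d → ℚ)} (hXW : X ≤ W)
    (hr : Module.finrank ℚ X + 1 < Module.finrank ℚ W) :
    Cl A X W ≤ CS A (fun X' W' => W' = W ∧ X' ≤ W ∧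
      Module.finrank ℚ X' = Module.finrank ℚ X + 1) := by
  intro θ hθ
  obtain ⟨a, haU, haW, haX⟩ := exists_mem_of_full hθ.2 (Y := X) (fun h => by
    have := Submodule.finrank_mono h; omega)
  obtain ⟨b, hbU, hbW, hbX⟩ := exists_mem_of_full hθ.2
    (Y := X ⊔ Submodule.span ℚ {qv d a}) (fun h => by
    have := Submodule.finrank_mono h
    rw [Submodule.finrank_sup_span_singleton haX] at this; omega)
  have hI : Ideal.span {dl a, dl b} ≤ (annI θ).radical := by
    rw [Ideal.span_le]
    rintro x (rfl | rfl)
    · exact haU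
    · exact hbU
  obtain ⟨N, hN⟩ := Ideal.exists_pow_le_of_le_radical_of_fg hI
    ⟨{dl a, dl b}, by simp⟩
  have hne : ∀ i j : ℕ, i ≠ j →
      qv d (a + i • b) ∉ X ⊔ Submodule.span ℚ {qv d (a + j • b)} := by
    intro i j hij hmem
    obtain ⟨x, hx, y, hy, hxy⟩ := Submodule.mem_sup.1 hmem
    obtain ⟨t, rfl⟩ := Submodule.mem_span_singleton.1 hy
    simp only [map_add, map_nsmul, ← Nat.cast_smul_eq_nsmul ℚ] at hxy
    have e1 : ((i : ℚ) - t * j) • qv d b = x + (t - 1) • qv d a := by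
      have : x = (qv d a + (i : ℚ) • qv d b) - t • (qv d a + (j : ℚ) • qv d b) := by
        rw [← hxy]; abel
      rw [this]; module
    have e2 : (i : ℚ) - t * j = 0 := by
      by_contra hne
      apply hbX
      rw [← Submodule.smul_mem_iff _ hne, e1]
      exact Submodule.add_mem_sup hx (Submodule.smul_mem _ _ (Submodule.mem_span_singleton_self _))
    have e3 : t - 1 = 0 := by
      by_contra hne
      apply haX
      rw [← Submodule.smul_mem_iff _ hne]
      rw [e2, zero_smul] at e1
      rw [← neg_eq_of_add_eq_zero_right e1.symm]
      exact X.neg_mem hx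
    have e4 : t = 1 := by linarith
    rw [e4] at e2
    apply hij
    exact_mod_cast (by linarith : (i : ℚ) = j)
  have hnX : ∀ i : ℕ, qv d (a + i • b) ∉ X := fun i h =>
    hne i (i + 1) (by omega) (Submodule.mem_sup_left h)
  have hinW : ∀ i : ℕ, qv d (a + i • b) ∈ W := fun i => by
    rw [map_add, map_nsmul]; exact add_mem haW (W.smul_of_tower_mem i hbW)
  have key := dec_left hXW ((List.range N).map fun j => a + j • b) (by
      intro u hu
      obtain ⟨j, -, rfl⟩ := List.mem_map.1 hu
      exact ⟨hinW j, hnX j⟩) (by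
      rw [List.pairwise_map]
      exact List.nodup_range.imp fun {i j} hij => hne i j hij) θ hθ (by
      apply hN
      have := list_prod_mem_pow (Ideal.span {dl a, dl b})
        (((List.range N).map fun j => a + j • b).map dl) (by
          intro x hx
          rw [List.map_map] at hx
          obtain ⟨j, -, rfl⟩ := List.mem_map.1 hx
          have e : dl (a + j • b) = xi a * dl (j • b) + dl a := by
            rw [dl, xi_add, dl, dl]; ring
          obtain ⟨q, hq⟩ := act_dl_nsmul_dvd b j
          rw [Function.comp_apply, e, hq]
          refine add_mem (Ideal.mul_mem_left _ _ (Ideal.mul_mem_right _ _ ?_)) ?_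
          · exact Ideal.subset_span (by simp)
          · exact Ideal.subset_span (by simp))
      simpa using this)
  refine CS_le ?_ key
  rintro X' W' ⟨rfl, u, hu, rfl⟩
  obtain ⟨j, -, rfl⟩ := List.mem_map.1 hu
  apply Cl_le_CS (P := fun X' W'' => W'' = W' ∧ X' ≤ W' ∧
      Module.finrank ℚ X' = Module.finrank ℚ X + 1)
  refine ⟨rfl, sup_le hXW ?_, Submodule.finrank_sup_span_singleton (hnX j)⟩
  rw [Submodule.span_singleton_le_iff_mem]
  exact hinW j

/-- A function unipotent along `W` is a sum of functions periodic along hyperplanes of `W`. -/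
lemma ridge {X W : Submodule ℚ (Fin d → ℚ)} (hXW : X ≤ W) (n : ℕ)
    (hr : Module.finrank ℚ W = Module.finrank ℚ X + 1 + n) :
    Cl A X W ≤ CS A (fun X' W' => W' = W ∧ X' ≤ W ∧
      Module.finrank ℚ W = Module.finrank ℚ X' + 1) := by
  induction n generalizing X with
  | zero => exact Cl_le_CS (P := fun X' W' => W' = W ∧ X' ≤ W ∧
      Module.finrank ℚ W = Module.finrank ℚ X' + 1) ⟨rfl, hXW, hr⟩
  | succ n ih =>
    refine (ridge_step hXW (by omega)).trans (CS_le ?_)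
    rintro X' W' ⟨rfl, hX', hr'⟩
    exact ih hX' (by omega)

end Decomp
end PaperFormal

namespace PaperFormal
open AddMonoidAlgebra

section Integrality
variable {d : ℕ} {A B : Type*} [AddCommGroup A] [AddCommGroup B]

/-- Lifting along a surjection of coefficient groups. -/
lemma lift_Cl {π : A →+ B} (hπ : Function.Surjective π) (n : ℕ)
    {X V : Submodule ℚ (Fin d → ℚ)} (hXV : X ≤ V)
    (hn : Module.finrank ℚ V = Module.finrank ℚ X + n) (θ : (Fin d → ℤ) → B)
    (hθ : θ ∈ Cl B X V) : ∃ η ∈ Cl A X V, coefMap d π η = θ := by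
  induction n generalizing X θ with
  | zero =>
    have hX : X = V := Submodule.eq_of_le_of_finrank_eq hXV hn.symm
    subst hX
    have hP : PG θ ≤ PG (fun u => Function.surjInv hπ (θ u)) := by
      intro v hv
      rw [mem_PG'] at *
      intro u; rw [hv u]
    refine ⟨fun u => Function.surjInv hπ (θ u), ⟨hθ.1.mono hP le_rfl,
      hθ.1.mono (hP.trans (PG_le_UG _)) le_rfl⟩, ?_⟩
    ext u
    exact Function.surjInv_eq hπ _
  | succ n ih =>
    obtain ⟨u, huU, huV, huX⟩ := exists_mem_of_full hθ.2 (Y := X) (fun h => by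
      have := Submodule.finrank_mono h; omega)
    obtain ⟨N, hN⟩ := mem_UG.1 huU
    clear huU
    induction N generalizing θ with
    | zero =>
      rw [pow_zero, act_one'] at hN
      exact ⟨0, zero_mem _, by rw [hN, map_zero]⟩
    | succ N ihN =>
      obtain ⟨g, hg, hgθ⟩ := ihN (act d B (dl u) θ) (act_Cl _ _ hθ) (by
        rw [← act_mul, ← pow_succ, hN])
      obtain ⟨h, hh, hhg⟩ := exists_integral hXV u huX g hg
      have h1 : θ - coefMap d π h ∈ Cl B X V := sub_mem hθ (coefMap_Cl π h hh)
      have h2 := Cl_sup_left (u := u) h1 (by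
        rw [map_sub, ← coefMap_act, hhg, hgθ, sub_self])
      obtain ⟨η, hη, hη'⟩ := ih (sup_le hXV (by
        rwa [Submodule.span_singleton_le_iff_mem])) (by
        rw [Submodule.finrank_sup_span_singleton huX]; omega) _ h2
      exact ⟨η + h, add_mem (Cl_mono le_sup_left le_rfl hη) hh, by
        rw [map_add, hη', sub_add_cancel]⟩

lemma kill_sum (V : Submodule ℚ (Fin d → ℚ)) {ι : Type*} [DecidableEq ι] (t : Finset ι)
    (φ : ι → (Fin d → ℤ) → A) (h : ∀ i ∈ t, ∃ u ∈ UG (φ i), qv d u ∉ V) :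
    ∃ l : List (Fin d → ℤ), (∀ u ∈ l, qv d u ∉ V) ∧
      act d A (l.map dl).prod (∑ i ∈ t, φ i) = 0 := by
  induction t using Finset.induction_on with
  | empty => exact ⟨[], by simp, by simp⟩
  | insert a t ha ih =>
    obtain ⟨l, hl, hl0⟩ := ih fun i hi => h i (Finset.mem_insert_of_mem hi)
    obtain ⟨u, hu, huV⟩ := h a (Finset.mem_insert_self _ _)
    obtain ⟨n, hn⟩ := mem_UG.1 hu
    refine ⟨List.replicate n u ++ l, ?_, ?_⟩
    · intro w hw
      rcases List.mem_append.1 hw with hw | hw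
      · rw [List.eq_of_mem_replicate hw]; exact huV
      · exact hl w hw
    · rw [List.map_append, List.prod_append, List.map_replicate, List.prod_replicate,
        Finset.sum_insert ha, map_add]
      conv_lhs => rw [act_mul (dl u ^ n) _ (∑ i ∈ t, φ i), hl0, map_zero, mul_comm, act_mul, hn,
        map_zero, add_zero]

lemma CS_finset {P : Submodule ℚ (Fin d → ℚ) → Submodule ℚ (Fin d → ℚ) → Prop}
    (ξ : Submodule ℚ (Fin d → ℚ) → Submodule ℚ (Fin d → ℚ))
    (hP : ∀ X W, P X W → X = ξ W) {θ : (Fin d → ℤ) → A} (hθ : θ ∈ CS A P) :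
    ∃ (s : Finset (Submodule ℚ (Fin d → ℚ)))
      (φ : Submodule ℚ (Fin d → ℚ) → (Fin d → ℤ) → A),
      (∀ V ∈ s, P (ξ V) V) ∧ (∀ V, φ V ∈ Cl A (ξ V) V) ∧ (∀ V, V ∉ s → φ V = 0) ∧
      θ = ∑ V ∈ s, φ V := by
  classical
  induction hθ using AddSubgroup.closure_induction with
  | mem θ h =>
    obtain ⟨X, W, hPW, hθ⟩ := h
    obtain rfl := hP X W hPW
    refine ⟨{W}, fun V => if V = W then θ else 0, by simpa using hPW, fun V => ?_, ?_, by simp⟩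
    · dsimp only
      split_ifs with h
      · rw [h]; exact hθ
      · exact zero_mem _
    · intro V hV
      rw [Finset.mem_singleton] at hV
      simp [hV]
  | zero => exact ⟨∅, 0, by simp, fun V => zero_mem _, by simp, by simp⟩
  | add x y _ _ hx hy =>
    obtain ⟨s, φ, h1, h2, h3, h4⟩ := hx
    obtain ⟨t, ψ, k1, k2, k3, k4⟩ := hy
    refine ⟨s ∪ t, φ + ψ, ?_, fun V => add_mem (h2 V) (k2 V), ?_, ?_⟩
    · intro V hV
      rcases Finset.mem_union.1 hV with hV | hV
      · exact h1 V hV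
      · exact k1 V hV
    · intro V hV
      rw [Finset.mem_union, not_or] at hV
      rw [Pi.add_apply, h3 V hV.1, k3 V hV.2, add_zero]
    · rw [h4, k4, Finset.sum_subset (Finset.subset_union_left (s₂ := t)) (fun V _ h => h3 V h),
        Finset.sum_subset (Finset.subset_union_right (s₁ := s)) (fun V _ h => k3 V h),
        ← Finset.sum_add_distrib]
      rfl
  | neg x _ hx =>
    obtain ⟨s, φ, h1, h2, h3, h4⟩ := hx
    refine ⟨s, -φ, h1, fun V => neg_mem (h2 V), fun V hV => ?_, ?_⟩
    · rw [Pi.neg_apply, h3 V hV, neg_zero]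
    · rw [h4]; simp

/-- The inclusion of integer functions into real functions. -/
noncomputable def toR (d : ℕ) : ((Fin d → ℤ) → ℤ) →+ ((Fin d → ℤ) → ℝ) :=
  coefMap d (Int.castAddHom ℝ)

lemma toR_apply (c : (Fin d → ℤ) → ℤ) (u) : toR d c u = (c u : ℝ) := rfl

lemma toR_inj : Function.Injective (toR d) := by
  intro a b h
  ext u
  have := congrFun h u
  rw [toR_apply, toR_apply] at this
  exact_mod_cast this

lemma int_step (ξ : Submodule ℚ (Fin d → ℚ) → Submodule ℚ (Fin d → ℚ)) (hξ : ∀ V, ξ V ≤ V)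
    (k : ℕ) (c : (Fin d → ℤ) → ℤ)
    (hc : toR d c ∈ CS ℝ (fun X W => X = ξ W ∧ Module.finrank ℚ W = k)) :
    ∃ c1 ∈ CS ℤ (fun X W => X = ξ W ∧ Module.finrank ℚ W = k), ∃ c2,
      c = c1 + c2 ∧ toR d c2 ∈ CS ℝ (fun X W => X = ⊥ ∧ Module.finrank ℚ W = k + 1) := by
  classical
  obtain ⟨s, φ, h1, h2, -, h4⟩ := CS_finset ξ (fun X W h => h.1) hc
  let Z : AddSubgroup ℝ := (Int.castAddHom ℝ).range
  let π : ℝ →+ ℝ ⧸ Z := QuotientAddGroup.mk' Z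
  have hπ : Function.Surjective π := QuotientAddGroup.mk'_surjective Z
  have hπ0 : ∀ a : ℤ, π (a : ℝ) = 0 := fun a =>
    (QuotientAddGroup.eq_zero_iff _).2 ⟨a, rfl⟩
  have hker : ∀ x : ℝ, π x = 0 → ∃ a : ℤ, (a : ℝ) = x := fun x hx =>
    (QuotientAddGroup.eq_zero_iff _).1 hx
  have key : ∀ V, ∃ i : (Fin d → ℤ) → ℤ, V ∈ s →
      i ∈ Cl ℤ (ξ V) V ∧
      φ V - toR d i ∈ CS ℝ (fun X W => X = ⊥ ∧ Module.finrank ℚ W = k + 1) := by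
    intro V
    by_cases hV : V ∈ s
    swap
    · exact ⟨0, fun h => absurd h hV⟩
    obtain ⟨l, hl, hl0⟩ := kill_sum V (s.erase V) (fun V' => coefMap d π (φ V')) (by
      intro V' hV'
      obtain ⟨hne, hV's⟩ := Finset.mem_erase.1 hV'
      obtain ⟨u, hu, -, huV⟩ := exists_mem_of_full (coefMap_Cl π _ (h2 V')).2 (Y := V)
        (fun hle => hne (Submodule.eq_of_le_of_finrank_eq hle
          ((h1 V' hV's).2.trans (h1 V hV).2.symm)))
      exact ⟨u, hu, huV⟩)
    have hsum : coefMap d π (φ V) = - ∑ V' ∈ s.erase V, coefMap d π (φ V') := by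
      rw [eq_neg_iff_add_eq_zero, Finset.add_sum_erase s (fun V => coefMap d π (φ V)) hV,
        ← map_sum, ← h4]
      ext u
      exact hπ0 (c u)
    have hdec := dec_right (hξ V) l hl _ (coefMap_Cl π _ (h2 V)) (by
      rw [hsum, map_neg, hl0, neg_zero])
    obtain ⟨Θ, hΘ, hΘ'⟩ := CS_exists (coefMap d π) (Q := fun X' W => X' = ξ V ∧ V ≤ W ∧
        Module.finrank ℚ W = Module.finrank ℚ V + 1) (by
      rintro X W ⟨rfl, hVW, hr⟩ θ hθ
      have hle := (hξ V).trans hVW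
      obtain ⟨n, hn⟩ := Nat.exists_eq_add_of_le (Submodule.finrank_mono hle)
      obtain ⟨η, hη, h⟩ := lift_Cl hπ n hle hn θ hθ
      exact ⟨η, Cl_le_CS (P := fun X' W => X' = ξ V ∧ V ≤ W ∧
        Module.finrank ℚ W = Module.finrank ℚ V + 1) ⟨rfl, hVW, hr⟩ hη, h⟩) hdec
    have hi : ∀ u, ∃ a : ℤ, (a : ℝ) = (φ V - Θ) u := fun u => by
      apply hker
      have := congrFun hΘ' u
      rw [Pi.sub_apply, map_sub, sub_eq_zero]
      exact this.symm
    choose i hi using hi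
    have hi' : toR d i = φ V - Θ := funext hi
    refine ⟨i, fun _ => ⟨coefMap_Cl_inj (φ := Int.castAddHom ℝ) Int.cast_injective i ?_, ?_⟩⟩
    · change toR d i ∈ _
      rw [hi']
      refine sub_mem (h2 V) (CS_le ?_ hΘ)
      rintro X W ⟨rfl, hVW, -⟩
      exact Cl_mono le_rfl hVW
    · rw [hi', sub_sub_cancel]
      refine CS_le ?_ hΘ
      rintro X W ⟨rfl, hVW, hr⟩
      rw [(h1 V hV).2] at hr
      exact (Cl_mono bot_le le_rfl).trans (Cl_le_CS
        (P := fun X W => X = ⊥ ∧ Module.finrank ℚ W = k + 1) ⟨rfl, hr⟩)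
  choose i hi using key
  refine ⟨∑ V ∈ s, i V, sum_mem fun V hV => ?_, c - ∑ V ∈ s, i V, by abel, ?_⟩
  · exact Cl_le_CS (P := fun X W => X = ξ W ∧ Module.finrank ℚ W = k) (h1 V hV) (hi V hV).1
  · rw [map_sub, h4, map_sum, ← Finset.sum_sub_distrib]
    exact sum_mem fun V hV => (hi V hV).2

lemma ridge' (k : ℕ) : CS A (fun X W : Submodule ℚ (Fin d → ℚ) =>
      X = ⊥ ∧ Module.finrank ℚ W = k + 1) ≤
    CS A (fun X W => X = W ∧ Module.finrank ℚ W = k) := by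
  refine CS_le ?_
  rintro X W ⟨rfl, hW⟩
  refine (ridge bot_le k (by rw [finrank_bot]; omega)).trans (CS_le ?_)
  rintro X' W' ⟨rfl, hX', hr⟩
  exact (Cl_mono le_rfl hX').trans (Cl_le_CS
    (P := fun X W => X = W ∧ Module.finrank ℚ W = k) ⟨rfl, by omega⟩)

lemma int_bot (n : ℕ) : ∀ (k : ℕ), d < k + n → ∀ (c : (Fin d → ℤ) → ℤ),
    toR d c ∈ CS ℝ (fun X W => X = ⊥ ∧ Module.finrank ℚ W = k) →
    c ∈ CS ℤ (fun X W => X = ⊥ ∧ Module.finrank ℚ W = k) := by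
  induction n with
  | zero =>
    intro k hk c hc
    have : toR d c ∈ (⊥ : AddSubgroup _) := by
      refine CS_le ?_ hc
      rintro X W ⟨-, hW⟩
      have := Submodule.finrank_le W
      simp at this
      omega
    have h : c = 0 := toR_inj (by rw [map_zero]; exact this)
    rw [h]; exact zero_mem _
  | succ n ih =>
    intro k hk c hc
    obtain ⟨c1, hc1, c2, rfl, hc2⟩ := int_step (fun _ => ⊥) (fun _ => bot_le) k c hc
    refine add_mem hc1 ?_
    refine CS_le ?_ (ridge' k (ih (k + 1) (by omega) c2 hc2))
    rintro X W ⟨rfl, hW⟩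
    exact (Cl_mono bot_le le_rfl).trans (Cl_le_CS
      (P := fun X W => X = ⊥ ∧ Module.finrank ℚ W = k) ⟨rfl, hW⟩)

/-- Integer functions which are real sums of `k`-periodic functions are integer sums. -/
lemma int_main (k : ℕ) (c : (Fin d → ℤ) → ℤ)
    (hc : toR d c ∈ CS ℝ (fun X W => X = W ∧ Module.finrank ℚ W = k)) :
    c ∈ CS ℤ (fun X W => X = W ∧ Module.finrank ℚ W = k) := by
  obtain ⟨c1, hc1, c2, rfl, hc2⟩ := int_step id (fun _ => le_rfl) k c hc
  exact add_mem hc1 (ridge' k (int_bot d (k + 1) (by omega) c2 hc2))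

lemma kperiodic_of_full {k : ℕ} {V : Submodule ℚ (Fin d → ℚ)} (hV : Module.finrank ℚ V = k)
    (c : (Fin d → ℤ) → ℤ) (h : Full (PG c) V) : KPeriodic k c := by
  let b := Module.finBasisOfFinrankEq ℚ V hV
  have key : ∀ i, ∃ v : Fin d → ℤ, v ∈ PG c ∧ ∃ q : ℚˣ, intVecQ v = q • (b i : Fin d → ℚ) := by
    intro i
    obtain ⟨n, hn, v, hv⟩ := exists_int (b i : Fin d → ℚ)
    obtain ⟨m, hm, hmv⟩ := h v (by rw [hv]; exact V.smul_mem _ (b i).2)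
    refine ⟨m • v, hmv, Units.mk0 ((m : ℚ) * n) (by positivity), ?_⟩
    rw [← qv_apply, map_nsmul, hv, ← Nat.cast_smul_eq_nsmul ℚ, smul_smul]
    rfl
  choose v hv q hq using key
  refine ⟨v, ?_, fun i u => ?_⟩
  · have h1 : LinearIndependent ℚ (fun i => (b i : Fin d → ℚ)) :=
      b.linearIndependent.map' V.subtype V.ker_subtype
    have h2 := h1.units_smul q
    convert! h2 using 1
    funext i; exact hq i
  · have := mem_PG'.1 (hv i) (u + v i)
    rw [add_sub_cancel_right] at this
    exact this.symm

lemma final_sum (k : ℕ) (c : (Fin d → ℤ) → ℤ)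
    (hc : c ∈ CS ℤ (fun X W => X = W ∧ Module.finrank ℚ W = k)) :
    ∃ (m : ℕ) (cs : Fin m → ((Fin d → ℤ) → ℤ)),
      (∀ i, KPeriodic k (cs i)) ∧ c = ∑ i, cs i := by
  obtain ⟨s, φ, h1, h2, -, h4⟩ := CS_finset id (fun X W h => h.1) hc
  refine ⟨s.card, fun i => φ (s.equivFin.symm i), fun i => ?_, ?_⟩
  · exact kperiodic_of_full (h1 _ (s.equivFin.symm i).2).2 _ (h2 _).1
  · rw [h4, ← Finset.sum_coe_sort, ← Equiv.sum_comp s.equivFin.symm]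

end Integrality
end PaperFormal

namespace PaperFormal
open AddMonoidAlgebra

section Dilation
variable {d : ℕ}

/-- The dilated polynomial `∑ f(v) X^{n v}`. -/
noncomputable def dilF (S : Finset (Fin d → ℤ)) (f : (Fin d → ℤ) → ℤ) (n : ℕ) :
    AddMonoidAlgebra ℤ (Fin d → ℤ) := ∑ v ∈ S, single (n • v) (f v)

lemma act_dilF (S : Finset (Fin d → ℤ)) (f : (Fin d → ℤ) → ℤ) (n : ℕ) (c : (Fin d → ℤ) → ℤ)
    (u : Fin d → ℤ) : act d ℤ (dilF S f n) c u = ∑ v ∈ S, f v * c (u - n • v) := by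
  rw [dilF, map_sum, LinearMap.sum_apply, Finset.sum_apply]
  refine Finset.sum_congr rfl fun v _ => ?_
  rw [act_single, smul_eq_mul]

lemma frob (q : ℕ) (hq : q.Prime) (f : (Fin d → ℤ) → ℤ) (n : ℕ) (S : Finset (Fin d → ℤ)) :
    ∃ r, dilF S f n ^ q = dilF S f (q * n) + (q : AddMonoidAlgebra ℤ (Fin d → ℤ)) * r := by
  classical
  induction S using Finset.induction_on with
  | empty => exact ⟨0, by simp [dilF, hq.ne_zero]⟩
  | insert a S ha ih =>
    obtain ⟨r, hr⟩ := ih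
    simp only [dilF] at hr ⊢
    rw [Finset.sum_insert ha, Finset.sum_insert ha]
    obtain ⟨r', hr'⟩ := exists_add_pow_prime_eq hq (single (n • a) (f a))
      (∑ v ∈ S, single (n • v) (f v))
    have hf : ∃ b : ℤ, f a ^ q = f a + q * b := by
      have := Fact.mk hq
      have : ((f a ^ q - f a : ℤ) : ZMod q) = 0 := by
        push_cast; rw [ZMod.pow_card, sub_self]
      obtain ⟨b, hb⟩ := (ZMod.intCast_zmod_eq_zero_iff_dvd _ _).1 this
      exact ⟨b, by linarith⟩
    obtain ⟨b, hb⟩ := hf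
    have hs : (single (n • a) (f a) : AddMonoidAlgebra ℤ (Fin d → ℤ)) ^ q =
        single ((q * n) • a) (f a) +
          (q : AddMonoidAlgebra ℤ (Fin d → ℤ)) * single ((q * n) • a) b := by
      rw [AddMonoidAlgebra.single_pow, hb, AddMonoidAlgebra.single_add, ← mul_smul]
      congr 1
      rw [← nsmul_eq_mul, ← AddMonoidAlgebra.smul_single, nsmul_eq_mul]
    rw [hr', hr, hs]
    refine ⟨single ((q * n) • a) b + r + single (n • a) (f a) * (∑ v ∈ S, single (n • v) (f v)) * r', ?_⟩
    ring

lemma prime_step (S : Finset (Fin d → ℤ)) (f : (Fin d → ℤ) → ℤ) (c : (Fin d → ℤ) → ℤ) (B : ℤ)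
    (hB : ∀ u, |c u| ≤ B) (q : ℕ) (hq : q.Prime) (hqB : (∑ v ∈ S, |f v|) * B < q) (n : ℕ)
    (h : act d ℤ (dilF S f n) c = 0) : act d ℤ (dilF S f (q * n)) c = 0 := by
  obtain ⟨r, hr⟩ := frob q hq f n S
  have h1 : act d ℤ (dilF S f n ^ q) c = 0 := by
    obtain ⟨m, hm⟩ := Nat.exists_eq_succ_of_ne_zero hq.ne_zero
    rw [hm, pow_succ, act_mul, h, map_zero]
  rw [hr, act_add', ← nsmul_eq_mul, map_nsmul] at h1
  ext u
  have h2 := congrFun h1 u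
  have h3 : act d ℤ (dilF S f (q * n)) c u + q * act d ℤ r c u = 0 := by
    simpa using h2
  apply Int.eq_zero_of_abs_lt_dvd (m := q) ⟨- act d ℤ r c u, by linarith⟩
  rw [act_dilF]
  refine lt_of_le_of_lt (Finset.abs_sum_le_sum_abs _ _) (lt_of_le_of_lt ?_ hqB)
  rw [Finset.sum_mul]
  refine Finset.sum_le_sum fun v _ => ?_
  rw [abs_mul]
  exact mul_le_mul_of_nonneg_left (hB _) (abs_nonneg _)

lemma dil_zero (S : Finset (Fin d → ℤ)) (f : (Fin d → ℤ) → ℤ) (c : (Fin d → ℤ) → ℤ) (B : ℤ)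
    (hB : ∀ u, |c u| ≤ B) (K : ℕ) (hK2 : 2 ≤ K) (hK : (∑ v ∈ S, |f v|) * B ≤ K)
    (h : act d ℤ (dilF S f 1) c = 0) (n : ℕ) (hn : ∀ p : ℕ, p.Prime → p ∣ n → K < p) :
    act d ℤ (dilF S f n) c = 0 := by
  induction n using induction_on_primes with
  | zero => exact absurd (hn 2 Nat.prime_two (dvd_zero _)) (by omega)
  | one => exact h
  | prime_mul p a hp ih =>
    refine prime_step S f c B hB p hp ?_ a (ih fun q hq hqa => hn q hq (hqa.mul_left _))
    have := hn p hp (dvd_mul_right _ _)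
    exact lt_of_le_of_lt hK (by exact_mod_cast this)

lemma dil_period (S : Finset (Fin d → ℤ)) (f : (Fin d → ℤ) → ℤ) (c : (Fin d → ℤ) → ℤ) (B : ℤ)
    (hB : ∀ u, |c u| ≤ B) (K : ℕ) (hK2 : 2 ≤ K) (hK : (∑ v ∈ S, |f v|) * (2 * B) ≤ K)
    (j : ℕ) : PG (act d ℤ (dilF S f 1) c) ≤ PG (act d ℤ (dilF S f (1 + j * K.factorial)) c) := by
  intro w hw
  rw [mem_PG] at *
  rw [← act_mul, mul_comm, act_mul] at hw ⊢
  refine dil_zero S f _ (2 * B) (fun u => ?_) K hK2 hK hw _ ?_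
  · rw [act_dl, two_mul]
    exact (abs_sub _ _).trans (add_le_add (hB _) (hB _))
  · intro p hp hpd
    by_contra hlt
    have h1 : p ∣ K.factorial := hp.dvd_factorial.2 (not_lt.1 hlt)
    have h2 : p ∣ 1 := (Nat.dvd_add_left (h1.mul_left j)).1 hpd
    exact hp.one_lt.ne' (Nat.dvd_one.1 h2)

end Dilation
end PaperFormal

namespace PaperFormal

section Banach
open Filter Topology

/-- Bounded real sequences. -/
def bddSeq : Submodule ℝ (ℕ → ℝ) where
  carrier := {a | ∃ B : ℝ, ∀ n, |a n| ≤ B}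
  zero_mem' := ⟨0, fun n => by simp⟩
  add_mem' := by
    rintro a b ⟨A, hA⟩ ⟨B, hB⟩
    exact ⟨A + B, fun n => (abs_add_le _ _).trans (add_le_add (hA n) (hB n))⟩
  smul_mem' := by
    rintro t a ⟨A, hA⟩
    refine ⟨|t| * A, fun n => ?_⟩
    rw [Pi.smul_apply, smul_eq_mul, abs_mul]
    exact mul_le_mul_of_nonneg_left (hA n) (abs_nonneg _)

/-- Cesaro averages. -/
noncomputable def cesaro (a : ℕ → ℝ) (n : ℕ) : ℝ := (∑ i ∈ Finset.range n, a i) / n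

lemma cesaro_bdd (a : ℕ → ℝ) (B : ℝ) (h : ∀ n, |a n| ≤ B) (n : ℕ) : |cesaro a n| ≤ B := by
  have hB : 0 ≤ B := (abs_nonneg _).trans (h 0)
  rw [cesaro, abs_div, Nat.abs_cast]
  rcases Nat.eq_zero_or_pos n with rfl | hn
  · simpa using hB
  · rw [div_le_iff₀ (by exact_mod_cast hn)]
    refine (Finset.abs_sum_le_sum_abs _ _).trans ((Finset.sum_le_sum fun i _ => h i).trans ?_)
    simp [mul_comm]

lemma cesaro_lim (a : ℕ → ℝ) (B : ℝ) (h : ∀ n, |a n| ≤ B) :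
    ∃ x, |x| ≤ B ∧ Tendsto (cesaro a) (hyperfilter ℕ) (𝓝 x) := by
  obtain ⟨x, hx, hxl⟩ := (isCompact_Icc (a := -B) (b := B)).ultrafilter_le_nhds
    (Ultrafilter.map (cesaro a) (hyperfilter ℕ)) (by
      rw [le_principal_iff, Ultrafilter.coe_map, mem_map]
      exact univ_mem' fun n => abs_le.1 (cesaro_bdd a B h n))
  exact ⟨x, abs_le.2 hx, hxl⟩

/-- Existence of a Banach limit. -/
lemma exists_banach : ∃ L : (ℕ → ℝ) →ₗ[ℝ] ℝ,
    (∀ a B, (∀ n, |a n| ≤ B) → |L a| ≤ B) ∧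
    (∀ t : ℝ, L (fun _ => t) = t) ∧
    (∀ a B, (∀ n, |a n| ≤ B) → L (fun n => a (n + 1)) = L a) := by
  have ex : ∀ a : bddSeq, ∃ x, Tendsto (cesaro a.1) (hyperfilter ℕ) (𝓝 x) := by
    rintro ⟨a, B, hB⟩
    obtain ⟨x, -, hx⟩ := cesaro_lim a B hB
    exact ⟨x, hx⟩
  choose l hl using ex
  let L0 : bddSeq →ₗ[ℝ] ℝ :=
    { toFun := l
      map_add' := fun a b => by
        refine tendsto_nhds_unique (hl (a + b)) (((hl a).add (hl b)).congr fun n => ?_)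
        simp [cesaro, Finset.sum_add_distrib, add_div]
      map_smul' := fun t a => by
        refine tendsto_nhds_unique (hl (t • a)) (((hl a).const_mul t).congr fun n => ?_)
        simp [cesaro, ← Finset.mul_sum, mul_div_assoc] }
  obtain ⟨L, hL⟩ := LinearMap.exists_extend L0
  have hLl : ∀ a (ha : a ∈ bddSeq), Tendsto (cesaro a) (hyperfilter ℕ) (𝓝 (L a)) := by
    intro a ha
    have : L a = l ⟨a, ha⟩ := LinearMap.congr_fun hL ⟨a, ha⟩
    rw [this]; exact hl ⟨a, ha⟩
  have hle : (hyperfilter ℕ : Filter ℕ) ≤ atTop := Nat.hyperfilter_le_atTop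
  refine ⟨L, fun a B h => ?_, fun t => ?_, fun a B h => ?_⟩
  · obtain ⟨x, hxB, hx⟩ := cesaro_lim a B h
    rw [tendsto_nhds_unique (hLl a ⟨B, h⟩) hx]; exact hxB
  · refine tendsto_nhds_unique (hLl _ ⟨|t|, fun _ => le_rfl⟩) ?_
    refine Tendsto.mono_left ?_ hle
    refine tendsto_const_nhds.congr' ?_
    filter_upwards [eventually_gt_atTop 0] with n hn
    have : (n : ℝ) ≠ 0 := by positivity
    simp [cesaro]; field_simp
  · have h1 := hLl _ (⟨B, fun n => h (n + 1)⟩ : (fun n => a (n + 1)) ∈ bddSeq)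
    have h2 := hLl a ⟨B, h⟩
    have h3 : Tendsto (fun n : ℕ => (a n - a 0) / n) (hyperfilter ℕ) (𝓝 0) := by
      refine Tendsto.mono_left ?_ hle
      refine squeeze_zero_norm (a := fun n : ℕ => (B + B) / n) (fun n => ?_)
        (tendsto_const_div_atTop_nhds_zero_nat _)
      rw [Real.norm_eq_abs, abs_div, Nat.abs_cast]
      gcongr
      exact (abs_sub _ _).trans (add_le_add (h _) (h _))
    have h4 := h2.add h3
    rw [add_zero] at h4
    refine tendsto_nhds_unique h1 (h4.congr fun n => ?_)
    simp only [cesaro]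
    rw [← add_div]
    congr 1
    have e1 := Finset.sum_range_succ a n
    have e2 := Finset.sum_range_succ' a n
    linarith

end Banach
end PaperFormal

namespace PaperFormal
open AddMonoidAlgebra

section Averaging
variable {d k : ℕ}

lemma full_span_range {ι : Type*} [Fintype ι] {H : AddSubgroup (Fin d → ℤ)}
    (v : ι → Fin d → ℤ) (h : ∀ i, ∃ n : ℕ, 0 < n ∧ n • v i ∈ H) :
    Full H (Submodule.span ℚ (Set.range fun i => qv d (v i))) := by
  rw [Submodule.span_range_eq_iSup, ← Finset.sup_univ_eq_iSup]
  exact Finset.sup_induction (full_bot H) (fun a ha b hb => ha.sup hb)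
    fun i _ => full_span (h i)

lemma full_top_of_strongly {c : (Fin d → ℤ) → ℤ} (h : StronglyPeriodic c) : Full (PG c) ⊤ := by
  obtain ⟨v, hv, hp⟩ := h
  have h1 := full_span_range (H := PG c) v fun i => ⟨1, one_pos, by
    rw [one_smul, mem_PG']
    intro u
    have := hp i (u - v i)
    rw [sub_add_cancel] at this
    exact this.symm⟩
  have h2 : Submodule.span ℚ (Set.range fun i => qv d (v i)) = ⊤ :=
    hv.span_eq_top_of_card_eq_finrank' (by simp)
  rwa [h2] at h1

/-- Averaging along `v`. -/
noncomputable def avg (L : (ℕ → ℝ) →ₗ[ℝ] ℝ) (r : ℕ) (v : Fin d → ℤ) (φ : (Fin d → ℤ) → ℝ) :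
    (Fin d → ℤ) → ℝ := fun u => L fun j => φ (u - (1 + j * r) • v)

/-- The dilated polynomial applied to a real function. -/
noncomputable def fop (S : Finset (Fin d → ℤ)) (f : (Fin d → ℤ) → ℤ) (n : ℕ)
    (φ : (Fin d → ℤ) → ℝ) : (Fin d → ℤ) → ℝ := fun u => ∑ v ∈ S, (f v : ℝ) * φ (u - n • v)

/-- Bounded functions all of whose dilated products have the given periods. -/
def Good (S : Fin k → Finset (Fin d → ℤ)) (f : Fin k → (Fin d → ℤ) → ℤ)
    (H : Fin k → AddSubgroup (Fin d → ℤ)) (r : ℕ) (φ : (Fin d → ℤ) → ℝ) : Prop :=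
  (∃ B : ℝ, ∀ u, |φ u| ≤ B) ∧ ∀ i j, H i ≤ PG (fop (S i) (f i) (1 + j * r) φ)

variable {S : Fin k → Finset (Fin d → ℤ)} {f : Fin k → (Fin d → ℤ) → ℤ}
    {H : Fin k → AddSubgroup (Fin d → ℤ)} {r : ℕ} {φ : (Fin d → ℤ) → ℝ}

lemma PG_smul (t : ℝ) (φ : (Fin d → ℤ) → ℝ) : PG φ ≤ PG (t • φ) := by
  intro v hv
  rw [mem_PG'] at *
  intro u
  simp only [Pi.smul_apply, hv u]

lemma Good.smul (h : Good S f H r φ) (t : ℝ) : Good S f H r (t • φ) := by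
  obtain ⟨⟨B, hB⟩, h2⟩ := h
  refine ⟨⟨|t| * B, fun u => ?_⟩, fun i j => ?_⟩
  · rw [Pi.smul_apply, smul_eq_mul, abs_mul]
    exact mul_le_mul_of_nonneg_left (hB u) (abs_nonneg _)
  · have : fop (S i) (f i) (1 + j * r) (t • φ) = t • fop (S i) (f i) (1 + j * r) φ := by
      ext u
      simp only [fop, Pi.smul_apply, smul_eq_mul, Finset.mul_sum]
      exact Finset.sum_congr rfl fun v _ => by ring
    rw [this]
    exact (h2 i j).trans (PG_smul t _)

variable {L : (ℕ → ℝ) →ₗ[ℝ] ℝ}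

lemma avg_PG (v : Fin d → ℤ) : PG φ ≤ PG (avg L r v φ) := by
  intro w hw
  rw [mem_PG'] at *
  intro u
  simp only [avg]
  congr 1
  funext j
  rw [sub_right_comm, hw]

lemma avg_fop (T : Finset (Fin d → ℤ)) (g : (Fin d → ℤ) → ℤ) (n : ℕ) (v : Fin d → ℤ) :
    fop T g n (avg L r v φ) = avg L r v (fop T g n φ) := by
  ext u
  have : (fun j : ℕ => fop T g n φ (u - (1 + j * r) • v)) =
      ∑ w ∈ T, (g w : ℝ) • fun j : ℕ => φ (u - n • w - (1 + j * r) • v) := by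
    funext j
    simp only [fop, Finset.sum_apply, Pi.smul_apply, smul_eq_mul]
    exact Finset.sum_congr rfl fun w _ => by rw [sub_right_comm]
  rw [avg, this, map_sum]
  simp only [fop, map_smul, smul_eq_mul, avg]

lemma avg_good (hL1 : ∀ a B, (∀ n, |a n| ≤ B) → |L a| ≤ B) (h : Good S f H r φ)
    (v : Fin d → ℤ) : Good S f H r (avg L r v φ) := by
  obtain ⟨⟨B, hB⟩, h2⟩ := h
  refine ⟨⟨B, fun u => hL1 _ _ fun n => hB _⟩, fun i j => ?_⟩
  rw [avg_fop]
  exact (h2 i j).trans (avg_PG v)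

lemma avg_period (hL3 : ∀ a B, (∀ n, |a n| ≤ B) → L (fun n => a (n + 1)) = L a)
    (h : Good S f H r φ) (v : Fin d → ℤ) : r • v ∈ PG (avg L r v φ) := by
  obtain ⟨⟨B, hB⟩, -⟩ := h
  rw [mem_PG']
  intro u
  rw [avg, avg, ← hL3 (fun j => φ (u - (1 + j * r) • v)) B (fun n => hB _)]
  congr 1
  funext j
  congr 1
  rw [sub_sub, ← add_smul]
  congr 2
  ring

lemma avg_identity (hL2 : ∀ t : ℝ, L (fun _ => t) = t) (i : Fin k) (h0 : (0 : Fin d → ℤ) ∈ S i)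
    (hf0 : f i 0 ≠ 0) :
    φ = ((f i 0 : ℝ)⁻¹ • fun u => L fun j => fop (S i) (f i) (1 + j * r) φ u) -
      ∑ v ∈ (S i).erase 0, ((f i 0 : ℝ)⁻¹ * f i v) • avg L r v φ := by
  have hf : (f i 0 : ℝ) ≠ 0 := by exact_mod_cast hf0
  ext u
  have : (fun j : ℕ => fop (S i) (f i) (1 + j * r) φ u) =
      ∑ w ∈ S i, (f i w : ℝ) • fun j : ℕ => φ (u - (1 + j * r) • w) := by
    funext j
    simp only [fop, Finset.sum_apply, Pi.smul_apply, smul_eq_mul]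
  simp only [Pi.sub_apply, Pi.smul_apply, Finset.sum_apply, smul_eq_mul]
  rw [this, map_sum, ← Finset.add_sum_erase _ _ h0]
  simp only [map_smul, smul_eq_mul, smul_zero, sub_zero, hL2, avg]
  rw [mul_add, Finset.mul_sum, ← mul_assoc, inv_mul_cancel₀ hf, one_mul]
  simp only [mul_assoc]
  ring

lemma levels (hL1 : ∀ a B, (∀ n, |a n| ≤ B) → |L a| ≤ B) (hL2 : ∀ t : ℝ, L (fun _ => t) = t)
    (hL3 : ∀ a B, (∀ n, |a n| ≤ B) → L (fun n => a (n + 1)) = L a)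
    (hS : ∀ i v, v ∈ S i → f i v ≠ 0)
    (h0 : ∀ i, (0 : Fin d → ℤ) ∈ S i) (hH : ∀ i, Full (H i) ⊤) (hφ : Good S f H r φ)
    (m : ℕ) (hm : m ≤ k) :
    φ ∈ AddSubgroup.closure ({ψ | Good S f H r ψ ∧ ∃ v : Fin k → Fin d → ℤ, ∀ i : Fin k,
      i.val < m → v i ∈ S i ∧ v i ≠ 0 ∧ r • v i ∈ PG ψ} ∪ {ψ | Full (PG ψ) ⊤}) := by
  induction m with
  | zero => exact AddSubgroup.subset_closure (Or.inl ⟨hφ, 0, fun i hi => absurd hi (by omega)⟩)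
  | succ m ih =>
    refine (AddSubgroup.closure_le _).2 ?_ (ih (by omega))
    rintro ψ (⟨hψ, v, hv⟩ | hψ)
    swap
    · exact AddSubgroup.subset_closure (Or.inr hψ)
    let i : Fin k := ⟨m, by omega⟩
    rw [SetLike.mem_coe, avg_identity (φ := ψ) (r := r) hL2 i (h0 i) (hS i 0 (h0 i))]
    refine sub_mem (AddSubgroup.subset_closure (Or.inr ?_)) (sum_mem fun w hw => ?_)
    · refine (hH i).mono (le_trans ?_ (PG_smul _ _)) le_rfl
      intro w hw
      rw [mem_PG']
      intro u
      congr 1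
      funext j
      exact mem_PG'.1 (hψ.2 i j hw) u
    · rw [Finset.mem_erase] at hw
      refine AddSubgroup.subset_closure (Or.inl ⟨(avg_good hL1 hψ w).smul _,
        Function.update v i w, fun i' hi' => ?_⟩)
      by_cases hii : i' = i
      · subst hii
        rw [Function.update_self]
        exact ⟨hw.2, hw.1, PG_smul _ _ (avg_period hL3 hψ w)⟩
      · rw [Function.update_of_ne hii]
        obtain ⟨a1, a2, a3⟩ := hv i' (by
          have : i'.val ≠ m := fun h => hii (Fin.ext h)
          omega)
        exact ⟨a1, a2, PG_smul _ _ (avg_PG w a3)⟩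

lemma exists_finrank (hkd : k ≤ d) : ∃ V : Submodule ℚ (Fin d → ℚ), Module.finrank ℚ V = k := by
  have h := (Pi.basisFun ℚ (Fin d)).linearIndependent.comp _ (Fin.castLE_injective hkd)
  exact ⟨_, by simpa using finrank_span_eq_card h⟩

/-- The real decomposition. -/
lemma real_main (hkd : k ≤ d)
    (c : (Fin d → ℤ) → ℤ) (hconf : (Set.range c).Finite)
    (f : Fin k → ((Fin d → ℤ) → ℤ))
    (hpoly : ∀ i, IsPoly (f i))
    (hper : ∀ i, StronglyPeriodic (polyApply (f i) c))
    (h0 : ∀ i, (0 : Fin d → ℤ) ∈ Function.support (f i))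
    (hind : ∀ v : Fin k → (Fin d → ℤ),
      (∀ i, v i ∈ Function.support (f i) ∧ v i ≠ 0) →
        LinearIndependent ℚ fun i => intVecQ (v i)) :
    toR d c ∈ CS ℝ (fun X W => X = W ∧ Module.finrank ℚ W = k) := by
  classical
  obtain ⟨L, hL1, hL2, hL3⟩ := exists_banach
  have hB : ∃ B : ℤ, ∀ u, |c u| ≤ B := by
    obtain ⟨B, hB⟩ := (hconf.image (fun x => |x|)).bddAbove
    exact ⟨B, fun u => hB ⟨c u, ⟨u, rfl⟩, rfl⟩⟩
  obtain ⟨B, hB⟩ := hB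
  have hfinS : ∀ i, (Function.support (f i)).Finite := hpoly
  have hmem : ∀ i v, v ∈ (hfinS i).toFinset ↔ f i v ≠ 0 := fun i v => by
    rw [Set.Finite.mem_toFinset, Function.mem_support]
  let S : Fin k → Finset (Fin d → ℤ) := fun i => (hfinS i).toFinset
  let K : ℕ := 2 + ∑ i, ((∑ v ∈ S i, |f i v|) * (2 * B)).toNat
  have hK : ∀ i, (∑ v ∈ S i, |f i v|) * (2 * B) ≤ K := fun i => by
    refine (Int.self_le_toNat _).trans ?_
    have := Finset.single_le_sum (f := fun i => ((∑ v ∈ S i, |f i v|) * (2 * B)).toNat)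
      (fun _ _ => Nat.zero_le _) (Finset.mem_univ i)
    have h2 : ((∑ v ∈ S i, |f i v|) * (2 * B)).toNat ≤ K := le_trans this (by omega)
    exact_mod_cast h2
  have hpa : ∀ i, polyApply (f i) c = act d ℤ (dilF (S i) (f i) 1) c := fun i => by
    ext u
    rw [act_dilF, polyApply, finsum_eq_sum_of_support_subset (s := S i)]
    · simp
    · intro v hv
      rw [Finset.mem_coe, hmem]
      intro h
      apply hv
      simp [h]
  let H : Fin k → AddSubgroup (Fin d → ℤ) := fun i => PG (act d ℤ (dilF (S i) (f i) 1) c)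
  have hH : ∀ i, Full (H i) ⊤ := fun i => by
    have := full_top_of_strongly (hper i)
    rwa [hpa i] at this
  have hgood : Good S f H K.factorial (toR d c) := by
    refine ⟨⟨B, fun u => ?_⟩, fun i j w hw => ?_⟩
    · rw [toR_apply]; exact_mod_cast hB u
    · have h1 := dil_period (S i) (f i) c B hB K (by omega) (hK i) j hw
      rw [mem_PG'] at *
      intro u
      have h2 := h1 u
      rw [act_dilF, act_dilF] at h2
      simp only [fop, toR_apply]
      exact_mod_cast h2
  have hlev := levels hL1 hL2 hL3 (fun i v hv => (hmem i v).1 hv)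
    (fun i => (hmem i 0).2 (h0 i)) hH hgood k le_rfl
  refine (AddSubgroup.closure_le _).2 ?_ hlev
  have hfin : ∀ (V : Submodule ℚ (Fin d → ℚ)) (ψ : (Fin d → ℤ) → ℝ),
      Module.finrank ℚ V = k → Full (PG ψ) V →
      ψ ∈ CS ℝ (fun X W => X = W ∧ Module.finrank ℚ W = k) := fun V ψ hV hψ =>
    Cl_le_CS (P := fun X W => X = W ∧ Module.finrank ℚ W = k) ⟨rfl, hV⟩
      ⟨hψ, hψ.mono (PG_le_UG _) le_rfl⟩
  rintro ψ (⟨-, v, hv⟩ | hψ)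
  · have hli := hind v fun i => ⟨(hmem i _).1 (hv i i.2).1, (hv i i.2).2.1⟩
    refine hfin (Submodule.span ℚ (Set.range fun i => qv d (v i))) ψ ?_ ?_
    · exact (finrank_span_eq_card hli).trans (Fintype.card_fin k)
    · exact full_span_range v fun i => ⟨_, K.factorial_pos, (hv i i.2).2.2⟩
  · obtain ⟨V, hV⟩ := exists_finrank hkd
    exact hfin V ψ hV (Full.mono hψ le_rfl le_top)

end Averaging
end PaperFormal

namespace PaperFormal

/-- If a configuration `c` has `k` independent periodizers `f₁, …, f_k`
(each with `0` in its support), then `c` is a finite sum of `k`-periodic functions. -/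
theorem independent_periodizers_give_k_periodic_decomposition
    {d k : ℕ} (hk1 : 1 ≤ k) (hkd : k ≤ d)
    (c : (Fin d → ℤ) → ℤ) (hconf : (Set.range c).Finite)
    (f : Fin k → ((Fin d → ℤ) → ℤ))
    (hpoly : ∀ i, IsPoly (f i))
    (hper : ∀ i, StronglyPeriodic (polyApply (f i) c))
    (h0 : ∀ i, (0 : Fin d → ℤ) ∈ Function.support (f i))
    (hind : ∀ v : Fin k → (Fin d → ℤ),
      (∀ i, v i ∈ Function.support (f i) ∧ v i ≠ 0) →
        LinearIndependent ℚ fun i => intVecQ (v i)) :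
    ∃ (m : ℕ) (cs : Fin m → ((Fin d → ℤ) → ℤ)),
      (∀ i, KPeriodic k (cs i)) ∧ c = ∑ i, cs i := by
  exact final_sum k c (int_main k c (real_main hkd c hconf f hpoly hper h0 hind))

end PaperFormal
end

section
/- Let 1 ≤ k ≤ d and let D_1, …, D_k ⊆ ℤ^d be tiles, each containing 0, which are independent, i.e., for every choice of nonzero vectors v_i ∈ D_i (i = 1,…,k) the vectors v_1, …, v_k are linearly independent over ℚ. If c : ℤ^d → {0,1} is a common co-tiler of D_1, …, D_k, then c = c_1 + … + c_m for finitely many k-periodic functions c_1, …, c_m : ℤ^d → ℤ. -/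
namespace CT
open Finset

/-- Frobenius step of the dilation lemma. -/
theorem dilate_prime {G : Type*} [AddCommGroup G] (D : Finset G) (c : G → ℤ)
    (h01 : ∀ u, c u = 0 ∨ c u = 1) (r p : ℕ) (hp : p.Prime) (hDp : D.card < p)
    (h : ∀ x, ∑ u ∈ D, c (x + r • u) = 1) (x : G) :
    ∑ u ∈ D, c (x + (p * r) • u) = 1 := by
  classical
  have : Fact p.Prime := ⟨hp⟩
  -- the functional
  let L : AddMonoidAlgebra (ZMod p) G →+ ZMod p :=
    Finsupp.liftAddHom (fun g => AddMonoidHom.mulRight ((c g : ℤ) : ZMod p)) |>.comp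
      (AddMonoidAlgebra.coeffAddEquiv.toAddMonoidHom)
  have hL : ∀ g a, L (AddMonoidAlgebra.single g a) = a * (c g : ZMod p) := by
    intro g a; simp [L]
  let P : AddMonoidAlgebra (ZMod p) G := ∑ u ∈ D, AddMonoidAlgebra.single (r • u) 1
  let aug : AddMonoidAlgebra (ZMod p) G →ₐ[ZMod p] ZMod p :=
    AddMonoidAlgebra.lift (ZMod p) (ZMod p) G 1
  have haug : ∀ g a, aug (AddMonoidAlgebra.single g a) = a := by
    intro g a; simp [aug]
  have key : ∀ Q : AddMonoidAlgebra (ZMod p) G, L (Q * P) = aug Q := by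
    intro Q
    induction Q using AddMonoidAlgebra.induction_linear with
    | zero => simp
    | add f g hf hg => rw [add_mul, map_add, map_add, hf, hg]
    | single g a =>
      rw [haug]
      simp only [P, mul_sum, AddMonoidAlgebra.single_mul_single, map_sum, hL, mul_one]
      rw [← mul_sum, ← Int.cast_sum, h g]; simp
  have hPp : P ^ p = ∑ u ∈ D, AddMonoidAlgebra.single ((p * r) • u) 1 := by
    have : CharP (AddMonoidAlgebra (ZMod p) G) p :=
      charP_of_injective_algebraMap (algebraMap (ZMod p) _).injective p
    simp only [P]
    rw [sum_pow_char]
    refine sum_congr rfl fun u _ => ?_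
    rw [AddMonoidAlgebra.single_pow, one_pow, mul_smul]
  have haP : aug P = (D.card : ZMod p) := by
    simp [P, map_sum, haug]
  obtain ⟨n, rfl⟩ : ∃ n, p = n + 1 := ⟨p - 1, (Nat.succ_pred hp.ne_zero).symm⟩
  have h1 : L (AddMonoidAlgebra.single x 1 * P ^ (n+1)) = (D.card : ZMod (n+1)) ^ n := by
    rw [pow_succ, ← mul_assoc, key, map_mul, haug, map_pow, haP, one_mul]
  have hDne : (D.card : ZMod (n+1)) ≠ 0 := by
    rw [Ne, ZMod.natCast_eq_zero_iff]
    intro hd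
    have := Nat.eq_zero_of_dvd_of_lt hd hDp
    have h0 := h 0
    rw [Finset.card_eq_zero] at this
    simp [this] at h0
  have h2 : (D.card : ZMod (n+1)) ^ n = 1 := by
    simpa using ZMod.pow_card_sub_one_eq_one hDne
  rw [hPp, h2, mul_sum, map_sum] at h1
  simp only [AddMonoidAlgebra.single_mul_single, hL, mul_one, one_mul] at h1
  rw [← Int.cast_sum] at h1
  have hlo : 0 ≤ ∑ u ∈ D, c (x + ((n+1) * r) • u) :=
    sum_nonneg fun u _ => by rcases h01 (x + ((n+1) * r) • u) with h | h <;> rw [h] <;> norm_num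
  have hhi : ∑ u ∈ D, c (x + ((n+1) * r) • u) ≤ D.card := by
    have := sum_le_card_nsmul D (fun u => c (x + ((n+1) * r) • u)) 1
      (fun u _ => by rcases h01 (x + ((n+1) * r) • u) with h | h <;> simp [h])
    simpa using this
  have h3 : ((∑ u ∈ D, c (x + ((n+1) * r) • u) : ℤ) : ZMod (n+1)) = ((1 : ℤ) : ZMod (n+1)) := by
    rw [h1]; simp
  rw [ZMod.intCast_eq_intCast_iff] at h3
  have := hp.two_le
  have h4 := Int.ModEq.eq h3
  rwa [Int.emod_eq_of_lt hlo (by omega), Int.emod_eq_of_lt (by omega) (by push_cast; omega)] at h4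

theorem dilate {G : Type*} [AddCommGroup G] (D : Finset G) (c : G → ℤ)
    (h01 : ∀ u, c u = 0 ∨ c u = 1)
    (h : ∀ x, ∑ u ∈ D, c (x + u) = 1) (r : ℕ) (hr : r ≠ 0)
    (hp : ∀ p : ℕ, p.Prime → p ∣ r → D.card < p) :
    ∀ x, ∑ u ∈ D, c (x + r • u) = 1 := by
  induction r using induction_on_primes with
  | zero => exact absurd rfl hr
  | one => simpa using h
  | prime_mul p a hpp ih =>
    have ha : a ≠ 0 := by rintro rfl; simp at hr
    have := ih ha (fun q hq hqa => hp q hq (hqa.mul_left p))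
    exact fun x => dilate_prime D c h01 a p hpp (hp p hpp (dvd_mul_right _ _)) this x

theorem dilate_factorial {G : Type*} [AddCommGroup G] (D : Finset G) (c : G → ℤ)
    (h01 : ∀ u, c u = 0 ∨ c u = 1)
    (h : ∀ x, ∑ u ∈ D, c (x + u) = 1) (M : ℕ) (hM : D.card ≤ M) (n : ℕ) :
    ∀ x, ∑ u ∈ D, c (x + (1 + n * M.factorial) • u) = 1 := by
  refine dilate D c h01 h _ (by omega) fun p hp hpd => ?_
  by_contra hlt
  have h1 : p ∣ n * M.factorial := (hp.dvd_factorial.mpr (by omega)).mul_left n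
  have := (Nat.dvd_add_left h1).mp hpd
  exact hp.one_lt.ne' (Nat.dvd_one.mp this)
end CT

namespace CT
open Finset Filter Topology

/-- A Banach limit (linear on bounded sequences). -/
theorem exists_banach_limit : ∃ L : (ℕ → ℝ) → ℝ, (∀ c : ℝ, L (fun _ => c) = c) ∧
    (∀ a b : ℕ → ℝ, (∃ B, ∀ n, |a n| ≤ B) → (∃ B, ∀ n, |b n| ≤ B) →
      L (fun n => a n + b n) = L a + L b) ∧
    (∀ (a : ℕ → ℝ) (B : ℝ), (∀ n, |a n| ≤ B) → |L a| ≤ B) ∧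
    (∀ a : ℕ → ℝ, (∃ B, ∀ n, |a n| ≤ B) → L (fun n => a (n+1)) = L a) := by
  let U : Ultrafilter ℕ := hyperfilter ℕ
  have hU : (U : Filter ℕ) ≤ atTop := by
    simpa [U, Nat.cofinite_eq_atTop] using (hyperfilter_le_cofinite (α := ℕ))
  let m : (ℕ → ℝ) → ℕ → ℝ := fun a N => (∑ n ∈ range (N+1), a n) / ((N : ℝ) + 1)
  have hm : ∀ (a : ℕ → ℝ) (B : ℝ), (∀ n, |a n| ≤ B) → ∀ N, |m a N| ≤ B := by
    intro a B hB N
    simp only [m]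
    have hpos : (0:ℝ) < (N:ℝ) + 1 := by positivity
    rw [abs_div, abs_of_pos hpos, div_le_iff₀ hpos]
    calc |∑ n ∈ range (N+1), a n| ≤ ∑ n ∈ range (N+1), |a n| := abs_sum_le_sum_abs _ _
      _ ≤ ∑ n ∈ range (N+1), B := sum_le_sum fun n _ => hB n
      _ = B * ((N:ℝ)+1) := by simp; ring
  let L : (ℕ → ℝ) → ℝ := fun a => limUnder (U : Filter ℕ) (m a)
  have hlim : ∀ a : ℕ → ℝ, (∃ B, ∀ n, |a n| ≤ B) → Tendsto (m a) U (𝓝 (L a)) := by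
    rintro a ⟨B, hB⟩
    have hc : IsCompact (Set.Icc (-B) B) := isCompact_Icc
    obtain ⟨l, -, hl⟩ := hc.ultrafilter_le_nhds (U.map (m a)) (by
      rw [Ultrafilter.coe_map]
      exact tendsto_principal.mpr (Eventually.of_forall fun N => abs_le.mp (hm a B hB N)))
    exact tendsto_nhds_limUnder ⟨l, hl⟩
  refine ⟨L, ?_, ?_, ?_, ?_⟩
  · intro c
    have h1 := hlim (fun _ => c) ⟨|c|, fun _ => le_rfl⟩
    have : m (fun _ => c) = fun _ => c := by
      funext N; simp only [m]; simp; field_simp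
    rw [this] at h1
    exact tendsto_nhds_unique h1 tendsto_const_nhds
  · intro a b ha hb
    have hab : ∃ B, ∀ n, |a n + b n| ≤ B := by
      obtain ⟨A, hA⟩ := ha
      obtain ⟨B, hB⟩ := hb
      exact ⟨A + B, fun n => (abs_add_le _ _).trans (add_le_add (hA n) (hB n))⟩
    have h := (hlim a ha).add (hlim b hb)
    refine tendsto_nhds_unique (hlim _ hab) (h.congr fun N => ?_)
    simp only [m, sum_add_distrib, add_div]
  · intro a B hB
    have h := (hlim a ⟨B, hB⟩).abs
    exact le_of_tendsto h (Eventually.of_forall fun N => hm a B hB N)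
  · intro a ha
    obtain ⟨B, hB⟩ := ha
    have h1 := hlim (fun n => a (n+1)) ⟨B, fun n => hB _⟩
    have h2 := hlim a ⟨B, hB⟩
    have h3 : Tendsto (fun N : ℕ => m (fun n => a (n+1)) N - m a N) U (𝓝 0) := by
      refine Tendsto.mono_left ?_ hU
      have hb : ∀ N : ℕ, |m (fun n => a (n+1)) N - m a N| ≤ (2 * B) * (1 / ((N:ℝ)+1)) := by
        intro N
        have hpos : (0:ℝ) < (N:ℝ) + 1 := by positivity
        have : m (fun n => a (n+1)) N - m a N = (a (N+1) - a 0) / ((N:ℝ)+1) := by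
          simp only [m]
          rw [← sub_div, ← sum_sub_distrib, sum_range_sub]
        rw [this, abs_div, abs_of_pos hpos, mul_one_div]
        gcongr
        have h5 := hB (N+1)
        have h6 := hB 0
        have := abs_le.mp h5
        have := abs_le.mp h6
        rw [abs_le]; constructor <;> linarith
      refine squeeze_zero_norm hb ?_
      simpa using (tendsto_one_div_add_atTop_nhds_zero_nat (𝕜 := ℝ)).const_mul (2*B)
    have h4 := tendsto_nhds_unique h3 (h1.sub h2)
    linarith


/-- Bounded functions with average-one sums along all dilates of the tiles. -/
def Tiled {G : Type*} [AddCommGroup G] {k : ℕ} (D : Fin k → Finset G) (q : ℕ) (f : G → ℝ) : Prop :=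
  (∃ B, ∀ x, |f x| ≤ B) ∧ ∀ i n x, ∑ u ∈ D i, f (x + (1 + n * q) • u) = 1

theorem limit_sum {L : (ℕ → ℝ) → ℝ} (h0 : ∀ c : ℝ, L (fun _ => c) = c)
    (hadd : ∀ a b : ℕ → ℝ, (∃ B, ∀ n, |a n| ≤ B) → (∃ B, ∀ n, |b n| ≤ B) →
      L (fun n => a n + b n) = L a + L b)
    {ι : Type*} (s : Finset ι) (a : ι → ℕ → ℝ) (B : ℝ) (hB : ∀ i n, |a i n| ≤ B) :
    L (fun n => ∑ i ∈ s, a i n) = ∑ i ∈ s, L (a i) := by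
  classical
  induction s using Finset.induction_on with
  | empty => simpa using h0 0
  | insert i s hi ih =>
    simp only [sum_insert hi]
    rw [hadd, ih]
    · exact ⟨B, hB i⟩
    · refine ⟨s.card * B, fun n => (abs_sum_le_sum_abs _ _).trans ?_⟩
      calc ∑ i ∈ s, |a i n| ≤ ∑ i ∈ s, B := sum_le_sum fun j _ => hB j n
        _ = s.card * B := by simp

theorem real_decomposition {G : Type*} [AddCommGroup G] {k : ℕ} (D : Fin k → Finset G)
    (hD0 : ∀ i, (0 : G) ∈ D i) (q : ℕ) (Kp : (G → ℝ) → Prop)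
    (hconst : Kp (fun _ => 1))
    (hK : ∀ f : G → ℝ, (∃ v : Fin k → G, ∀ i, v i ∈ D i ∧ v i ≠ 0 ∧ ∀ x, f (x + q • v i) = f x) →
      Kp f) (f : G → ℝ) (hf : Tiled D q f) : f ∈ AddSubgroup.closure {g | Kp g} := by
  classical
  obtain ⟨L, h0, hadd, hbd, hsh⟩ := exists_banach_limit
  let avg : G → (G → ℝ) → G → ℝ := fun v f x => L (fun n => f (x + (1 + n * q) • v))
  have hT : ∀ v f, Tiled D q f → Tiled D q (avg v f) := by
    rintro v f ⟨⟨B, hB⟩, hf⟩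
    refine ⟨⟨B, fun x => hbd _ _ fun n => hB _⟩, fun i n x => ?_⟩
    simp only [avg]
    rw [← limit_sum h0 hadd _ _ B (fun i n => hB _)]
    rw [← h0 1]
    congr 1
    funext n'
    rw [← hf i n (x + (1 + n' * q) • v)]
    refine sum_congr rfl fun u _ => ?_
    congr 1; abel
  have hper : ∀ v f w, (∀ x, f (x + w) = f x) → ∀ x, avg v f (x + w) = avg v f x := by
    intro v f w hw x
    simp only [avg]
    congr 1
    funext n
    rw [← hw (x + _)]; congr 1; abel
  have hself : ∀ v f, Tiled D q f → ∀ x, avg v f (x + q • v) = avg v f x := by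
    rintro v f ⟨⟨B, hB⟩, hf⟩ x
    simp only [avg]
    rw [← hsh (fun n => f (x + (1 + n * q) • v)) ⟨B, fun n => hB _⟩]
    congr 1
    funext n
    congr 1
    rw [add_assoc, ← add_smul]; congr 2; ring
  have hdec : ∀ i f, Tiled D q f → f = (fun _ => 1) - ∑ v ∈ (D i).erase 0, avg v f := by
    rintro i f ⟨⟨B, hB⟩, hf⟩
    funext x
    simp only [Pi.sub_apply, Finset.sum_apply, avg]
    rw [← limit_sum h0 hadd _ _ B (fun i n => hB _)]
    have : (fun n => ∑ v ∈ (D i).erase 0, f (x + (1 + n * q) • v)) = fun _ => 1 - f x := by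
      funext n
      rw [← hf i n x, ← Finset.sum_erase_add _ _ (hD0 i)]
      simp
    rw [this, h0]; ring
  have main : ∀ j ≤ k, ∀ f, Tiled D q f → (∃ v : Fin k → G, ∀ i : Fin k, i.val < k - j →
      v i ∈ D i ∧ v i ≠ 0 ∧ ∀ x, f (x + q • v i) = f x) →
      f ∈ AddSubgroup.closure {g | Kp g} := by
    intro j
    induction j with
    | zero =>
      rintro - f hf ⟨v, hv⟩
      exact AddSubgroup.subset_closure (hK f ⟨v, fun i => hv i (by omega)⟩)
    | succ j ih =>
      rintro hj f hf ⟨v, hv⟩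
      let i0 : Fin k := ⟨k - (j+1), by omega⟩
      rw [hdec i0 f hf]
      refine sub_mem (AddSubgroup.subset_closure hconst) (sum_mem fun w hw => ?_)
      refine ih (by omega) _ (hT w f hf) ⟨Function.update v i0 w, fun i hi => ?_⟩
      by_cases hii : i = i0
      · subst hii
        rw [Function.update_self]
        exact ⟨Finset.mem_of_mem_erase hw, Finset.ne_of_mem_erase hw, hself w f hf⟩
      · rw [Function.update_of_ne hii]
        have : i.val < k - (j+1) := by
          have : i.val ≠ k - (j+1) := fun h => hii (Fin.ext h)
          omega
        obtain ⟨h1, h2, h3⟩ := hv i this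
        exact ⟨h1, h2, hper w f _ h3⟩
  exact main k le_rfl f hf ⟨0, fun i hi => by omega⟩
end CT

namespace CT
open Finset

/-- The circle `ℚ/ℤ`. -/
abbrev QZ : Type := AddCircle (1 : ℚ)

/-- Additive extension of a function on a group to its integral group ring. -/
noncomputable def hat {G T : Type*} [AddCommGroup G] [AddCommGroup T] (g : G → T) :
    AddMonoidAlgebra ℤ G →+ T :=
  (Finsupp.liftAddHom (fun x => (zmultiplesHom T (g x)))).comp
      (AddMonoidAlgebra.coeffAddEquiv.toAddMonoidHom)

theorem hat_single {G T : Type*} [AddCommGroup G] [AddCommGroup T] (g : G → T) (x : G) (m : ℤ) :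
    hat g (AddMonoidAlgebra.single x m) = m • g x := by
  simp [hat]

theorem hat_unique {G T : Type*} [AddCommGroup G] [AddCommGroup T] (g : G → T)
    (F : AddMonoidAlgebra ℤ G →+ T) (h : ∀ x, F (AddMonoidAlgebra.single x 1) = g x)
    (z : AddMonoidAlgebra ℤ G) : F z = hat g z := by
  induction z using AddMonoidAlgebra.induction_linear with
  | zero => simp
  | add f g hf hg => rw [map_add, map_add, hf, hg]
  | single x m =>
    rw [hat_single, ← h, ← map_zsmul]
    congr 1
    simp

/-- The ideal of the group ring generated by `X^u - 1`, `u ∈ L`. -/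
noncomputable def Idl {G : Type*} [AddCommGroup G] (L : AddSubgroup G) : Ideal (AddMonoidAlgebra ℤ G) :=
  Ideal.span {z | ∃ u ∈ L, z = AddMonoidAlgebra.single u 1 - 1}

theorem sub_mem_Idl {G : Type*} [AddCommGroup G] (L : AddSubgroup G) {u : G} (hu : u ∈ L) (x : G) :
    AddMonoidAlgebra.single (x + u) (1 : ℤ) - AddMonoidAlgebra.single x 1 ∈ Idl L := by
  have : AddMonoidAlgebra.single (x + u) (1 : ℤ) - AddMonoidAlgebra.single x 1 =
      AddMonoidAlgebra.single x 1 * (AddMonoidAlgebra.single u 1 - 1) := by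
    rw [mul_sub, AddMonoidAlgebra.single_mul_single, mul_one, mul_one]
  rw [this]
  exact Ideal.mul_mem_left _ _ (Ideal.subset_span ⟨u, hu, rfl⟩)

/-- an additive map kills `Idl L` if it is periodic. -/
theorem kills_Idl {G T : Type*} [AddCommGroup G] [AddCommGroup T] (L : AddSubgroup G)
    (g : G → T) (h : ∀ u ∈ L, ∀ x, g (x + u) = g x) (z : AddMonoidAlgebra ℤ G) (hz : z ∈ Idl L) :
    hat g z = 0 := by
  have key : ∀ u ∈ L, ∀ r, hat g (r * (AddMonoidAlgebra.single u 1 - 1)) = 0 := by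
    intro u hu r
    induction r using AddMonoidAlgebra.induction_linear with
    | zero => simp
    | add a b ha hb => rw [add_mul, map_add, ha, hb, add_zero]
    | single x m =>
      rw [mul_sub, AddMonoidAlgebra.single_mul_single, mul_one, mul_one, map_sub, hat_single,
        hat_single, h u hu, sub_self]
  have h2 : ∀ r, hat g (r * z) = 0 := by
    unfold Idl Ideal.span at hz
    induction hz using Submodule.span_induction with
    | mem x hx => obtain ⟨u, hu, rfl⟩ := hx; exact key u hu
    | zero => simp
    | add x y _ _ hx hy => intro r; rw [mul_add, map_add, hx, hy, add_zero]
    | smul a x _ hx => intro r; rw [smul_eq_mul, ← mul_assoc]; exact hx _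
  simpa using h2 1

theorem finite_quot {G : Type*} [AddCommGroup G] [AddMonoid.FG G] (n : ℕ) :
    Module.Finite ℤ (AddMonoidAlgebra ℤ G ⧸ (Idl (⊤ : AddSubgroup G)) ^ n) := by
  have : Algebra.FiniteType ℤ (AddMonoidAlgebra ℤ G) :=
    AddMonoidAlgebra.finiteType_of_fg _ _
  have : Algebra.FiniteType ℤ (AddMonoidAlgebra ℤ G ⧸ (Idl (⊤ : AddSubgroup G)) ^ n) :=
    inferInstance
  have : Algebra.IsIntegral ℤ (AddMonoidAlgebra ℤ G ⧸ (Idl (⊤ : AddSubgroup G)) ^ n) := by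
    constructor
    intro z
    obtain ⟨z, rfl⟩ := Ideal.Quotient.mk_surjective z
    induction z using AddMonoidAlgebra.induction_linear with
    | zero => rw [map_zero]; exact isIntegral_zero
    | add a b ha hb => rw [map_add]; exact ha.add hb
    | single x m =>
      have : AddMonoidAlgebra.single x m = m • ((AddMonoidAlgebra.single x 1 - 1) + 1) := by
        simp
      rw [this, map_zsmul, map_add, map_one]
      refine IsIntegral.smul m (IsIntegral.add ?_ isIntegral_one)
      refine IsIntegral.of_pow (Nat.succ_pos n) ?_
      rw [← map_pow]
      have : (AddMonoidAlgebra.single x (1 : ℤ) - 1) ^ (n + 1) ∈ Idl (⊤ : AddSubgroup G) ^ n := by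
        refine Ideal.pow_le_pow_right (Nat.le_succ n) (Ideal.pow_mem_pow ?_ _)
        exact Ideal.subset_span ⟨x, AddSubgroup.mem_top _, rfl⟩
      rw [Ideal.Quotient.eq_zero_iff_mem.mpr this]
      exact isIntegral_zero
  exact Algebra.IsIntegral.finite

theorem pow_sub_one_mem {R : Type*} [CommRing R] (I : Ideal R) (X : R) (hX : X - 1 ∈ I) (e n : ℕ) :
    ∃ b : R, X ^ (e ^ n) - 1 - e * b ∈ I ^ n := by
  induction n with
  | zero => exact ⟨0, by simp⟩
  | succ n ih =>
    obtain ⟨b, hb⟩ := ih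
    set Y := X ^ (e ^ n) with hY
    have h1 : Y - 1 ∈ I := by
      obtain ⟨c, hc⟩ := sub_one_dvd_pow_sub_one X (e ^ n)
      rw [hY, hc]; exact Ideal.mul_mem_right _ _ hX
    have h2 : Y ^ e - 1 = (Y - 1) * ∑ i ∈ range e, Y ^ i := (mul_geom_sum Y e).symm
    have h3 : (∑ i ∈ range e, Y ^ i) - e ∈ I := by
      have : (∑ i ∈ range e, Y ^ i) - (e : R) = ∑ i ∈ range e, (Y ^ i - 1) := by
        simp [sum_sub_distrib]
      rw [this]
      refine sum_mem fun i _ => ?_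
      obtain ⟨c, hc⟩ := sub_one_dvd_pow_sub_one Y i
      rw [hc]; exact Ideal.mul_mem_right _ _ h1
    set S := ∑ i ∈ range e, Y ^ i
    refine ⟨b * (S - e) + (Y - 1), ?_⟩
    have : X ^ (e ^ (n + 1)) - 1 - e * (b * (S - e) + (Y - 1)) = (Y - 1 - e * b) * (S - e) := by
      rw [pow_succ, pow_mul, ← hY, h2]; ring
    rw [this, pow_succ]
    exact Ideal.mul_mem_mul hb h3

theorem QZ_mk_surj : ∃ σ : QZ → ℚ, ∀ t, ((σ t : ℚ) : QZ) = t :=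
  ⟨Quotient.out, fun t => Quotient.out_eq t⟩

/-- Lift of a vanishing sum of `QZ`-valued functions. -/
theorem lift_zero_sum {ι H : Type*} [Fintype ι] [AddCommGroup H] (τ : ι → H → QZ) (N : ℕ)
    (hper : ∀ a u x, τ a (x + N • u) = τ a x) (hsum : ∀ x, ∑ a, τ a x = 0) :
    ∃ φ : ι → H → ℚ, (∀ a u x, φ a (x + N • u) = φ a x) ∧ (∀ x, ∑ a, φ a x = 0) ∧
      ∀ a x, ((φ a x : ℚ) : QZ) = τ a x := by
  classical
  obtain ⟨σ, hσ⟩ := QZ_mk_surj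
  rcases isEmpty_or_nonempty ι with h | ⟨⟨a0⟩⟩
  · exact ⟨0, by simp, by simp, fun a => h.elim a⟩
  refine ⟨fun a x => if a = a0 then - ∑ b ∈ univ.erase a0, σ (τ b x) else σ (τ a x), ?_, ?_, ?_⟩
  · intro a u x
    simp only [hper]
  · intro x
    rw [← Finset.add_sum_erase _ _ (mem_univ a0)]
    simp only [if_true]
    have h3 : ∀ b ∈ univ.erase a0, (if b = a0 then - ∑ b ∈ univ.erase a0, σ (τ b x)
        else σ (τ b x)) = σ (τ b x) := fun b hb => by rw [if_neg (Finset.ne_of_mem_erase hb)]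
    rw [Finset.sum_congr rfl h3]
    ring
  · intro a x
    dsimp only
    split_ifs with h
    · subst h
      have := hsum x
      rw [← Finset.add_sum_erase _ _ (mem_univ a)] at this
      rw [eq_neg_of_add_eq_zero_left this]
      have h2 : ((- ∑ b ∈ univ.erase a, σ (τ b x) : ℚ) : QZ) =
        - ∑ b ∈ univ.erase a, ((σ (τ b x) : ℚ) : QZ) := by
        rw [AddCircle.coe_neg]
        congr 1
        exact map_sum (QuotientAddGroup.mk' (AddSubgroup.zmultiples (1:ℚ))) _ _
      rw [h2]
      simp only [hσ]
    · exact hσ _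

theorem split_character (F : Type*) [AddCommGroup F] [Module.Finite ℤ F] :
    ∃ e : ℕ, e ≠ 0 ∧ ∀ g : F →+ QZ, ∃ ψ : F →+ ℚ, ∀ x, e • (g x - ((ψ x : ℚ) : QZ)) = 0 := by
  have htor : Module.IsTorsion ℤ (Submodule.torsion ℤ F) := Submodule.torsion_isTorsion
  obtain ⟨e, he1, he2⟩ := Submodule.annihilator_top_inter_nonZeroDivisors htor
  have he0 : e ≠ 0 := nonZeroDivisors.ne_zero he2
  refine ⟨e.natAbs, by simpa using he0, fun g => ?_⟩
  obtain ⟨s, hs⟩ := Module.projective_lifting_property (Submodule.torsion ℤ F).mkQ LinearMap.id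
    (Submodule.mkQ_surjective _)
  let mkT : ℚ →ₗ[ℤ] QZ :=
    (QuotientAddGroup.mk' (AddSubgroup.zmultiples (1:ℚ))).toIntLinearMap
  obtain ⟨ψ0, hψ⟩ := Module.projective_lifting_property mkT (g.toIntLinearMap ∘ₗ s)
    (QuotientAddGroup.mk'_surjective _)
  refine ⟨(ψ0 ∘ₗ (Submodule.torsion ℤ F).mkQ).toAddMonoidHom, fun x => ?_⟩
  have h1 : ((ψ0 ((Submodule.torsion ℤ F).mkQ x) : ℚ) : QZ) = g (s ((Submodule.torsion ℤ F).mkQ x)) :=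
    LinearMap.congr_fun hψ _
  have h2 : x - s ((Submodule.torsion ℤ F).mkQ x) ∈ Submodule.torsion ℤ F := by
    rw [← Submodule.Quotient.mk_eq_zero, Submodule.Quotient.mk_sub, sub_eq_zero]
    exact (LinearMap.congr_fun hs ((Submodule.torsion ℤ F).mkQ x)).symm
  change e.natAbs • (g x - ((ψ0 ((Submodule.torsion ℤ F).mkQ x) : ℚ) : QZ)) = 0
  rw [h1, ← map_sub, ← map_nsmul]
  set t := x - s ((Submodule.torsion ℤ F).mkQ x)
  have h3 : e • t = 0 := by
    have := Submodule.mem_annihilator.mp he1 ⟨t, h2⟩ Submodule.mem_top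
    exact congrArg Subtype.val this
  have h4 : e.natAbs • t = 0 := by
    rcases Int.natAbs_eq e with h | h
    · rw [h] at h3; simpa using h3
    · rw [h] at h3; simpa using h3
  rw [h4, map_zero]

/-- Functional on `ι → ℤ[H]` given by a family of functions. -/
noncomputable def hatSum {ι H T : Type*} [Fintype ι] [AddCommGroup H] [AddCommGroup T]
    (g : ι → H → T) : (ι → AddMonoidAlgebra ℤ H) →+ T :=
  ∑ a, (hat (g a)).comp (Pi.evalAddMonoidHom _ a)

theorem hatSum_apply {ι H T : Type*} [Fintype ι] [AddCommGroup H] [AddCommGroup T]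
    (g : ι → H → T) (z : ι → AddMonoidAlgebra ℤ H) : hatSum g z = ∑ a, hat (g a) (z a) := by
  simp [hatSum]

theorem hatSum_single {ι H T : Type*} [Fintype ι] [DecidableEq ι] [AddCommGroup H] [AddCommGroup T]
    (g : ι → H → T) (a : ι) (z : AddMonoidAlgebra ℤ H) :
    hatSum g (Pi.single a z) = hat (g a) z := by
  rw [hatSum_apply, Finset.sum_eq_single a]
  · simp
  · intro b _ hb; simp [Pi.single_eq_of_ne hb]
  · simp

/-- Diagonal submodule. -/
noncomputable def diag (ι R : Type*) [CommRing R] : Submodule R (ι → R) :=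
  LinearMap.range (LinearMap.pi (fun _ => LinearMap.id) : R →ₗ[R] (ι → R))

theorem mem_diag {ι R : Type*} [CommRing R] (r : R) : (fun _ => r) ∈ diag ι R := ⟨r, rfl⟩

theorem hatSum_diag {ι H T : Type*} [Fintype ι] [AddCommGroup H] [AddCommGroup T]
    (g : ι → H → T) (hg : ∀ x, ∑ a, g a x = 0) (z) (hz : z ∈ diag ι (AddMonoidAlgebra ℤ H)) :
    hatSum g z = 0 := by
  obtain ⟨r, rfl⟩ := hz
  rw [hatSum_apply]
  change ∑ a, hat (g a) r = 0
  induction r using AddMonoidAlgebra.induction_linear with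
  | zero => simp
  | add f g hf hg => simp only [map_add, sum_add_distrib, hf, hg, add_zero]
  | single x m => simp only [hat_single]; rw [← smul_sum, hg, smul_zero]

theorem lemmaF {H ι : Type*} [AddCommGroup H] [AddMonoid.FG H] [Fintype ι]
    (L : ι → AddSubgroup H) (n : ℕ) : ∃ N : ℕ, N ≠ 0 ∧ ∀ g : ι → H → QZ,
      (∀ a, ∀ u ∈ L a, ∀ x, g a (x + u) = g a x) →
      (∀ a, ∀ z ∈ Idl (⊤ : AddSubgroup H) ^ n, hat (g a) z = 0) →
      (∀ x, ∑ a, g a x = 0) →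
      ∃ φ : ι → H → ℚ, (∀ a, ∀ u ∈ L a, ∀ x, φ a (x + N • u) = φ a x) ∧
        (∀ x, ∑ a, φ a x = 0) ∧ ∀ a x, ((φ a x : ℚ) : QZ) = g a x := by
  classical
  let R := AddMonoidAlgebra ℤ H
  let A : Ideal R := Idl ⊤ ^ n
  let P : Submodule R (ι → R) := Submodule.pi Set.univ (fun a => Idl (L a) ⊔ A)
  let K : Submodule R (ι → R) := P ⊔ diag ι R
  have hfin : Module.Finite ℤ ((ι → R) ⧸ K) := by
    have h1 : Module.Finite ℤ (R ⧸ A) := finite_quot n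
    let P' : Submodule R (ι → R) := Submodule.pi Set.univ (fun _ => A)
    have hP' : P' ≤ K := by
      refine le_trans ?_ (le_sup_left : P ≤ K)
      intro z hz a ha
      exact Submodule.mem_sup_right (hz a ha)
    have h2 : Module.Finite ℤ ((ι → R) ⧸ P') :=
      Module.Finite.equiv ((Submodule.quotientPi (fun _ : ι => A)).restrictScalars ℤ).symm
    exact Module.Finite.of_surjective ((Submodule.factor hP').restrictScalars ℤ)
      (Submodule.factor_surjective hP')
  obtain ⟨e, he, hsplit⟩ := split_character ((ι → R) ⧸ K)
  refine ⟨e ^ n, pow_ne_zero _ he, fun g hper hA hsum => ?_⟩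
  have hkill : ∀ z ∈ K, hatSum g z = 0 := by
    intro z hz
    obtain ⟨p, hp, r, hr, rfl⟩ := Submodule.mem_sup.mp hz
    rw [map_add, hatSum_diag g hsum r hr, add_zero, hatSum_apply]
    refine sum_eq_zero fun a _ => ?_
    obtain ⟨i, hi, j, hj, hij⟩ := Submodule.mem_sup.mp (hp a (Set.mem_univ a))
    rw [← hij, map_add, hA a j hj, kills_Idl (L a) (g a) (hper a) i hi, add_zero]
  let gb : ((ι → R) ⧸ K) →+ QZ := QuotientAddGroup.lift K.toAddSubgroup (hatSum g) (fun z hz => hkill z hz)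
  have hgb : ∀ z, gb (K.mkQ z) = hatSum g z := fun z => rfl
  obtain ⟨ψ, hψ⟩ := hsplit gb
  let b : ι → H → ((ι → R) ⧸ K) := fun a x => K.mkQ (Pi.single a (AddMonoidAlgebra.single x 1))
  have hgbb : ∀ a x, gb (b a x) = g a x := by
    intro a x
    rw [hgb, hatSum_single, hat_single, one_smul]
  have hmemP : ∀ a, ∀ z ∈ Idl (L a) ⊔ A, (Pi.single a z : ι → R) ∈ K := by
    intro a z hz
    refine Submodule.mem_sup_left fun b _ => ?_
    by_cases h : b = a
    · subst h; simpa using hz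
    · rw [Pi.single_eq_of_ne h]; exact zero_mem _
  have hbper : ∀ a, ∀ u ∈ L a, ∀ x, b a (x + u) = b a x := by
    intro a u hu x
    rw [← sub_eq_zero, ← map_sub, ← Pi.single_sub]
    exact (Submodule.Quotient.mk_eq_zero _).mpr
      (hmemP a _ (Submodule.mem_sup_left (sub_mem_Idl (L a) hu x)))
  have hbsum : ∀ x, ∑ a, b a x = 0 := by
    intro x
    rw [← map_sum]
    refine (Submodule.Quotient.mk_eq_zero _).mpr (Submodule.mem_sup_right ?_)
    rw [Finset.univ_sum_single (fun _ : ι => (AddMonoidAlgebra.single x 1 : R))]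
    exact mem_diag _
  have hdiff : ∀ a u x, ∃ y, b a (x + e ^ n • u) - b a x = e • y := by
    intro a u x
    obtain ⟨c, hc⟩ := pow_sub_one_mem (Idl (⊤ : AddSubgroup H)) (AddMonoidAlgebra.single u 1)
      (Ideal.subset_span ⟨u, AddSubgroup.mem_top _, rfl⟩) e n
    refine ⟨K.mkQ (Pi.single a (AddMonoidAlgebra.single x 1 * c)), ?_⟩
    rw [← map_nsmul, ← map_sub, ← sub_eq_zero, ← map_sub, ← Pi.single_smul, ← Pi.single_sub, ← Pi.single_sub]
    refine (Submodule.Quotient.mk_eq_zero _).mpr (hmemP a _ (Submodule.mem_sup_right ?_))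
    have := Ideal.mul_mem_left _ (AddMonoidAlgebra.single x 1 : R) hc
    convert this using 1
    rw [AddMonoidAlgebra.single_pow, one_pow, mul_sub, mul_sub, AddMonoidAlgebra.single_mul_single,
      mul_one, mul_one, nsmul_eq_mul]
    ring
  let τ : ι → H → QZ := fun a x => g a x - ((ψ (b a x) : ℚ) : QZ)
  obtain ⟨φ, h1, h2, h3⟩ := lift_zero_sum τ (e ^ n) (by
    intro a u x
    obtain ⟨y, hy⟩ := hdiff a u x
    have hxy : b a (x + e ^ n • u) = b a x + e • y := by rw [← hy]; abel
    simp only [τ]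
    rw [← hgbb, ← hgbb, hxy, map_add, map_add, AddCircle.coe_add, map_nsmul, map_nsmul]
    have h := hψ y
    rw [smul_sub] at h
    have h' : ((e • ψ y : ℚ) : QZ) = e • ((ψ y : ℚ) : QZ) := AddCircle.coe_nsmul _
    rw [h']
    rw [sub_eq_zero] at h
    rw [h]; abel) (by
    intro x
    simp only [τ]
    rw [sum_sub_distrib, hsum, zero_sub, neg_eq_zero]
    have : ((∑ a, ψ (b a x) : ℚ) : QZ) = ∑ a, ((ψ (b a x) : ℚ) : QZ) :=
      map_sum (QuotientAddGroup.mk' (AddSubgroup.zmultiples (1:ℚ))) _ _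
    rw [← this, ← map_sum, hbsum, map_zero]; rfl)
  refine ⟨fun a x => ψ (b a x) + φ a x, ?_, ?_, ?_⟩
  · intro a u hu x
    simp only
    rw [h1, hbper a _ (nsmul_mem hu _)]
  · intro x
    rw [sum_add_distrib, h2, ← map_sum, hbsum, map_zero, add_zero]
  · intro a x
    rw [AddCircle.coe_add, h3]
    simp [τ]

/-- A relation among `QZ`-valued functions which lifts to a relation of `ℚ`-valued functions,
periodic up to a finite multiple. -/
def Good {G ι : Type*} [AddCommGroup G] [Fintype ι] (Λ : ι → AddSubgroup G)
    (g : ι → G → QZ) : Prop :=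
  ∃ N : ℕ, N ≠ 0 ∧ ∃ φ : ι → G → ℚ, (∀ a, ∀ u ∈ Λ a, ∀ x, φ a (x + N • u) = φ a x) ∧
    (∀ x, ∑ a, φ a x = 0) ∧ ∀ a x, ((φ a x : ℚ) : QZ) = g a x

theorem Good.zero {G ι : Type*} [AddCommGroup G] [Fintype ι] (Λ : ι → AddSubgroup G) :
    Good Λ 0 := ⟨1, one_ne_zero, 0, by simp, by simp, by simp⟩

theorem Good.add {G ι : Type*} [AddCommGroup G] [Fintype ι] {Λ : ι → AddSubgroup G}
    {g h : ι → G → QZ} (hg : Good Λ g) (hh : Good Λ h) : Good Λ (g + h) := by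
  obtain ⟨N, hN, φ, h1, h2, h3⟩ := hg
  obtain ⟨M, hM, χ, k1, k2, k3⟩ := hh
  refine ⟨N * M, mul_ne_zero hN hM, φ + χ, ?_, ?_, ?_⟩
  · intro a u hu x
    simp only [Pi.add_apply]
    rw [mul_smul, h1 a _ (nsmul_mem hu M), ← mul_smul, mul_comm, mul_smul,
      k1 a _ (nsmul_mem hu N)]
  · intro x
    simp only [Pi.add_apply, sum_add_distrib, h2, k2, add_zero]
  · intro a x
    simp only [Pi.add_apply, AddCircle.coe_add, h3, k3]

theorem Good.sum {G ι κ : Type*} [AddCommGroup G] [Fintype ι] {Λ : ι → AddSubgroup G}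
    (s : Finset κ) (g : κ → ι → G → QZ) (hg : ∀ j ∈ s, Good Λ (g j)) : Good Λ (∑ j ∈ s, g j) := by
  classical
  induction s using Finset.induction_on with
  | empty => simpa using Good.zero Λ
  | insert j s hj ih =>
    rw [sum_insert hj]
    exact (hg j (mem_insert_self _ _)).add (ih fun i hi => hg i (mem_insert_of_mem hi))

theorem good_of_subgroup {G ι : Type*} [AddCommGroup G] [AddGroup.FG G] [Fintype ι]
    (Λ : ι → AddSubgroup G) (H : AddSubgroup G) (n : ℕ) (g : ι → G → QZ) (S : ι → Prop)
    (hS : ∀ a, S a → Λ a ≤ H) (hnS : ∀ a, ¬ S a → ∀ x, g a x = 0)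
    (hper : ∀ a, ∀ u ∈ Λ a, ∀ x, g a (x + u) = g a x)
    (hA : ∀ a, ∀ z ∈ Idl H ^ n, hat (g a) z = 0)
    (hsum : ∀ x, ∑ a, g a x = 0) : Good Λ g := by
  classical
  have hFG : AddMonoid.FG H := by
    have : Module.Finite ℤ G := Module.Finite.iff_addGroup_fg.mpr inferInstance
    have h2 : Module.Finite ℤ (AddSubgroup.toIntSubmodule H) := inferInstance
    have h3 : AddGroup.FG H := Module.Finite.iff_addGroup_fg.mp h2
    exact AddGroup.fg_iff_addMonoid_fg.mp h3
  obtain ⟨N, hN, hF⟩ := lemmaF (fun a : {a // S a} => (Λ a).addSubgroupOf H) n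
  have key : ∀ t : G, ∃ φ : {a // S a} → H → ℚ,
      (∀ a : {a // S a}, ∀ u ∈ (Λ a).addSubgroupOf H, ∀ x, φ a (x + N • u) = φ a x) ∧
        (∀ x, ∑ a, φ a x = 0) ∧ ∀ a x, ((φ a x : ℚ) : QZ) = g a (t + x) := by
    intro t
    refine hF (fun a x => g a (t + x)) ?_ ?_ ?_
    · intro a u hu x
      rw [AddSubgroup.coe_add, ← add_assoc]
      exact hper a u hu _
    · intro a z hz
      let f := AddMonoidAlgebra.mapDomainRingHom ℤ (H.subtype)
      have hf : ∀ x, f (AddMonoidAlgebra.single x 1) = AddMonoidAlgebra.single (x : G) 1 := by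
        intro x; simp [f]
      rw [← hat_unique (fun x : H => g a (t + x)) (((hat (g a)).comp
        (AddMonoidHom.mulLeft (AddMonoidAlgebra.single t 1))).comp f.toAddMonoidHom)]
      · refine hA a _ (Ideal.mul_mem_left _ _ ?_)
        have h1 : f z ∈ (Idl (⊤ : AddSubgroup H) ^ n).map f := Ideal.mem_map_of_mem f hz
        rw [Ideal.map_pow] at h1
        refine Ideal.pow_right_mono ?_ n h1
        unfold Idl
        rw [Ideal.map_span, Ideal.span_le]
        rintro _ ⟨_, ⟨u, -, rfl⟩, rfl⟩
        refine Ideal.subset_span ⟨u, u.2, ?_⟩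
        rw [map_sub, map_one, hf]
      · intro x
        change hat (g a) (AddMonoidAlgebra.single t 1 * f (AddMonoidAlgebra.single x 1)) = _
        rw [hf, AddMonoidAlgebra.single_mul_single, hat_single, mul_one, one_smul]
    · intro x
      have := Fintype.sum_subtype_add_sum_subtype S (fun a => g a (t + x))
      rw [hsum] at this
      rw [← this, eq_comm, add_eq_left]
      exact sum_eq_zero fun a _ => hnS a a.2 _
  choose Φ hΦ1 hΦ2 hΦ3 using key
  let rep : G → G := fun x => (QuotientAddGroup.mk x : G ⧸ H).out
  have hrep : ∀ x, x - rep x ∈ H := by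
    intro x
    have : (QuotientAddGroup.mk (rep x) : G ⧸ H) = QuotientAddGroup.mk x := Quotient.out_eq _
    rw [QuotientAddGroup.eq] at this
    rwa [sub_eq_neg_add]
  have hrepu : ∀ x, ∀ u ∈ H, rep (x + u) = rep x := by
    intro x u hu
    simp only [rep]
    congr 1
    rw [eq_comm, QuotientAddGroup.eq]
    simpa using hu
  refine ⟨N, hN, fun a x => if h : S a then Φ (rep x) ⟨a, h⟩ ⟨x - rep x, hrep x⟩ else 0,
    ?_, ?_, ?_⟩
  · intro a u hu x
    dsimp only
    split_ifs with h
    · have huH : u ∈ H := hS a h hu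
      rw [← hΦ1 (rep x) ⟨a, h⟩ ⟨u, huH⟩ hu ⟨x - rep x, hrep x⟩]
      have e1 := hrepu x (N • u) (nsmul_mem huH N)
      have : (⟨x + N • u - rep (x + N • u), hrep _⟩ : H) =
          ⟨x - rep x, hrep x⟩ + N • ⟨u, huH⟩ := by
        apply Subtype.ext
        simp only [AddSubgroup.coe_add, AddSubgroup.coe_nsmul]
        rw [e1]; abel
      rw [this, e1]
    · rfl
  · intro x
    rw [← Fintype.sum_subtype_add_sum_subtype S]
    rw [sum_congr rfl (fun (a : {a // S a}) _ => dif_pos a.2),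
      sum_congr rfl (fun (a : {a // ¬ S a}) _ => dif_neg a.2)]
    simp only [Subtype.coe_eta, sum_const_zero, add_zero]
    exact hΦ2 _ _
  · intro a x
    dsimp only
    split_ifs with h
    · rw [hΦ3]
      congr 1
      simp
    · rw [hnS a h]; rfl

theorem Idl_iSup_le {G : Type*} [AddCommGroup G] (p : Ideal (AddMonoidAlgebra ℤ G)) {ι : Type*}
    (Λ : ι → AddSubgroup G) (h : ∀ a, Idl (Λ a) ≤ p) : Idl (⨆ a, Λ a) ≤ p := by
  let U : AddSubgroup G :=
    { carrier := {u | AddMonoidAlgebra.single u (1 : ℤ) - 1 ∈ p}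
      zero_mem' := by
        change AddMonoidAlgebra.single (0 : G) (1 : ℤ) - 1 ∈ p
        rw [← AddMonoidAlgebra.one_def, sub_self]; exact zero_mem _
      add_mem' := by
        intro u v hu hv
        change AddMonoidAlgebra.single (u + v) (1 : ℤ) - 1 ∈ p
        have : AddMonoidAlgebra.single (u + v) (1 : ℤ) - 1 =
          AddMonoidAlgebra.single v 1 * (AddMonoidAlgebra.single u (1 : ℤ) - 1) +
            (AddMonoidAlgebra.single v (1 : ℤ) - 1) := by
          rw [mul_sub, AddMonoidAlgebra.single_mul_single, mul_one, mul_one, add_comm v u]; ring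
        rw [this]
        exact add_mem (Ideal.mul_mem_left _ _ hu) hv
      neg_mem' := by
        intro u hu
        change AddMonoidAlgebra.single (-u) (1 : ℤ) - 1 ∈ p
        have : AddMonoidAlgebra.single (-u) (1 : ℤ) - 1 =
          - AddMonoidAlgebra.single (-u) 1 * (AddMonoidAlgebra.single u (1 : ℤ) - 1) := by
          rw [mul_sub, neg_mul, AddMonoidAlgebra.single_mul_single, mul_one, mul_one,
            neg_add_cancel, ← AddMonoidAlgebra.one_def]; ring
        rw [this]
        exact Ideal.mul_mem_left _ _ hu }
  have hU : (⨆ a, Λ a) ≤ U := iSup_le fun a u hu => h a (Ideal.subset_span ⟨u, hu, rfl⟩)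
  unfold Idl
  rw [Ideal.span_le]
  rintro _ ⟨u, hu, rfl⟩
  exact hU hu

/-- The submodule of trivial relations. -/
noncomputable def Krel {G ι : Type*} [AddCommGroup G] (Λ : ι → AddSubgroup G) :
    Submodule (AddMonoidAlgebra ℤ G) (ι → AddMonoidAlgebra ℤ G) :=
  Submodule.pi Set.univ (fun a => Idl (Λ a)) ⊔ diag ι _

theorem single_mem_Krel {G ι : Type*} [DecidableEq ι] [AddCommGroup G] (Λ : ι → AddSubgroup G) (a : ι)
    (z) (hz : z ∈ Idl (Λ a)) : (Pi.single a z : ι → AddMonoidAlgebra ℤ G) ∈ Krel Λ := by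
  refine Submodule.mem_sup_left fun b _ => ?_
  by_cases h : b = a
  · subst h; simpa using hz
  · rw [Pi.single_eq_of_ne h]; exact zero_mem _

theorem noeth {G : Type*} [AddCommGroup G] [AddGroup.FG G] : IsNoetherianRing (AddMonoidAlgebra ℤ G) := by
  have : AddMonoid.FG G := AddGroup.fg_iff_addMonoid_fg.mp inferInstance
  have : Algebra.FiniteType ℤ (AddMonoidAlgebra ℤ G) := AddMonoidAlgebra.finiteType_of_fg _ _
  exact Algebra.FiniteType.isNoetherianRing ℤ _

theorem good_of_primary {G ι : Type*} [AddCommGroup G] [AddGroup.FG G] [Fintype ι] [DecidableEq ι]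
    (Λ : ι → AddSubgroup G) (Q : Submodule (AddMonoidAlgebra ℤ G) (ι → AddMonoidAlgebra ℤ G))
    (hKQ : Krel Λ ≤ Q) (hQ : Q.IsPrimary) (F : (ι → AddMonoidAlgebra ℤ G) →+ QZ)
    (hF : ∀ z ∈ Q, F z = 0) :
    Good Λ (fun a x => F (Pi.single a (AddMonoidAlgebra.single x 1))) := by
  classical
  have := noeth (G := G)
  set p := (Q.colon Set.univ).radical with hp
  obtain ⟨n, hn⟩ := Ideal.exists_radical_pow_le_of_fg (Q.colon Set.univ)
    (IsNoetherian.noetherian _)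
  let S : ι → Prop := fun a => Idl (Λ a) ≤ p
  let H : AddSubgroup G := ⨆ a : {a // S a}, Λ a
  have hH : Idl H ≤ p := Idl_iSup_le p _ fun a => a.2
  have hhat : ∀ a z, hat (fun x => F (Pi.single a (AddMonoidAlgebra.single x 1))) z =
      F (Pi.single a z) := by
    intro a z
    exact (hat_unique (fun x => F (Pi.single a (AddMonoidAlgebra.single x 1)))
      (F.comp (AddMonoidHom.single (fun _ : ι => AddMonoidAlgebra ℤ G) a)) (fun x => rfl) z).symm
  refine good_of_subgroup Λ H n _ S (fun a ha => le_iSup (fun a : {a // S a} => Λ a) ⟨a, ha⟩)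
    ?_ ?_ ?_ ?_
  · intro a ha x
    obtain ⟨r, hr, hrp⟩ := Set.not_subset.mp ha
    refine hF _ ((hQ.mem_or_mem (r := r) (hKQ ?_)).resolve_right hrp)
    rw [← Pi.single_smul]
    exact single_mem_Krel Λ a _ (Ideal.mul_mem_right _ _ hr)
  · intro a u hu x
    rw [← sub_eq_zero, ← map_sub, ← Pi.single_sub]
    exact hF _ (hKQ (single_mem_Krel Λ a _ (sub_mem_Idl _ hu _)))
  · intro a z hz
    rw [hhat]
    have h1 : z ∈ Q.colon Set.univ := hn (Ideal.pow_right_mono hH n hz)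
    have h2 := Submodule.mem_colon.mp h1 (Pi.single a 1) (Set.mem_univ _)
    refine hF _ ?_
    rwa [← Pi.single_smul, smul_eq_mul, mul_one] at h2
  · intro x
    rw [← map_sum]
    refine hF _ (hKQ (Submodule.mem_sup_right ?_))
    rw [Finset.univ_sum_single (fun _ : ι => (AddMonoidAlgebra.single x 1 : AddMonoidAlgebra ℤ G))]
    exact mem_diag _

/-- Characters killing an intersection split. -/
theorem split_inf {R E : Type*} [CommRing R] [AddCommGroup E] [Module R E]
    (s : Finset (Submodule R E)) (F : E →+ QZ) (hF : ∀ z ∈ s.inf id, F z = 0) :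
    ∃ Fs : Submodule R E → (E →+ QZ), (∀ Q ∈ s, ∀ z ∈ Q, Fs Q z = 0) ∧ F = ∑ Q ∈ s, Fs Q := by
  classical
  let K := s.inf id
  let m : E →ₗ[R] (∀ Q : s, E ⧸ Q.1) := LinearMap.pi fun Q => Q.1.mkQ
  have hker : LinearMap.ker m = K := by
    ext z
    simp only [LinearMap.mem_ker, K, Submodule.mem_finsetInf, m, funext_iff, LinearMap.pi_apply,
      Submodule.mkQ_apply, Pi.zero_apply, Submodule.Quotient.mk_eq_zero, Subtype.forall, id]
  let m' : (E ⧸ K) →ₗ[R] (∀ Q : s, E ⧸ Q.1) := K.liftQ m hker.ge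
  have hm' : Function.Injective m' := by
    rw [← LinearMap.ker_eq_bot, Submodule.ker_liftQ_eq_bot']
    exact hker.symm
  let Fb : CharacterModule (E ⧸ K) := QuotientAddGroup.lift K.toAddSubgroup F (fun z hz => hF z hz)
  obtain ⟨W, hW⟩ := CharacterModule.dual_surjective_of_injective m' hm' Fb
  have hW' : ∀ z, W (m z) = F z := fun z => DFunLike.congr_fun hW (K.mkQ z)
  let W' : (∀ Q : s, E ⧸ Q.1) →+ QZ := W
  refine ⟨fun Q => if h : Q ∈ s then
    (W'.comp (AddMonoidHom.single (fun Q : s => E ⧸ Q.1) ⟨Q, h⟩)).comp Q.mkQ.toAddMonoidHom else 0,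
    ?_, ?_⟩
  · intro Q hQ z hz
    simp only [dif_pos hQ]
    change W' (Pi.single ⟨Q, hQ⟩ (Q.mkQ z)) = 0
    have : Q.mkQ z = 0 := (Submodule.Quotient.mk_eq_zero _).mpr hz
    rw [this, Pi.single_zero, map_zero]
  · ext z
    rw [← hW', ← Finset.univ_sum_single (m z)]
    rw [AddMonoidHom.finsetSum_apply, ← Finset.sum_coe_sort s]
    change W' _ = _
    rw [map_sum]
    refine sum_congr rfl fun Q _ => ?_
    rw [dif_pos Q.2]
    rfl

theorem good_of_relation {G ι : Type*} [AddCommGroup G] [AddGroup.FG G] [Fintype ι]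
    (Λ : ι → AddSubgroup G) (g : ι → G → QZ)
    (hper : ∀ a, ∀ u ∈ Λ a, ∀ x, g a (x + u) = g a x)
    (hsum : ∀ x, ∑ a, g a x = 0) : Good Λ g := by
  classical
  have := noeth (G := G)
  have hkill : ∀ z ∈ Krel Λ, hatSum g z = 0 := by
    intro z hz
    obtain ⟨p, hp, r, hr, rfl⟩ := Submodule.mem_sup.mp hz
    rw [map_add, hatSum_diag g hsum r hr, add_zero, hatSum_apply]
    exact sum_eq_zero fun a _ => kills_Idl (Λ a) (g a) (hper a) _ (hp a (Set.mem_univ a))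
  obtain ⟨s, hs, hprim⟩ := Submodule.isLasker (AddMonoidAlgebra ℤ G) (ι → AddMonoidAlgebra ℤ G)
    (Krel Λ)
  obtain ⟨Fs, h1, h2⟩ := split_inf s (hatSum g) (by rw [hs]; exact hkill)
  have h3 : g = ∑ Q ∈ s, fun a x => Fs Q (Pi.single a (AddMonoidAlgebra.single x 1)) := by
    funext a x
    simp only [Finset.sum_apply]
    rw [← AddMonoidHom.finsetSum_apply, ← h2, hatSum_single, hat_single, one_smul]
  rw [h3]
  refine Good.sum s _ fun Q hQ => good_of_primary Λ Q ?_ (hprim hQ) (Fs Q) (h1 Q hQ)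
  rw [← hs]
  exact Finset.inf_le (f := id) hQ

theorem integral_decomposition {G ι : Type*} [AddCommGroup G] [AddGroup.FG G] [Fintype ι]
    (Λ : ι → AddSubgroup G) (f : ι → G → ℚ) (c : G → ℤ)
    (hper : ∀ a, ∀ u ∈ Λ a, ∀ x, f a (x + u) = f a x)
    (hsum : ∀ x, ∑ a, f a x = c x) : ∃ N : ℕ, N ≠ 0 ∧ ∃ cs : ι → G → ℤ,
      (∀ a, ∀ u ∈ Λ a, ∀ x, cs a (x + N • u) = cs a x) ∧ ∀ x, ∑ a, cs a x = c x := by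
  obtain ⟨N, hN, φ, h1, h2, h3⟩ := good_of_relation Λ (fun a x => ((f a x : ℚ) : QZ))
    (fun a u hu x => by rw [hper a u hu]) (fun x => by
      have : ((∑ a, f a x : ℚ) : QZ) = ∑ a, ((f a x : ℚ) : QZ) :=
        map_sum (QuotientAddGroup.mk' (AddSubgroup.zmultiples (1:ℚ))) _ _
      rw [← this, hsum, AddCircle.coe_eq_zero_iff]
      exact ⟨c x, by simp⟩)
  have h4 : ∀ a x, ∃ m : ℤ, (m : ℚ) = f a x - φ a x := by
    intro a x
    have : ((f a x - φ a x : ℚ) : QZ) = 0 := by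
      rw [AddCircle.coe_sub, h3, sub_self]
    rw [AddCircle.coe_eq_zero_iff] at this
    obtain ⟨m, hm⟩ := this
    exact ⟨m, by simpa using hm⟩
  choose cs hcs using h4
  refine ⟨N, hN, cs, ?_, ?_⟩
  · intro a u hu x
    have : (cs a (x + N • u) : ℚ) = cs a x := by
      rw [hcs, hcs, h1 a u hu, hper a _ (nsmul_mem hu N)]
    exact_mod_cast this
  · intro x
    have : ((∑ a, cs a x : ℤ) : ℚ) = c x := by
      rw [Int.cast_sum]
      simp only [hcs]
      rw [sum_sub_distrib, h2, hsum, sub_zero]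
    exact_mod_cast this
end CT

namespace CT
open PaperFormal

theorem intVecQ_smul_indep {d k : ℕ} (v : Fin k → (Fin d → ℤ)) (N : ℕ) (hN : N ≠ 0)
    (h : LinearIndependent ℚ fun i => intVecQ (v i)) :
    LinearIndependent ℚ fun i => intVecQ (N • v i) := by
  have hN' : (N : ℚ) ≠ 0 := by exact_mod_cast hN
  have := h.units_smul (fun _ => Units.mk0 (N : ℚ) hN')
  convert this using 1
  funext i
  funext j
  simp [intVecQ, Units.smul_def]

/-- Real valued `k`-periodicity. -/
def RPer {d : ℕ} (k : ℕ) (f : (Fin d → ℤ) → ℝ) : Prop :=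
  ∃ v : Fin k → (Fin d → ℤ), (LinearIndependent ℚ fun i => intVecQ (v i)) ∧
    ∀ i x, f (x + v i) = f x

theorem exists_indep {d k : ℕ} (hkd : k ≤ d) : ∃ v : Fin k → (Fin d → ℤ),
    LinearIndependent ℚ fun i => intVecQ (v i) := by
  refine ⟨fun i => Pi.single (Fin.castLE hkd i) 1, ?_⟩
  have h := (Pi.basisFun ℚ (Fin d)).linearIndependent.comp (Fin.castLE hkd)
    (Fin.castLE_injective hkd)
  convert h using 1
  funext i j
  by_cases hj : j = Fin.castLE hkd i
  · subst hj; simp [intVecQ]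
  · simp [intVecQ, Pi.single_eq_of_ne hj]

theorem exists_list_closure {A : Type*} [AddCommGroup A] (s : Set A) (x : A)
    (hx : x ∈ AddSubgroup.closure s) : ∃ l : List A, (∀ y ∈ l, y ∈ s ∨ -y ∈ s) ∧ l.sum = x := by
  induction hx using AddSubgroup.closure_induction with
  | mem x hx => exact ⟨[x], by simpa using Or.inl hx, by simp⟩
  | zero => exact ⟨[], by simp, by simp⟩
  | add x y _ _ hx hy =>
    obtain ⟨l, hl, rfl⟩ := hx
    obtain ⟨l', hl', rfl⟩ := hy
    refine ⟨l ++ l', fun y hy => ?_, by simp⟩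
    rcases List.mem_append.mp hy with h | h
    · exact hl y h
    · exact hl' y h
  | neg x _ hx =>
    obtain ⟨l, hl, rfl⟩ := hx
    refine ⟨l.map (fun y => -y), fun y hy => ?_, ?_⟩
    · obtain ⟨z, hz, rfl⟩ := List.mem_map.mp hy
      rw [neg_neg]
      exact (hl z hz).symm
    · rw [List.sum_neg]

theorem sum_of_mem_closure {d k : ℕ} (f : (Fin d → ℤ) → ℝ)
    (hf : f ∈ AddSubgroup.closure {g : (Fin d → ℤ) → ℝ | RPer k g}) :
    ∃ (m : ℕ) (fs : Fin m → ((Fin d → ℤ) → ℝ)), (∀ a, RPer k (fs a)) ∧ ∀ x, ∑ a, fs a x = f x := by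
  obtain ⟨l, hl, rfl⟩ := exists_list_closure _ _ hf
  refine ⟨l.length, fun a => l.get a, ?_, ?_⟩
  · intro a
    rcases hl _ (List.get_mem l a) with h | h
    · exact h
    · obtain ⟨v, hv, hp⟩ := h
      refine ⟨v, hv, fun i x => ?_⟩
      have := hp i x
      simpa using this
  · intro x
    have h : ∑ a : Fin l.length, l.get a = l.sum := by
      simpa using Fin.sum_univ_fun_getElem l id
    rw [← Finset.sum_apply, h]

theorem main {d k : ℕ} (hkd : k ≤ d)
    (D : Fin k → Finset (Fin d → ℤ)) (hD0 : ∀ i, (0 : Fin d → ℤ) ∈ D i)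
    (hind : ∀ v : Fin k → (Fin d → ℤ),
      (∀ i, v i ∈ D i ∧ v i ≠ 0) → LinearIndependent ℚ fun i => intVecQ (v i))
    (c : (Fin d → ℤ) → ℤ) (hc01 : ∀ u, c u = 0 ∨ c u = 1)
    (hcotiler : ∀ i, ∀ x : Fin d → ℤ, ∑ u ∈ D i, c (x + u) = 1) :
    ∃ (m : ℕ) (cs : Fin m → ((Fin d → ℤ) → ℤ)),
      (∀ i, KPeriodic k (cs i)) ∧ c = ∑ i, cs i := by
  let M : ℕ := ∑ i, (D i).card
  have hM : ∀ i, (D i).card ≤ M := fun i =>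
    Finset.single_le_sum (f := fun i => (D i).card) (fun _ _ => Nat.zero_le _) (Finset.mem_univ i)
  have htiled : Tiled D M.factorial (fun x => (c x : ℝ)) := by
    refine ⟨⟨1, fun x => by rcases hc01 x with h | h <;> simp [h]⟩, fun i n x => ?_⟩
    have := dilate_factorial (D i) c hc01 (hcotiler i) M (hM i) n x
    dsimp only
    exact_mod_cast this
  have hmem := real_decomposition D hD0 M.factorial (RPer k)
    (by
      obtain ⟨v, hv⟩ := exists_indep hkd
      exact ⟨v, hv, fun _ _ => rfl⟩)
    (by
      rintro f ⟨v, hv⟩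
      exact ⟨fun i => M.factorial • v i, intVecQ_smul_indep v _ (Nat.factorial_ne_zero M)
        (hind v fun i => ⟨(hv i).1, (hv i).2.1⟩), fun i => (hv i).2.2⟩) _ htiled
  obtain ⟨m, fs, hfs, hsum⟩ := sum_of_mem_closure _ hmem
  choose v hv hp using hfs
  obtain ⟨π, hπ⟩ := LinearMap.exists_leftInverse_of_injective
    (Algebra.linearMap ℚ ℝ) (LinearMap.ker_eq_bot.mpr (algebraMap ℚ ℝ).injective)
  have hπ' : ∀ n : ℤ, π (n : ℝ) = n := by
    intro n
    have := LinearMap.congr_fun hπ (n : ℚ)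
    simpa using this
  obtain ⟨N, hN, cs, h1, h2⟩ := integral_decomposition
    (fun a => AddSubgroup.closure (Set.range (v a))) (fun a x => π (fs a x)) c
    (by
      intro a u hu
      induction hu using AddSubgroup.closure_induction with
      | mem u hu => obtain ⟨i, rfl⟩ := hu; intro x; rw [hp]
      | zero => simp
      | add u w _ _ hu hw => intro x; rw [← add_assoc, hw, hu]
      | neg u _ hu => intro x; rw [← hu, neg_add_cancel_right])
    (by
      intro x
      rw [← map_sum, hsum, hπ'])
  refine ⟨m, cs, fun a => ⟨fun i => N • v a i, intVecQ_smul_indep _ N hN (hv a), fun i x => ?_⟩, ?_⟩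
  · exact h1 a _ (AddSubgroup.subset_closure ⟨i, rfl⟩) x
  · funext x
    rw [Finset.sum_apply, h2]
end CT

namespace PaperFormal

/-- A common co-tiler of `k` independent tiles `D₁, …, D_k ⊆ ℤ^d` (each
containing `0`) is a finite sum of `k`-periodic integer-valued functions. -/
theorem common_cotiler_of_independent_tiles_decomposes
    {d k : ℕ} (hk1 : 1 ≤ k) (hkd : k ≤ d)
    (D : Fin k → Finset (Fin d → ℤ)) (hD0 : ∀ i, (0 : Fin d → ℤ) ∈ D i)
    (hind : ∀ v : Fin k → (Fin d → ℤ),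
      (∀ i, v i ∈ D i ∧ v i ≠ 0) → LinearIndependent ℚ fun i => intVecQ (v i))
    (c : (Fin d → ℤ) → ℤ) (hc01 : ∀ u, c u = 0 ∨ c u = 1)
    (hcotiler : ∀ i, ∀ x : Fin d → ℤ, ∑ u ∈ D i, c (x + u) = 1) :
    ∃ (m : ℕ) (cs : Fin m → ((Fin d → ℤ) → ℤ)),
      (∀ i, KPeriodic k (cs i)) ∧ c = ∑ i, cs i := by
  exact CT.main hkd D hD0 hind c hc01 hcotiler

end PaperFormal
end

section
/- Let c : ℤ^d → ℤ be a sparse configuration and assume c is annihilated by a product φ_1 ⋯ φ_n of line polynomials φ_1, …, φ_n in pairwise non-parallel directions v_1, …, v_n. Then c = c_1 + … + c_n where, for each i, the function c_i : ℤ^d → ℤ is a finite sum of periodic v_i-fibers and φ_i c_i = 0. -/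
namespace PaperFormal

open Filter

/-- The function `x ↦ x ∧ v`; its fibers are the lines in direction `v`. -/
def prj {d : ℕ} (v x : Fin d → ℤ) : Fin d → Fin d → ℤ := fun i j => x i * v j - x j * v i

/-- The support meets only finitely many lines in direction `v`. -/
def FinLines {d : ℕ} (v : Fin d → ℤ) (c : (Fin d → ℤ) → ℤ) : Prop :=
  (prj v '' Function.support c).Finite

/-- Boundedness. -/
def Bdd {d : ℕ} (c : (Fin d → ℤ) → ℤ) : Prop := ∃ B : ℤ, ∀ u, |c u| ≤ B

/-- Limit of translates along a fixed ultrafilter. -/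
def IsLim {d : ℕ} (w : Fin d → ℤ) (f F : (Fin d → ℤ) → ℤ) : Prop :=
  ∀ u, ∀ᶠ t : ℕ in (hyperfilter ℕ : Filter ℕ), F u = f (u + (t : ℤ) • w)

variable {d : ℕ}

lemma exists_ne_zero {w : Fin d → ℤ} (hw : w ≠ 0) : ∃ h, w h ≠ 0 := by
  by_contra hh
  push Not at hh
  exact hw (funext hh)

lemma prj_add (v x y : Fin d → ℤ) : prj v (x + y) = prj v x + prj v y := by
  ext i j; simp [prj]; ring

lemma prj_smul (v x : Fin d → ℤ) (t : ℤ) : prj v (t • x) = t • prj v x := by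
  ext i j; simp [prj]; ring

lemma prj_sub (v x y : Fin d → ℤ) : prj v (x - y) = prj v x - prj v y := by
  ext i j; simp [prj]; ring

lemma prj_self (v : Fin d → ℤ) : prj v v = 0 := by
  ext i j; simp [prj]; ring

lemma prj_zero_apply {v x : Fin d → ℤ} (h : prj v x = 0) (i j : Fin d) :
    x i * v j = x j * v i := by
  have := congrFun (congrFun h i) j
  simp [prj] at this
  linarith

lemma prj_eq_zero_of_q {v w u : Fin d → ℤ} {q : ℚ}
    (h : intVecQ w = intVecQ u + q • intVecQ v) : prj v (w - u) = 0 := by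
  have h' : ∀ i, (w i : ℚ) = u i + q * v i := fun i => by
    have := congrFun h i
    simpa [intVecQ] using this
  ext i j
  have : (((w i - u i) * v j - (w j - u j) * v i : ℤ) : ℚ) = 0 := by
    push_cast
    rw [h' i, h' j]; ring
  simpa [prj] using (by exact_mod_cast this : (w i - u i) * v j - (w j - u j) * v i = 0)

lemma q_of_prj {v w u : Fin d → ℤ} (hv : v ≠ 0) (h : prj v w = prj v u) :
    ∃ q : ℚ, intVecQ w = intVecQ u + q • intVecQ v := by
  obtain ⟨k, hk⟩ := exists_ne_zero hv
  have h0 : prj v (w - u) = 0 := by rw [prj_sub, h, sub_self]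
  refine ⟨((w k - u k : ℤ) : ℚ) / v k, ?_⟩
  ext i
  have := prj_zero_apply h0 i k
  simp only [Pi.sub_apply] at this
  have hq : ((w i : ℚ) - u i) * v k = (w k - u k) * v i := by exact_mod_cast this
  have hk' : (v k : ℚ) ≠ 0 := by exact_mod_cast hk
  simp only [intVecQ, Pi.add_apply, Pi.smul_apply, smul_eq_mul]
  push_cast
  field_simp
  linarith

lemma nonpar_prj {v v' w : Fin d → ℤ} (hn : NonParallel v v') (hw : w ≠ 0)
    (h' : prj v' w = 0) : prj v w ≠ 0 := by
  intro h
  obtain ⟨k, hk⟩ := exists_ne_zero hw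
  unfold NonParallel at hn
  rw [LinearIndependent.pair_iff] at hn
  have hkq : (w k : ℚ) ≠ 0 := by exact_mod_cast hk
  have e1 : ∀ i, (w i : ℚ) * v k = w k * v i := fun i => by exact_mod_cast prj_zero_apply h i k
  have e2 : ∀ i, (w i : ℚ) * v' k = w k * v' i := fun i => by exact_mod_cast prj_zero_apply h' i k
  have h1 := hn ((v' k : ℚ) * w k) (-(v k : ℚ) * w k) (by
    ext i
    simp only [intVecQ, Pi.add_apply, Pi.smul_apply, smul_eq_mul, Pi.zero_apply]
    linear_combination (-(v' k : ℚ)) * e1 i + (v k : ℚ) * e2 i)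
  have hvk : (v k : ℚ) = 0 := by
    have := h1.2
    simpa [hkq] using this
  have h2 := hn 1 0 (by
    ext i
    have := e1 i
    rw [hvk, mul_zero, zero_eq_mul] at this
    simpa [intVecQ, hkq] using this)
  exact one_ne_zero h2.1

lemma FinLines.change {v w : Fin d → ℤ} {c : (Fin d → ℤ) → ℤ} (hw : w ≠ 0)
    (h : prj v w = 0) (hc : FinLines w c) : FinLines v c := by
  obtain ⟨k, hk⟩ := exists_ne_zero hw
  refine (hc.image (fun M i j => v k * M i j / w k)).subset ?_
  rintro _ ⟨x, hx, rfl⟩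
  refine ⟨prj w x, ⟨x, hx, rfl⟩, ?_⟩
  ext i j
  have e1 := prj_zero_apply h i k
  have e2 := prj_zero_apply h j k
  simp only [prj]
  apply Int.ediv_eq_of_eq_mul_right hk
  linear_combination x i * e2 - x j * e1

/-! ### cubes and sparse functions -/

lemma cube_finite (m : ℕ) (t : Fin d → ℤ) : (cube m t).Finite := by
  refine (Set.finite_Icc (fun i => t i - m) (fun i => t i + m)).subset ?_
  intro u hu
  constructor
  · intro i; have := abs_le.1 (hu i); simp only; linarith [this.1]
  · intro i; have := abs_le.1 (hu i); simp only; linarith [this.2]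

lemma Sparse.mono {f g : (Fin d → ℤ) → ℤ} (hf : Sparse f)
    (h : Function.support g ⊆ Function.support f) : Sparse g := by
  obtain ⟨a, ha, H⟩ := hf
  refine ⟨a, ha, fun m hm t => le_trans (Set.ncard_le_ncard ?_ ?_) (H m hm t)⟩
  · exact Set.inter_subset_inter_left _ h
  · exact (cube_finite m t).subset Set.inter_subset_right

lemma sparse_zero : Sparse (0 : (Fin d → ℤ) → ℤ) := ⟨1, one_pos, by simp⟩

lemma Sparse.add {f g : (Fin d → ℤ) → ℤ} (hf : Sparse f) (hg : Sparse g) : Sparse (f + g) := by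
  obtain ⟨a, ha, H⟩ := hf
  obtain ⟨b, hb, K⟩ := hg
  refine ⟨a + b, by omega, fun m hm t => ?_⟩
  have : Function.support (f + g) ∩ cube m t ⊆
      (Function.support f ∩ cube m t) ∪ (Function.support g ∩ cube m t) := by
    rw [← Set.union_inter_distrib_right]
    exact Set.inter_subset_inter_left _ (Function.support_add f g)
  calc _ ≤ _ := Set.ncard_le_ncard this
        (((cube_finite m t).subset Set.inter_subset_right).union
        ((cube_finite m t).subset Set.inter_subset_right))
    _ ≤ _ := Set.ncard_union_le _ _
    _ ≤ a * m + b * m := add_le_add (H m hm t) (K m hm t)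
    _ = _ := by ring

lemma Sparse.neg {f : (Fin d → ℤ) → ℤ} (hf : Sparse f) : Sparse (-f) :=
  hf.mono (by simp)

lemma Sparse.sub {f g : (Fin d → ℤ) → ℤ} (hf : Sparse f) (hg : Sparse g) : Sparse (f - g) := by
  rw [sub_eq_add_neg]; exact hf.add hg.neg

lemma sparse_sum {ι : Type*} (s : Finset ι) (f : ι → (Fin d → ℤ) → ℤ)
    (h : ∀ i ∈ s, Sparse (f i)) : Sparse (∑ i ∈ s, f i) := by
  classical
  induction s using Finset.induction_on with
  | empty => simpa using sparse_zero
  | insert a s ha ih =>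
    rw [Finset.sum_insert ha]
    exact (h a (by simp)).add (ih fun i hi => h i (by simp [hi]))

lemma Sparse.translate {f : (Fin d → ℤ) → ℤ} (hf : Sparse f) (v : Fin d → ℤ) :
    Sparse (fun x => f (x + v)) := by
  obtain ⟨a, ha, H⟩ := hf
  refine ⟨a, ha, fun m hm t => le_trans ?_ (H m hm (t + v))⟩
  refine Set.ncard_le_ncard_of_injOn (fun x => x + v) ?_ ?_ ?_
  · rintro x ⟨hx, hx'⟩
    refine ⟨hx, fun i => ?_⟩
    have := hx' i
    simpa using this
  · intro x _ y _ h; simpa using h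
  · exact (cube_finite m _).subset Set.inter_subset_right

/-! ### polyApply -/

lemma polyApply_eq {f : (Fin d → ℤ) → ℤ} (hf : IsPoly f) (c : (Fin d → ℤ) → ℤ) (u : Fin d → ℤ) :
    polyApply f c u = ∑ v ∈ hf.toFinset, f v * c (u - v) := by
  unfold polyApply
  apply finsum_eq_sum_of_support_subset
  intro v hv
  refine Finset.mem_coe.2 ((Set.Finite.mem_toFinset hf).2 ?_)
  exact left_ne_zero_of_mul hv

lemma polyApply_comm {f g : (Fin d → ℤ) → ℤ} (hf : IsPoly f) (hg : IsPoly g)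
    (c : (Fin d → ℤ) → ℤ) : polyApply f (polyApply g c) = polyApply g (polyApply f c) := by
  ext u
  simp only [polyApply_eq hf, polyApply_eq hg, Finset.mul_sum]
  rw [Finset.sum_comm]
  refine Finset.sum_congr rfl fun x _ => Finset.sum_congr rfl fun y _ => ?_
  rw [sub_right_comm]; ring

lemma polyApply_sub {f : (Fin d → ℤ) → ℤ} (hf : IsPoly f) (c c' : (Fin d → ℤ) → ℤ) :
    polyApply f (c - c') = polyApply f c - polyApply f c' := by
  ext u
  simp only [polyApply_eq hf, Pi.sub_apply, mul_sub, Finset.sum_sub_distrib]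

lemma polyApply_sum {f : (Fin d → ℤ) → ℤ} (hf : IsPoly f) {ι : Type*} (s : Finset ι)
    (c : ι → (Fin d → ℤ) → ℤ) :
    polyApply f (∑ i ∈ s, c i) = ∑ i ∈ s, polyApply f (c i) := by
  ext u
  simp only [polyApply_eq hf, Finset.sum_apply, Finset.mul_sum]
  rw [Finset.sum_comm]

lemma polyApply_zero {f : (Fin d → ℤ) → ℤ} (hf : IsPoly f) : polyApply f 0 = 0 := by
  ext u
  simp [polyApply_eq hf]

lemma polyApply_translate {f : (Fin d → ℤ) → ℤ} (hf : IsPoly f) (c : (Fin d → ℤ) → ℤ)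
    (w : Fin d → ℤ) : polyApply f (fun x => c (x + w)) = fun x => polyApply f c (x + w) := by
  ext u
  simp only [polyApply_eq hf]
  refine Finset.sum_congr rfl fun x _ => ?_
  congr 2; abel

lemma Sparse.polyApply {f c : (Fin d → ℤ) → ℤ} (hf : IsPoly f) (hc : Sparse c) :
    Sparse (polyApply f c) := by
  have : PaperFormal.polyApply f c = ∑ v ∈ hf.toFinset, fun u => f v * c (u - v) := by
    ext u
    simp [polyApply_eq hf]
  rw [this]
  refine sparse_sum _ _ fun v _ => ?_
  refine (hc.translate (-v)).mono ?_
  intro u hu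
  simp only [Function.mem_support] at hu ⊢
  rw [← sub_eq_add_neg]
  exact right_ne_zero_of_mul hu

lemma Bdd.polyApply {f c : (Fin d → ℤ) → ℤ} (hf : IsPoly f) (hc : Bdd c) :
    Bdd (polyApply f c) := by
  obtain ⟨B, hB⟩ := hc
  refine ⟨∑ v ∈ hf.toFinset, |f v| * B, fun u => ?_⟩
  rw [polyApply_eq hf]
  refine (Finset.abs_sum_le_sum_abs _ _).trans (Finset.sum_le_sum fun v _ => ?_)
  rw [abs_mul]
  exact mul_le_mul_of_nonneg_left (hB _) (abs_nonneg _)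

lemma Bdd.sub {c c' : (Fin d → ℤ) → ℤ} (h : Bdd c) (h' : Bdd c') : Bdd (c - c') := by
  obtain ⟨B, hB⟩ := h
  obtain ⟨B', hB'⟩ := h'
  exact ⟨B + B', fun u => (abs_sub _ _).trans (add_le_add (hB u) (hB' u))⟩

lemma bdd_sum {ι : Type*} (s : Finset ι) (c : ι → (Fin d → ℤ) → ℤ) (h : ∀ i, Bdd (c i)) :
    Bdd (∑ i ∈ s, c i) := by
  choose B hB using h
  refine ⟨∑ i ∈ s, B i, fun u => ?_⟩
  rw [Finset.sum_apply]
  exact (Finset.abs_sum_le_sum_abs _ _).trans (Finset.sum_le_sum fun i _ => hB i u)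

/-! ### limits -/

lemma isLim_exists (w : Fin d → ℤ) {f : (Fin d → ℤ) → ℤ} (hf : Bdd f) : ∃ F, IsLim w f F := by
  obtain ⟨B, hB⟩ := hf
  have : ∀ u, ∃ z : ℤ, ∀ᶠ t : ℕ in (hyperfilter ℕ : Filter ℕ), z = f (u + (t : ℤ) • w) := by
    intro u
    have h := (Ultrafilter.finite_biUnion_mem_iff (f := hyperfilter ℕ) (Set.finite_Icc (-B) B)
      (s := fun z => {t : ℕ | z = f (u + (t : ℤ) • w)})).1 (by
        refine Filter.mem_of_superset Filter.univ_mem fun t _ => ?_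
        exact Set.mem_biUnion (x := f (u + (t : ℤ) • w)) (abs_le.1 (hB _)) rfl)
    obtain ⟨z, -, hz⟩ := h
    exact ⟨z, hz⟩
  choose F hF using this
  exact ⟨F, hF⟩

lemma IsLim.unique {w : Fin d → ℤ} {f F F' : (Fin d → ℤ) → ℤ} (h : IsLim w f F)
    (h' : IsLim w f F') : F = F' := by
  ext u
  obtain ⟨t, ht, ht'⟩ := ((h u).and (h' u)).exists
  rw [ht, ht']

lemma IsLim.bdd {w : Fin d → ℤ} {f F : (Fin d → ℤ) → ℤ} (h : IsLim w f F) (hf : Bdd f) :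
    Bdd F := by
  obtain ⟨B, hB⟩ := hf
  refine ⟨B, fun u => ?_⟩
  obtain ⟨t, ht⟩ := (h u).exists
  rw [ht]; exact hB _

lemma IsLim.sparse {w : Fin d → ℤ} {f F : (Fin d → ℤ) → ℤ} (h : IsLim w f F) (hf : Sparse f) :
    Sparse F := by
  obtain ⟨a, ha, H⟩ := hf
  refine ⟨a, ha, fun m hm s => ?_⟩
  obtain ⟨t, ht⟩ := ((Filter.eventually_all_finite (cube_finite m s)).2 fun u _ => h u).exists
  refine le_trans ?_ (H m hm (s + (t : ℤ) • w))
  refine Set.ncard_le_ncard_of_injOn (fun x => x + (t : ℤ) • w) ?_ ?_ ?_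
  · rintro x ⟨hx, hx'⟩
    refine ⟨?_, fun i => ?_⟩
    · simp only [Function.mem_support] at hx ⊢
      rwa [← ht x hx']
    · have := hx' i
      simpa using this
  · intro x _ y _ h; simpa using h
  · exact (cube_finite m _).subset Set.inter_subset_right

lemma IsLim.polyApply {w : Fin d → ℤ} {f F φ : (Fin d → ℤ) → ℤ} (h : IsLim w f F)
    (hφ : IsPoly φ) : IsLim w (polyApply φ f) (polyApply φ F) := by
  intro u
  filter_upwards [(Filter.eventually_all_finset hφ.toFinset).2 fun v _ => h (u - v)] with t ht
  rw [polyApply_eq hφ, polyApply_eq hφ]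
  refine Finset.sum_congr rfl fun v hv => ?_
  rw [ht v hv, sub_add_eq_add_sub]

lemma IsLim.sum {w : Fin d → ℤ} {ι : Type*} (s : Finset ι) {f F : ι → (Fin d → ℤ) → ℤ}
    (h : ∀ i, IsLim w (f i) (F i)) : IsLim w (∑ i ∈ s, f i) (∑ i ∈ s, F i) := by
  intro u
  filter_upwards [(Filter.eventually_all_finset s).2 fun i _ => h i u] with t ht
  rw [Finset.sum_apply, Finset.sum_apply]
  exact Finset.sum_congr rfl ht

lemma periodic_nsmul {w : Fin d → ℤ} {f : (Fin d → ℤ) → ℤ} (h : Periodic f w) (t : ℕ)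
    (u : Fin d → ℤ) : f (u + (t : ℤ) • w) = f u := by
  induction t with
  | zero => simp
  | succ t ih =>
    rw [← ih, ← h (u + (t : ℤ) • w)]
    congr 1
    push_cast
    rw [add_smul, one_smul, add_assoc]

lemma isLim_periodic {w : Fin d → ℤ} {f : (Fin d → ℤ) → ℤ} (h : Periodic f w) : IsLim w f f :=
  fun u => Filter.Eventually.of_forall fun t => (periodic_nsmul h t u).symm

lemma isLim_zero {v w : Fin d → ℤ} {f : (Fin d → ℤ) → ℤ} (h : FinLines v f)
    (hw : prj v w ≠ 0) : IsLim w f 0 := by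
  intro u
  have hfin : {t : ℕ | f (u + (t : ℤ) • w) ≠ 0}.Finite := by
    refine Set.Finite.of_injOn (f := fun t : ℕ => prj v (u + (t : ℤ) • w)) ?_ ?_ h
    · intro t ht; exact ⟨_, ht, rfl⟩
    · intro t _ t' _ htt
      simp only [prj_add, prj_smul, add_right_inj] at htt
      have := smul_left_injective ℤ hw htt
      exact_mod_cast this
  have := hfin.compl_mem_hyperfilter
  filter_upwards [this] with t ht
  exact (not_not.1 ht).symm

end PaperFormal

namespace PaperFormal

variable {d : ℕ}

/-! ### one-dimensional recurrences -/

lemma rec_vanish {a : ℤ → ℤ} {J : Finset ℤ} (hJ : J.Nonempty) (ha : ∀ j ∈ J, a j ≠ 0)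
    {g : ℤ → ℤ} (hg : ∀ n, ∑ j ∈ J, a j * g (n - j) = 0)
    (h0 : ∀ n, 0 ≤ n → n < J.max' hJ - J.min' hJ → g n = 0) : g = 0 := by
  have up : ∀ k : ℕ, ∀ n, 0 ≤ n → n < J.max' hJ - J.min' hJ + k → g n = 0 := by
    intro k
    induction k with
    | zero => intro n hn hn'; exact h0 n hn (by simpa using hn')
    | succ k ih =>
      intro n hn hn'
      by_cases hlt : n < J.max' hJ - J.min' hJ + k
      · exact ih n hn hlt
      have hr := hg (n + J.min' hJ)
      rw [Finset.sum_eq_single_of_mem _ (J.min'_mem hJ)] at hr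
      · rw [add_sub_cancel_right] at hr
        exact (mul_eq_zero.1 hr).resolve_left (ha _ (J.min'_mem hJ))
      · intro j hj hne
        have h1 := J.min'_le j hj
        have h2 := J.le_max' j hj
        rw [ih _ (by push_cast at *; omega) (by push_cast at *; omega), mul_zero]
  have down : ∀ k : ℕ, ∀ n, -(k : ℤ) ≤ n → n < J.max' hJ - J.min' hJ → g n = 0 := by
    intro k
    induction k with
    | zero => intro n hn hn'; exact h0 n (by simpa using hn) hn'
    | succ k ih =>
      intro n hn hn'
      by_cases hlt : -(k : ℤ) ≤ n
      · exact ih n hlt hn'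
      have hr := hg (n + J.max' hJ)
      rw [Finset.sum_eq_single_of_mem _ (J.max'_mem hJ)] at hr
      · rw [add_sub_cancel_right] at hr
        exact (mul_eq_zero.1 hr).resolve_left (ha _ (J.max'_mem hJ))
      · intro j hj hne
        have h1 := J.min'_le j hj
        have h2 := J.le_max' j hj
        rw [ih _ (by push_cast at *; omega) (by push_cast at *; omega), mul_zero]
  ext n
  have hle : J.min' hJ ≤ J.max' hJ := J.min'_le _ (J.max'_mem hJ)
  by_cases hn : 0 ≤ n
  · exact up (n + 1).toNat n hn (by omega)
  · exact down (-n).toNat n (by omega) (by omega)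

lemma rec_periodic {a : ℤ → ℤ} {J : Finset ℤ} (hJ : J.Nonempty) (ha : ∀ j ∈ J, a j ≠ 0) (B : ℤ) :
    ∃ P : ℕ, 0 < P ∧ ∀ f : ℤ → ℤ, (∀ n, |f n| ≤ B) →
      (∀ n, ∑ j ∈ J, a j * f (n - j) = 0) → ∀ n, f (n + P) = f n := by
  let F : Set (ℤ → ℤ) := {f | (∀ n, |f n| ≤ B) ∧ ∀ n, ∑ j ∈ J, a j * f (n - j) = 0}
  have hF : F.Finite := by
    have hfin : (Set.pi Set.univ
        (fun _ : Fin (J.max' hJ - J.min' hJ).toNat => Set.Icc (-B) B)).Finite :=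
      Set.Finite.pi' (fun _ => Set.finite_Icc _ _) |>.subset (fun x hx i => hx i trivial)
    refine Set.Finite.of_injOn
      (f := fun (f : ℤ → ℤ) (i : Fin (J.max' hJ - J.min' hJ).toNat) => f (i : ℕ)) ?_ ?_ hfin
    · intro f hf i _
      exact abs_le.1 (hf.1 _)
    · intro f hf g hg hfg
      have : f - g = 0 := by
        apply rec_vanish hJ ha
        · intro n
          simp only [Pi.sub_apply, mul_sub, Finset.sum_sub_distrib, hf.2, hg.2, sub_self]
        · intro n hn hn'
          have := congrFun hfg ⟨n.toNat, by omega⟩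
          simp only [Int.toNat_of_nonneg hn] at this
          simp [this]
      exact sub_eq_zero.1 this
  have hshift : ∀ (k : ℤ), ∀ f ∈ F, (fun n => f (n + k)) ∈ F := by
    intro k f hf
    refine ⟨fun n => hf.1 _, fun n => ?_⟩
    rw [← hf.2 (n + k)]
    refine Finset.sum_congr rfl fun j _ => ?_
    simp only [sub_add_eq_add_sub]
  let σ : Equiv.Perm F :=
    { toFun := fun f => ⟨fun n => f.1 (n + 1), hshift 1 f.1 f.2⟩
      invFun := fun f => ⟨fun n => f.1 (n + -1), hshift (-1) f.1 f.2⟩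
      left_inv := fun f => by ext n; simp
      right_inv := fun f => by ext n; simp }
  have hpow : ∀ k : ℕ, ∀ f : F, ∀ n, ((σ ^ k) f).1 n = f.1 (n + k) := by
    intro k
    induction k with
    | zero => intro f n; simp
    | succ k ih =>
      intro f n
      rw [pow_succ, Equiv.Perm.mul_apply, ih]
      change f.1 (n + k + 1) = _
      push_cast
      rw [add_assoc]
  have : Finite F := hF
  refine ⟨orderOf σ, orderOf_pos σ, fun f hf hf' n => ?_⟩
  have := hpow (orderOf σ) ⟨f, hf, hf'⟩ n
  rw [pow_orderOf_eq_one] at this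
  exact this.symm

lemma primitive_exists {v : Fin d → ℤ} (hv : v ≠ 0) :
    ∃ v0 : Fin d → ℤ, v0 ≠ 0 ∧ prj v v0 = 0 ∧ ∀ x, prj v x = 0 → ∃ m : ℤ, x = m • v0 := by
  classical
  obtain ⟨k, hk⟩ := exists_ne_zero hv
  have hex : ∃ N : ℕ, ∃ x : Fin d → ℤ, prj v x = 0 ∧ 0 < x k ∧ x k = N := by
    rcases lt_or_gt_of_ne hk with h | h
    · refine ⟨(-v k).toNat, -v, ?_, by simpa using h, ?_⟩
      · rw [← neg_one_smul ℤ v, prj_smul, prj_self, smul_zero]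
      · simp only [Pi.neg_apply]; omega
    · exact ⟨(v k).toNat, v, prj_self v, h, by omega⟩
  obtain ⟨v0, h1, h2, h3⟩ := Nat.find_spec hex
  have hmin : ∀ y, prj v y = 0 → 0 < y k → v0 k ≤ y k := by
    intro y hy hy'
    have := Nat.find_min' hex ⟨y, hy, hy', (Int.toNat_of_nonneg hy'.le).symm⟩
    omega
  refine ⟨v0, fun h => by simp [h] at h2, h1, fun x hx => ⟨x k / v0 k, ?_⟩⟩
  have hy : prj v (x - (x k / v0 k) • v0) = 0 := by
    rw [prj_sub, prj_smul, hx, h1]; simp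
  have hyk : (x - (x k / v0 k) • v0) k = x k % v0 k := by
    simp only [Pi.sub_apply, Pi.smul_apply, smul_eq_mul]
    rw [Int.emod_def]; ring
  have h0 : (x - (x k / v0 k) • v0) k = 0 := by
    have ha := Int.emod_nonneg (x k) h2.ne'
    have hb := Int.emod_lt_of_pos (x k) h2
    by_contra hne
    have := hmin _ hy (by omega)
    omega
  have : x - (x k / v0 k) • v0 = 0 := by
    ext i
    have := prj_zero_apply hy i k
    rw [h0, zero_mul] at this
    exact (mul_eq_zero.1 this).resolve_right hk
  exact sub_eq_zero.1 this

/-- A bounded function annihilated by a line polynomial is periodic. -/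
lemma line_periodic {φ c : (Fin d → ℤ) → ℤ} {v : Fin d → ℤ} (hφ : IsLinePoly φ v) (hc : Bdd c)
    (h : polyApply φ c = 0) : ∃ w, w ≠ 0 ∧ prj v w = 0 ∧ Periodic c w := by
  obtain ⟨hp, hv, hcard, u, hu⟩ := hφ
  obtain ⟨v0, hv0, hpv0, hprim⟩ := primitive_exists hv
  obtain ⟨B, hB⟩ := hc
  have hinj : Function.Injective (fun j : ℤ => u + j • v0) := by
    intro j j' hj
    exact smul_left_injective ℤ hv0 (add_left_cancel hj)
  have hfin : ((fun j : ℤ => u + j • v0) ⁻¹' Function.support φ).Finite :=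
    Set.Finite.preimage hinj.injOn hp
  have hsurj : ∀ x ∈ Function.support φ, ∃ j : ℤ, x = u + j • v0 := by
    intro x hx
    obtain ⟨q, hq⟩ := hu x hx
    obtain ⟨m, hm⟩ := hprim _ (prj_eq_zero_of_q hq)
    exact ⟨m, by rw [← hm]; abel⟩
  have hne : (Function.support φ).Nonempty := by
    rw [← Set.ncard_pos hp]; omega
  have hJ : hfin.toFinset.Nonempty := by
    obtain ⟨x, hx⟩ := hne
    obtain ⟨j, rfl⟩ := hsurj x hx
    exact ⟨j, by simpa using hx⟩
  obtain ⟨P, hP, hper⟩ := rec_periodic (a := fun j => φ (u + j • v0)) hJ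
    (fun j hj => by simpa using hj) B
  refine ⟨(P : ℤ) • v0, ?_, ?_, ?_⟩
  · exact smul_ne_zero (by exact_mod_cast hP.ne') hv0
  · rw [prj_smul, hpv0, smul_zero]
  · intro x
    have := hper (fun n => c (x + n • v0)) (fun n => hB _) (fun n => ?_) 0
    · simpa using this
    · have hx := congrFun h (x + n • v0 + u)
      rw [polyApply_eq hp, Pi.zero_apply] at hx
      rw [← hx]
      refine Finset.sum_nbij (fun j => u + j • v0) ?_ ?_ ?_ ?_
      · intro j hj
        exact (Set.Finite.mem_toFinset hp).2 (by simpa using hj)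
      · exact hinj.injOn
      · intro y hy
        have hy' : y ∈ Function.support φ := (Set.Finite.mem_toFinset hp).1 hy
        obtain ⟨j, rfl⟩ := hsurj y hy'
        exact ⟨j, by simpa using hy', rfl⟩
      · intro j _
        congr 2
        rw [sub_smul]; abel

/-- A sparse periodic function lives on finitely many lines. -/
lemma sparse_periodic_finLines {c : (Fin d → ℤ) → ℤ} {w : Fin d → ℤ} (hw : w ≠ 0)
    (hc : Sparse c) (hper : Periodic c w) : FinLines w c := by
  classical
  obtain ⟨a, ha, H⟩ := hc
  obtain ⟨k, hk⟩ := exists_ne_zero hw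
  by_contra hinf
  have hinf : (prj w '' Function.support c).Infinite := hinf
  set V : ℕ := ∑ i, (w i).natAbs with hV
  obtain ⟨Y, hY, hYc⟩ := hinf.exists_subset_card_eq (a * V + 1)
  have hrep : ∀ y : Y, ∃ x, c x ≠ 0 ∧ prj w x = y.1 := fun y => by
    obtain ⟨x, hx, hxy⟩ := hY y.2
    exact ⟨x, hx, hxy⟩
  choose x hx hxy using hrep
  set M : ℕ := ∑ y, ∑ i, (x y i).natAbs with hM
  have hxM : ∀ y i, (x y i).natAbs ≤ M := fun y i =>
    (Finset.single_le_sum (f := fun i => (x y i).natAbs) (fun _ _ => Nat.zero_le _)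
      (Finset.mem_univ i)).trans
    (Finset.single_le_sum (f := fun y => ∑ i, (x y i).natAbs) (fun _ _ => Nat.zero_le _)
      (Finset.mem_univ y))
  have hwV : ∀ i, (w i).natAbs ≤ V := fun i =>
    Finset.single_le_sum (f := fun i => (w i).natAbs) (fun _ _ => Nat.zero_le _)
      (Finset.mem_univ i)
  set r : ℕ := a * M + 1 with hr
  have hVpos : 0 < V := lt_of_lt_of_le (Int.natAbs_pos.2 hk) (hwV k)
  have hcount := H (M + r * V) (by positivity) 0
  have hle : (Finset.univ ×ˢ Finset.range r : Finset (Y × ℕ)).card ≤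
      (Function.support c ∩ cube (M + r * V) 0).ncard := by
    rw [← Set.ncard_coe_finset]
    refine Set.ncard_le_ncard_of_injOn (fun p => x p.1 + (p.2 : ℤ) • w) ?_ ?_
      ((cube_finite _ _).subset Set.inter_subset_right)
    · rintro ⟨y, t⟩ hyt
      simp only [Finset.coe_product, Finset.coe_univ, Finset.coe_range, Set.mem_prod,
        Set.mem_univ, Set.mem_Iio, true_and] at hyt
      refine ⟨?_, fun i => ?_⟩
      · simp only [Function.mem_support]
        rw [periodic_nsmul hper]; exact hx y
      · have h1 : |x y i| ≤ (M : ℤ) := by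
          rw [Int.abs_eq_natAbs]; exact_mod_cast hxM y i
        have h2 : |w i| ≤ (V : ℤ) := by
          rw [Int.abs_eq_natAbs]; exact_mod_cast hwV i
        simp only [Pi.add_apply, Pi.smul_apply, smul_eq_mul, Pi.zero_apply, sub_zero]
        push_cast
        refine (abs_add_le _ _).trans (add_le_add h1 ?_)
        rw [abs_mul, Nat.abs_cast]
        exact mul_le_mul (by exact_mod_cast hyt.le) h2 (abs_nonneg _) (by positivity)
    · rintro ⟨y, t⟩ _ ⟨y', t'⟩ _ heq
      simp only at heq
      have hp := congrArg (prj w) heq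
      rw [prj_add, prj_add, prj_smul, prj_smul, prj_self, smul_zero, smul_zero, add_zero,
        add_zero, hxy, hxy] at hp
      have hyy : y = y' := Subtype.ext hp
      subst hyy
      have := smul_left_injective ℤ hw (add_left_cancel heq)
      have htt : t = t' := by exact_mod_cast this
      rw [htt]
  have hcard : (Finset.univ ×ˢ Finset.range r : Finset (Y × ℕ)).card = (a * V + 1) * r := by
    rw [Finset.card_product, Finset.card_univ, Fintype.card_coe, hYc, Finset.card_range]
  rw [hcard] at hle
  have := hle.trans hcount
  nlinarith

/-- The case of one line polynomial. -/
lemma one_case {φ c : (Fin d → ℤ) → ℤ} {v : Fin d → ℤ} (hφ : IsLinePoly φ v) (hc : Bdd c)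
    (hs : Sparse c) (h : polyApply φ c = 0) :
    ∃ w, w ≠ 0 ∧ prj v w = 0 ∧ Periodic c w ∧ FinLines v c := by
  obtain ⟨w, hw, hvw, hper⟩ := line_periodic hφ hc h
  exact ⟨w, hw, hvw, hper, (sparse_periodic_finLines hw hs hper).change hw hvw⟩

lemma main_aux (n : ℕ) : ∀ (c : (Fin d → ℤ) → ℤ), Bdd c → Sparse c →
    ∀ (φ : Fin n → ((Fin d → ℤ) → ℤ)) (v : Fin n → (Fin d → ℤ)),
    (∀ i, IsLinePoly (φ i) (v i)) → (∀ i j, i ≠ j → NonParallel (v i) (v j)) →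
    (List.ofFn φ).foldr polyApply c = 0 →
    ∃ cs : Fin n → ((Fin d → ℤ) → ℤ), c = ∑ i, cs i ∧
      ∀ i, (∃ w, w ≠ 0 ∧ prj (v i) w = 0 ∧ Periodic (cs i) w ∧ FinLines (v i) (cs i)) ∧
        polyApply (φ i) (cs i) = 0 := by
  induction n with
  | zero =>
    intro c _ _ φ v _ _ h
    exact ⟨fun _ => 0, by simpa using h, fun i => i.elim0⟩
  | succ n ih =>
    intro c hb hs φ v hline hnp hann
    rw [List.ofFn_succ', List.concat_eq_append, List.foldr_append] at hann
    simp only [List.foldr_cons, List.foldr_nil] at hann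
    have hpl : ∀ i, IsPoly (φ i) := fun i => (hline i).1
    set ψ := φ (Fin.last n) with hψ
    have hψp : IsPoly ψ := hpl _
    obtain ⟨cs', hsum, hcs'⟩ := ih (polyApply ψ c) (hb.polyApply hψp) (hs.polyApply hψp)
      (fun i => φ i.castSucc) (fun i => v i.castSucc) (fun i => hline _)
      (fun i j hij => hnp _ _ (fun h => hij (Fin.castSucc_injective n h))) hann
    have key : ∀ i : Fin n, ∃ F, Bdd F ∧ Sparse F ∧ polyApply ψ F = cs' i ∧
        (∃ w, w ≠ 0 ∧ prj (v i.castSucc) w = 0 ∧ Periodic F w ∧ FinLines (v i.castSucc) F) ∧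
        polyApply (φ i.castSucc) F = 0 := by
      intro i
      obtain ⟨⟨w, hw, hvw, hper, hfl⟩, hz⟩ := hcs' i
      have hlast : prj (v (Fin.last n)) w ≠ 0 :=
        nonpar_prj (hnp _ _ (Fin.castSucc_lt_last i).ne') hw hvw
      obtain ⟨F1, h1⟩ := isLim_exists w hb
      have hb1 := h1.bdd hb
      have hs1 := h1.sparse hs
      have e1 : polyApply ψ F1 = cs' i := by
        have hl := h1.polyApply hψp
        rw [hsum] at hl
        have hl' : IsLim w (∑ j, cs' j) (∑ j, if j = i then cs' i else 0) := by
          apply IsLim.sum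
          intro j
          split_ifs with hji
          · subst hji; exact isLim_periodic hper
          · obtain ⟨⟨_, _, _, _, hflj⟩, _⟩ := hcs' j
            exact isLim_zero hflj (nonpar_prj (hnp _ _
              (fun h => hji (Fin.castSucc_injective n h))) hw hvw)
        rw [hl.unique hl']
        simp
      obtain ⟨F2, h2⟩ := isLim_exists w hb1
      have hb2 := h2.bdd hb1
      have hs2 := h2.sparse hs1
      have e2 : polyApply ψ F2 = cs' i := by
        have hl := h2.polyApply hψp
        rw [e1] at hl
        exact hl.unique (isLim_periodic hper)
      have hp2 : Periodic F2 w := by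
        have hbt : Bdd (fun x => F1 (x + w)) := by
          obtain ⟨B, hB⟩ := hb1
          exact ⟨B, fun u => hB _⟩
        have hg : polyApply ψ ((fun x => F1 (x + w)) - F1) = 0 := by
          rw [polyApply_sub hψp, polyApply_translate hψp, e1]
          ext x
          simp [hper x]
        obtain ⟨_, _, _, _, hgl⟩ := one_case (hline (Fin.last n)) (hbt.sub hb1)
          ((hs1.translate w).sub hs1) hg
        have hl0 := isLim_zero hgl hlast
        have hl : IsLim w ((fun x => F1 (x + w)) - F1) ((fun x => F2 (x + w)) - F2) := by
          intro u
          filter_upwards [h2 u, h2 (u + w)] with t ht ht'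
          simp only [Pi.sub_apply]
          rw [ht, ht', add_right_comm]
        have := hl.unique hl0
        intro u
        have := congrFun this u
        simpa [sub_eq_zero] using this
      refine ⟨F2, hb2, hs2, e2, ⟨w, hw, hvw, hp2,
        (sparse_periodic_finLines hw hs2 hp2).change hw hvw⟩, ?_⟩
      have hpi := hpl i.castSucc
      have h0 : polyApply ψ (polyApply (φ i.castSucc) F2) = 0 := by
        rw [polyApply_comm hψp hpi, e2]; exact hz
      obtain ⟨_, _, _, _, hgl⟩ := one_case (hline (Fin.last n)) (hb2.polyApply hpi)
        (hs2.polyApply hpi) h0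
      have hp3 : Periodic (polyApply (φ i.castSucc) F2) w := by
        have := polyApply_translate hpi F2 w
        rw [show (fun x => F2 (x + w)) = F2 from funext hp2] at this
        intro u
        exact (congrFun this u).symm
      exact (isLim_periodic hp3).unique (isLim_zero hgl hlast)
    choose F hFb hFs hFψ hFw hFz using key
    have hlast0 : polyApply ψ (c - ∑ i, F i) = 0 := by
      rw [polyApply_sub hψp, polyApply_sum hψp, hsum]
      simp [hFψ]
    refine ⟨Fin.snoc (α := fun _ => (Fin d → ℤ) → ℤ) F (c - ∑ i, F i), ?_, ?_⟩
    · rw [Fin.sum_univ_castSucc]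
      simp
    · intro i
      refine Fin.lastCases ?_ (fun i => ?_) i
      · simp only [Fin.snoc_last]
        exact ⟨one_case (hline (Fin.last n)) (hb.sub (bdd_sum _ _ hFb))
          (hs.sub (sparse_sum _ _ fun i _ => hFs i)) hlast0, hlast0⟩
      · simp only [Fin.snoc_castSucc]
        exact ⟨hFw i, hFz i⟩

lemma to_fibers {v w : Fin d → ℤ} {c : (Fin d → ℤ) → ℤ} (hv : v ≠ 0) (hw : w ≠ 0)
    (hvw : prj v w = 0) (hper : Periodic c w) (hfl : FinLines v c) :
    FinSumPeriodicFibers v c := by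
  classical
  let Y := Set.Finite.toFinset hfl
  let e : (Fin d → Fin d → ℤ) → (Fin d → ℤ) → ℤ := fun y x => if prj v x = y then c x else 0
  refine ⟨Y.card, fun j => e (Y.equivFin.symm j).1, ?_, fun j => ⟨?_, w, hw, ?_⟩⟩
  · rw [Equiv.sum_comp Y.equivFin.symm (fun y : Y => e y.1), Finset.sum_coe_sort Y e]
    ext x
    rw [Finset.sum_apply]
    simp only [e]
    rw [Finset.sum_ite_eq]
    split_ifs with h
    · rfl
    · by_contra hne
      exact h ((Set.Finite.mem_toFinset hfl).2 ⟨x, hne, rfl⟩)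
  · obtain ⟨x0, -, hx0⟩ := (Set.Finite.mem_toFinset hfl).1 (Y.equivFin.symm j).2
    refine ⟨x0, fun x hx => q_of_prj hv ?_⟩
    rw [hx0]
    by_contra hne
    exact hx (if_neg hne)
  · intro u
    simp only [e]
    rw [prj_add, hvw, add_zero, hper u]

end PaperFormal
namespace PaperFormal

/-- A sparse configuration annihilated by a product `φ₁ ⋯ φ_n` of line
polynomials in pairwise non-parallel directions `v₁, …, v_n` is a sum `c₁ + … + c_n` where
each `c_i` is a finite sum of periodic `v_i`-fibers and `φ_i c_i = 0`. -/
theorem sparse_decomposition_into_periodic_fibers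
    {d n : ℕ} (c : (Fin d → ℤ) → ℤ) (hconf : (Set.range c).Finite) (hsparse : Sparse c)
    (φ : Fin n → ((Fin d → ℤ) → ℤ)) (v : Fin n → (Fin d → ℤ))
    (hline : ∀ i, IsLinePoly (φ i) (v i))
    (hnp : ∀ i j, i ≠ j → NonParallel (v i) (v j))
    (hann : (List.ofFn φ).foldr polyApply c = 0) :
    ∃ cs : Fin n → ((Fin d → ℤ) → ℤ), c = ∑ i, cs i ∧
      ∀ i, FinSumPeriodicFibers (v i) (cs i) ∧ polyApply (φ i) (cs i) = 0 := by
  have hb : Bdd c := by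
    obtain ⟨B, hB⟩ := (hconf.image (fun z : ℤ => |z|)).bddAbove
    exact ⟨B, fun u => hB ⟨c u, ⟨u, rfl⟩, rfl⟩⟩
  obtain ⟨cs, hsum, hcs⟩ := main_aux n c hb hsparse φ v hline hnp hann
  refine ⟨cs, hsum, fun i => ⟨?_, (hcs i).2⟩⟩
  obtain ⟨⟨w, hw, hvw, hper, hfl⟩, -⟩ := hcs i
  exact to_fibers (hline i).2.1 hw hvw hper hfl

end PaperFormal
end

section
/- Let c : ℤ^d → ℤ be a sparse configuration that is periodic in direction v for some nonzero v ∈ ℤ^d. Then c is a finite sum of periodic v-fibers. -/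
namespace PaperFormal

/-- A sparse configuration that is periodic in direction `v` (for some
nonzero `v ∈ ℤ^d`) is a finite sum of periodic `v`-fibers. -/
theorem sparse_periodic_is_finite_sum_of_fibers
    {d : ℕ} (c : (Fin d → ℤ) → ℤ) (hconf : (Set.range c).Finite) (hsparse : Sparse c)
    (v : Fin d → ℤ) (hv : v ≠ 0)
    (hper : ∃ k : ℤ, k ≠ 0 ∧ Periodic c (k • v)) :
    FinSumPeriodicFibers v c := by
  classical
  obtain ⟨k, hk, hp⟩ := hper
  set w : Fin d → ℤ := k • v with hw
  have hw0 : w ≠ 0 := smul_ne_zero hk hv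
  have hz : ∀ (j : ℤ) u, c (u + j • w) = c u := by
    intro j
    induction j using Int.induction_on with
    | zero => simp
    | succ i ih => intro u; rw [add_smul, one_smul, ← add_assoc, hp, ih]
    | pred i ih =>
      intro u
      rw [← hp (u + _), add_assoc, sub_smul, one_smul, sub_add_cancel, ih]
  let H := AddSubgroup.zmultiples w
  let π : (Fin d → ℤ) → (Fin d → ℤ) ⧸ H := fun u => (u : (Fin d → ℤ) ⧸ H)
  have hπ : ∀ x y, π x = π y ↔ ∃ j : ℤ, y = x + j • w := by
    intro x y
    refine QuotientAddGroup.eq.trans ?_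
    refine AddSubgroup.mem_zmultiples_iff.trans ?_
    refine exists_congr fun j => ?_
    rw [eq_neg_add_iff_add_eq, eq_comm]
  have hT : (π '' Function.support c).Finite := by
    obtain ⟨a, ha, hsp⟩ := hsparse
    by_contra hinf
    obtain ⟨L, hL⟩ : ∃ L : ℕ, ∀ i, |w i| ≤ L :=
      ⟨∑ i, (w i).natAbs, fun i => by
        rw [Int.abs_eq_natAbs]
        exact_mod_cast Finset.single_le_sum (f := fun i => (w i).natAbs)
          (fun _ _ => Nat.zero_le _) (Finset.mem_univ i)⟩
    obtain ⟨G, hG, hcard⟩ := (show (π '' Function.support c).Infinite from hinf).exists_subset_card_eq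
      (a * L + 1)
    have hr : ∀ q : (Fin d → ℤ) ⧸ H, ∃ x, q ∈ G → x ∈ Function.support c ∧ π x = q := by
      intro q
      by_cases hq : q ∈ G
      · obtain ⟨x, hx, hxq⟩ := hG hq
        exact ⟨x, fun _ => ⟨hx, hxq⟩⟩
      · exact ⟨0, fun h => absurd h hq⟩
    choose x hx using hr
    obtain ⟨M, hM⟩ : ∃ M : ℕ, ∀ q ∈ G, ∀ i, |x q i| ≤ M :=
      ⟨∑ q ∈ G, ∑ i, (x q i).natAbs, fun q hq i => by
        rw [Int.abs_eq_natAbs]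
        have h1 := Finset.single_le_sum (f := fun i => (x q i).natAbs)
          (fun _ _ => Nat.zero_le _) (Finset.mem_univ i)
        have h2 := Finset.single_le_sum (f := fun q => ∑ i, (x q i).natAbs)
          (fun _ _ => Nat.zero_le _) hq
        exact_mod_cast h1.trans h2⟩
    let n := a * M + 1
    let P : Finset (Fin d → ℤ) :=
      (G ×ˢ Finset.Icc 1 n).image fun p => x p.1 + (p.2 : ℤ) • w
    have hPc : P.card = (a * L + 1) * n := by
      rw [Finset.card_image_of_injOn, Finset.card_product, hcard, Nat.card_Icc]
      · simp
      · rintro ⟨q, j⟩ h ⟨q', j'⟩ h' heq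
        simp only [Finset.coe_product, Set.mem_prod, Finset.mem_coe] at h h'
        simp only at heq
        have e1 : π (x q) = π (x q + (j : ℤ) • w) := (hπ _ _).2 ⟨j, rfl⟩
        have e2 : π (x q') = π (x q' + (j' : ℤ) • w) := (hπ _ _).2 ⟨j', rfl⟩
        have e3 : q = q' := by
          rw [← (hx q h.1).2, ← (hx q' h'.1).2, e1, e2, heq]
        subst e3
        have e4 := smul_left_injective ℤ hw0 (add_left_cancel heq)
        simp at e4
        simp [e4]
    have hfin : ∀ m : ℕ, (cube (d := d) m 0).Finite := by
      intro m
      refine (Set.finite_Icc (fun _ : Fin d => -(m : ℤ)) (fun _ => (m : ℤ))).subset ?_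
      intro u hu
      exact ⟨fun i => by have := abs_le.1 (hu i); simp at this; exact this.1,
        fun i => by have := abs_le.1 (hu i); simp at this; exact this.2⟩
    have hle := hsp (M + n * L + 1) (by omega) 0
    have hsub : (P : Set (Fin d → ℤ)) ⊆ Function.support c ∩ cube (M + n * L) 0 := by
      intro u hu
      simp only [P, Finset.coe_image, Set.mem_image, Finset.mem_coe, Finset.mem_product,
        Finset.mem_Icc] at hu
      obtain ⟨⟨q, j⟩, ⟨hq, hj1, hj2⟩, rfl⟩ := hu
      simp only at hq hj1 hj2 ⊢
      refine ⟨?_, ?_⟩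
      · rw [Function.mem_support, hz]; exact (hx q hq).1
      · intro i
        have h1 := hM q hq i
        have h2 := hL i
        have h3 : |(j : ℤ) * w i| ≤ n * L := by
          rw [abs_mul, Nat.abs_cast]
          have : (j : ℤ) ≤ n := by exact_mod_cast hj2
          gcongr
        simp only [Pi.add_apply, Pi.smul_apply, smul_eq_mul, Pi.zero_apply, sub_zero]
        push_cast
        exact (abs_add_le _ _).trans (add_le_add h1 h3)
    have hpos : 0 < M + n * L := by
      rcases Nat.eq_zero_or_pos L with h | h
      · exfalso
        apply hw0
        funext i
        have := hL i
        rw [h] at this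
        simpa using this
      · have : 0 < n * L := Nat.mul_pos (Nat.succ_pos _) h
        omega
    have hle := hsp (M + n * L) hpos 0
    have h5 := Set.ncard_le_ncard hsub ((hfin _).inter_of_right _)
    rw [Set.ncard_coe_finset, hPc] at h5
    have h6 := h5.trans hle
    have h7 : n = a * M + 1 := rfl
    nlinarith
  let T := hT.toFinset
  let φ := T.equivFin.symm
  refine ⟨T.card, fun j u => if π u = (φ j : _ ⧸ H) then c u else 0, ?_, ?_⟩
  · funext u
    rw [Finset.sum_apply]
    rw [Equiv.sum_comp φ (fun q : T => if π u = (q : _ ⧸ H) then c u else 0)]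
    rw [Finset.sum_coe_sort T (fun q => if π u = q then c u else 0), Finset.sum_ite_eq]
    split_ifs with h
    · rfl
    · by_contra hc
      exact h (hT.mem_toFinset.2 ⟨u, hc, rfl⟩)
  · intro j
    refine ⟨?_, w, hw0, ?_⟩
    · obtain ⟨x, -, hx⟩ := hT.mem_toFinset.1 (φ j).2
      refine ⟨x, fun u hu => ?_⟩
      have hu' : π u = (φ j : _ ⧸ H) := by
        by_contra h
        exact hu (if_neg h)
      obtain ⟨n, rfl⟩ := (hπ x u).1 (hx.trans hu'.symm)
      refine ⟨(n * k : ℤ), ?_⟩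
      funext i
      simp [intVecQ, hw, mul_assoc]
    · intro u
      have : π (u + w) = π u := ((hπ u (u + w)).2 ⟨1, by simp⟩).symm
      simp only [this, hp u]

end PaperFormal
end
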